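/- Let K be an imaginary quadratic field with discriminant Δ_K. Let a, q be nonzero ideals of O_K and α ∈ O_K with a + q = O_K and αO_K + q = O_K. Let ϑ : I_K → ℝ satisfy ∑_{N(b) ≤ t} |(ϑ*μ_K)(b)|·N(b) ≤ c_ϑ·t·(log(t+2))^C for all t > 0. Then for all t ≥ 0 and ε > 0: ∑_{ρ mod q coprime to q} ∑_{z ∈ a, z ≠ 0, z ≡ αρ² mod q, |z|² ≤ t·N(a)} ϑ(z·a^{-1}) = (2π/√|Δ_K|)·φ*_K(q)·A(ϑ,q)·t + O_{C,ε}(c_ϑ·(t^{1/3} N(q)^{1/3+ε} + 2^{ω_K(q)} N(q)^{1/2} (log(t+2))^{C+1})), where A(ϑ,q) = ∑_{a' coprime to q} (ϑ*μ_K)(a')/N(a') and φ*_K(q) = φ_K(q)/N(q). -/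

import Mathlib

/-!
Möbius inversion `ϑ = (ϑ * μ) * 1` writes the weight `ϑ(z a⁻¹)` as the sum of `(ϑ * μ)(b)` over the
ideals `b` with `z ∈ a b`. As `z` is a unit modulo `q`, only `b` coprime to `q` occur, and `|z|² ≤ t N(a)`
forces `N(b) ≤ t` (`CircleProblem.lhs_eq`). At each level `b` the pairs `(ρ, z)` are counted by the
circle problem `CircleProblem.exists_circle` for the ideal `a b` with parameter `T = t / N(b) ≥ 1`. The
hypothesis on `ϑ * μ` and a dyadic decomposition (`CircleProblem.exists_dyadic`) show that the error
terms `(t / N(b))^{1/3}` add up to `O(t^{1/3})`, and that completing the main term to the full series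
over `b` costs `O(log(t+2)^C)`.

The circle problem itself rests on Poisson summation. The indicator function of the disc of radius `R`
is smoothed at scale `δ`. Its Fourier transform is `O(√R ‖ξ‖^{-3/2})`, by slicing the disc into a
semicircle and comparing the semicircle with its translates by half a period
(`norm_fourier_disc_le`), and smoothing gains a factor `(δ ‖ξ‖)⁻¹` at high frequencies. After Poisson
summation over `a q`, the frequency `ξ` carries a character of the ring `O_K / q`; summed over `ρ` it is
a quadratic Gauss sum, bounded by Weyl differencing in terms of the largest ideal `J ∣ q` on which the
character is trivial (`norm_gauss_le`). The vector `ξ` is then dual to `a J`, so nonzero frequencies of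
this kind have norm at least of order `N(a J)^{-1/2}` and are separated at this scale, and their
contribution is compared with an integral (`exists_sum_maj_le`). Summing over the divisors `J` of `q`
and choosing `δ` so that the smoothing error `R δ` balances the frequency sum gives the error
`T^{1/3} N(q)^{1/3 + ε}`. For `T² < N(q)` the trivial bound suffices, because a residue class has few
square roots modulo `q`.
-/

open NumberField
open scoped nonZeroDivisors Classical

/-- Number of distinct prime ideal divisors of an ideal of `𝓞 K`. -/
noncomputable def omegaI {K : Type*} [Field K] [NumberField K] (I : Ideal (𝓞 K)) : ℕ :=
  (UniqueFactorizationMonoid.factors I).toFinset.card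

/-- The Möbius function on the nonzero ideals of `𝓞 K`. -/
noncomputable def muI {K : Type*} [Field K] [NumberField K] (I : Ideal (𝓞 K)) : ℤ :=
  if Squarefree I then (-1) ^ omegaI I else 0

/-- Dirichlet convolution `ϑ * μ_K` on ideals of `𝓞 K`. -/
noncomputable def convMu {K : Type*} [Field K] [NumberField K]
    (ϑ : Ideal (𝓞 K) → ℝ) (I : Ideal (𝓞 K)) : ℝ :=
  ∑ᶠ p : Ideal (𝓞 K) × Ideal (𝓞 K), if p.1 * p.2 = I then ϑ p.1 * (muI p.2 : ℝ) else 0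

set_option synthInstance.maxHeartbeats 800000
set_option maxHeartbeats 800000

/-! ### Fourier decay of the disc -/

section
namespace CircleProblem

section DiscFourier

open MeasureTheory Real Complex Set
open scoped FourierTransform

lemma sqrt_add_sqrt_le {a b c : ℝ} (ha : 0 ≤ a) (hb : 0 ≤ b) (h : a + b ≤ 2 * c) :
    √a + √b ≤ 2 * √c := by
  have hc : 0 ≤ c := by linarith
  have h1 := Real.sq_sqrt ha
  have h2 := Real.sq_sqrt hb
  have h3 := Real.sq_sqrt hc
  nlinarith [sq_nonneg (√a - √b), Real.sqrt_nonneg a, Real.sqrt_nonneg b, Real.sqrt_nonneg c]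

/-- The semicircle has height `O(√(hR))` within `2h` of its endpoints and beyond them, where it
vanishes because the square root of a negative number is `0`. -/
lemma semicircle_le {R h y : ℝ} (hR : 0 ≤ R) (hh : 0 < h) (hy : R - 2 * h ≤ |y|) :
    √(R ^ 2 - y ^ 2) ≤ 2 * √(h * R) := by
  have : (2 : ℝ) * √(h * R) = √(4 * (h * R)) := by
    rw [Real.sqrt_mul (by norm_num) (h * R)]
    congr 1
    rw [show (4 : ℝ) = 2 ^ 2 by norm_num, Real.sqrt_sq (by norm_num)]
  rw [this]
  apply Real.sqrt_le_sqrt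
  rw [← sq_abs y]
  have := abs_nonneg y
  rcases le_or_gt 0 (R - 2 * h) with h1 | h1
  · nlinarith [mul_self_le_mul_self h1 hy]
  · nlinarith

/-- The second difference of the semicircle is nonpositive away from the two endpoints `±R`, and
near the endpoints it is of size `√(hR)`. -/
lemma abs_semicircle_second_diff_le {R h : ℝ} (hR : 0 ≤ R) (hh : 0 < h) (x : ℝ) :
    |√(R ^ 2 - (x + h) ^ 2) - 2 * √(R ^ 2 - x ^ 2) + √(R ^ 2 - (x - h) ^ 2)| ≤
      -(√(R ^ 2 - (x + h) ^ 2) - 2 * √(R ^ 2 - x ^ 2) + √(R ^ 2 - (x - h) ^ 2)) +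
        16 * √(h * R) * ((Icc (-R - h) (-R + h)).indicator 1 x + (Icc (R - h) (R + h)).indicator 1 x)
    := by
  have i1 : 0 ≤ (Icc (-R - h) (-R + h)).indicator (1 : ℝ → ℝ) x :=
    indicator_nonneg (fun _ _ => by simp) _
  have i2 : 0 ≤ (Icc (R - h) (R + h)).indicator (1 : ℝ → ℝ) x :=
    indicator_nonneg (fun _ _ => by simp) _
  have hs := Real.sqrt_nonneg (h * R)
  have f1 := Real.sqrt_nonneg (R ^ 2 - (x + h) ^ 2)
  have f2 := Real.sqrt_nonneg (R ^ 2 - x ^ 2)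
  have f3 := Real.sqrt_nonneg (R ^ 2 - (x - h) ^ 2)
  rcases le_or_gt |x| (R - h) with h1 | h1
  · obtain ⟨hl, hr⟩ := abs_le.mp h1
    have : √(R ^ 2 - (x + h) ^ 2) + √(R ^ 2 - (x - h) ^ 2) ≤ 2 * √(R ^ 2 - x ^ 2) := by
      apply sqrt_add_sqrt_le <;> nlinarith
    rw [abs_of_nonpos (by linarith)]
    have := mul_nonneg (mul_nonneg (by norm_num : (0 : ℝ) ≤ 16) hs) (add_nonneg i1 i2)
    linarith
  · rcases le_or_gt |x| (R + h) with h2 | h2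
    · have hi : 1 ≤ (Icc (-R - h) (-R + h)).indicator (1 : ℝ → ℝ) x +
          (Icc (R - h) (R + h)).indicator (1 : ℝ → ℝ) x := by
        rcases le_total 0 x with hx | hx
        · rw [abs_of_nonneg hx] at h1 h2
          rw [indicator_of_mem (show x ∈ Icc (R - h) (R + h) from ⟨h1.le, h2⟩)]
          simpa using i1
        · rw [abs_of_nonpos hx] at h1 h2
          rw [indicator_of_mem (show x ∈ Icc (-R - h) (-R + h) from ⟨by linarith, by linarith⟩)]
          simpa using i2
      have b1 : √(R ^ 2 - (x + h) ^ 2) ≤ 2 * √(h * R) := by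
        apply semicircle_le hR hh
        have := abs_sub_abs_le_abs_sub x (-h)
        rw [abs_neg, abs_of_pos hh] at this
        rw [sub_neg_eq_add] at this
        linarith
      have b2 : √(R ^ 2 - x ^ 2) ≤ 2 * √(h * R) := semicircle_le hR hh (by linarith)
      have b3 : √(R ^ 2 - (x - h) ^ 2) ≤ 2 * √(h * R) := by
        apply semicircle_le hR hh
        have := abs_sub_abs_le_abs_sub x h
        rw [abs_of_pos hh] at this
        linarith
      have := mul_le_mul_of_nonneg_left hi (mul_nonneg (by norm_num : (0 : ℝ) ≤ 16) hs)
      rw [abs_le]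
      constructor <;> linarith
    · have z : ∀ y, R < |y| → √(R ^ 2 - y ^ 2) = 0 := fun y hy =>
        Real.sqrt_eq_zero_of_nonpos (by
          rw [← sq_abs y]; nlinarith [abs_nonneg y])
      have z1 : √(R ^ 2 - (x + h) ^ 2) = 0 := z _ (by
        have := abs_sub_abs_le_abs_sub x (-h)
        rw [abs_neg, abs_of_pos hh, sub_neg_eq_add] at this
        linarith)
      have z2 : √(R ^ 2 - x ^ 2) = 0 := z _ (by linarith)
      have z3 : √(R ^ 2 - (x - h) ^ 2) = 0 := z _ (by
        have := abs_sub_abs_le_abs_sub x h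
        rw [abs_of_pos hh] at this
        linarith)
      rw [z1, z2, z3]
      have := mul_nonneg (mul_nonneg (by norm_num : (0 : ℝ) ≤ 16) hs) (add_nonneg i1 i2)
      simpa using this

lemma continuous_semicircle (R : ℝ) : Continuous fun x : ℝ => √(R ^ 2 - x ^ 2) := by fun_prop

lemma integrable_semicircle (R : ℝ) : Integrable fun x : ℝ => √(R ^ 2 - x ^ 2) := by
  apply (continuous_semicircle R).integrable_of_hasCompactSupport
  apply HasCompactSupport.intro (isCompact_Icc (a := -|R|) (b := |R|))
  intro x hx
  apply Real.sqrt_eq_zero_of_nonpos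
  by_contra! hc
  exact hx (abs_le.mp (sq_le_sq.mp (by linarith)))

/-- Fourier decay of the semicircle: translating by half a period `h` changes the sign of the
character, so that `4|f̂| ≤ ‖Δ²f‖₁`. -/
lemma norm_fourier_semicircle_le {R h : ℝ} (hR : 0 ≤ R) (hh : 0 < h) :
    ‖∫ x : ℝ, cexp (((-(π * x / h) : ℝ) : ℂ) * I) * (√(R ^ 2 - x ^ 2) : ℝ)‖ ≤
      16 * h * √(h * R) := by
  set f : ℝ → ℝ := fun x => √(R ^ 2 - x ^ 2) with hf
  set e : ℝ → ℂ := fun x => cexp (((-(π * x / h) : ℝ) : ℂ) * I) with he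
  have hec : Continuous e := by fun_prop
  have hen : ∀ x, ‖e x‖ = 1 := fun x => Complex.norm_exp_ofReal_mul_I _
  have hfi : Integrable f := integrable_semicircle R
  have hep : ∀ x, e (x + h) = -e x := by
    intro x
    simp only [he]
    rw [show ((-(π * (x + h) / h) : ℝ) : ℂ) * I = ((-(π * x / h) : ℝ) : ℂ) * I - π * I by
      have : (h : ℂ) ≠ 0 := by exact_mod_cast hh.ne'
      push_cast; field_simp; ring]
    rw [Complex.exp_sub, Complex.exp_pi_mul_I, div_neg, div_one]
  have hpair : ∀ c : ℝ, Integrable fun x => e x * ((f (x + c) : ℝ) : ℂ) := by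
    intro c
    refine ((hfi.comp_add_right c).ofReal (𝕜 := ℂ)).bdd_mul (c := 1) hec.aestronglyMeasurable ?_
    exact Filter.Eventually.of_forall fun x => (hen x).le
  have h0 : Integrable fun x => e x * ((f x : ℝ) : ℂ) := by simpa using hpair 0
  have hp : ∫ x, e x * ((f (x + h) : ℝ) : ℂ) = -∫ x, e x * ((f x : ℝ) : ℂ) := by
    rw [← integral_add_right_eq_self (fun x => e x * ((f x : ℝ) : ℂ)) h, ← integral_neg]
    congr 1; ext x; rw [hep]; ring
  have hm : ∫ x, e x * ((f (x + -h) : ℝ) : ℂ) = -∫ x, e x * ((f x : ℝ) : ℂ) := by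
    rw [← integral_add_right_eq_self (fun x => e x * ((f (x + -h) : ℝ) : ℂ)) h, ← integral_neg]
    congr 1; ext x; rw [hep]; simp
  set g : ℝ → ℝ := fun x => f (x + h) - 2 * f x + f (x - h) with hg
  have hgi : Integrable g :=
    ((hfi.comp_add_right h).sub (hfi.const_mul 2)).add (by simpa using hfi.comp_sub_right h)
  have hg0 : ∫ x, g x = 0 := by
    simp only [hg]
    rw [integral_add (by exact (hfi.comp_add_right h).sub (hfi.const_mul 2)) (hfi.comp_sub_right h),
      integral_sub (hfi.comp_add_right h) (hfi.const_mul 2), integral_const_mul,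
      integral_add_right_eq_self f h, integral_sub_right_eq_self f h]
    ring
  have key : ∫ x, e x * ((g x : ℝ) : ℂ) = -4 * ∫ x, e x * ((f x : ℝ) : ℂ) := by
    have : ∀ x, e x * ((g x : ℝ) : ℂ) = e x * ((f (x + h) : ℝ) : ℂ) - 2 * (e x * ((f x : ℝ) : ℂ))
        + e x * ((f (x + -h) : ℝ) : ℂ) := by
      intro x; simp only [hg, sub_eq_add_neg]; push_cast; ring
    simp_rw [this]
    have hA : Integrable fun x => e x * ((f (x + h) : ℝ) : ℂ) - 2 * (e x * ((f x : ℝ) : ℂ)) :=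
      (hpair h).sub (h0.const_mul 2)
    rw [integral_add hA (hpair (-h)), integral_sub (hpair h) (h0.const_mul 2), integral_const_mul, hp, hm]
    ring
  have ind : ∀ a b : ℝ, Integrable ((Icc a b).indicator (1 : ℝ → ℝ)) := fun a b =>
    (integrable_indicator_iff measurableSet_Icc).mpr
      (integrableOn_const (C := (1 : ℝ)) (by simp) (by simp))
  have bound : ∫ x, |g x| ≤ 64 * h * √(h * R) := by
    calc ∫ x, |g x| ≤ ∫ x, (-g x + 16 * √(h * R) * ((Icc (-R - h) (-R + h)).indicator 1 x +
          (Icc (R - h) (R + h)).indicator 1 x)) := by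
          apply integral_mono hgi.abs
          · exact hgi.neg.add (((ind _ _).add (ind _ _)).const_mul _)
          · intro x; exact abs_semicircle_second_diff_le hR hh x
      _ = 64 * h * √(h * R) := by
          have hB : Integrable fun x => (Icc (-R - h) (-R + h)).indicator (1 : ℝ → ℝ) x +
            (Icc (R - h) (R + h)).indicator (1 : ℝ → ℝ) x := (ind _ _).add (ind _ _)
          have hC : Integrable fun x => -g x := hgi.neg
          rw [integral_add hC (hB.const_mul _), integral_neg, hg0,
            integral_const_mul, integral_add (ind _ _) (ind _ _),
            integral_indicator_one measurableSet_Icc, integral_indicator_one measurableSet_Icc]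
          simp only [Measure.real, Real.volume_Icc]
          rw [ENNReal.toReal_ofReal (by linarith), ENNReal.toReal_ofReal (by linarith)]
          ring
  have : 4 * ‖∫ x, e x * ((f x : ℝ) : ℂ)‖ ≤ 64 * h * √(h * R) := by
    calc 4 * ‖∫ x, e x * ((f x : ℝ) : ℂ)‖ = ‖∫ x, e x * ((g x : ℝ) : ℂ)‖ := by
          rw [key, norm_mul]; simp
      _ ≤ ∫ x, ‖e x * ((g x : ℝ) : ℂ)‖ := norm_integral_le_integral_norm _
      _ = ∫ x, |g x| := by
          congr 1; ext x; rw [norm_mul, hen, one_mul, Complex.norm_real, Real.norm_eq_abs]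
      _ ≤ _ := bound
  linarith

/-- The indicator function of the closed disc of radius `R`. -/
noncomputable def disc (R : ℝ) : ℂ → ℂ := (Metric.closedBall (0 : ℂ) R).indicator 1

lemma integrable_disc (R : ℝ) : Integrable (disc R) := by
  refine (integrable_indicator_iff measurableSet_closedBall).mpr ?_
  exact integrableOn_const (C := (1 : ℂ)) measure_closedBall_lt_top.ne (by simp)

/-- Integrating first along the lines orthogonal to a real frequency turns the transform of the disc
into that of a semicircle. -/
lemma fourier_disc_ofReal {R s : ℝ} (hR : 0 ≤ R) :
    𝓕 (disc R) (s : ℂ) =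
      2 * ∫ x : ℝ, cexp (((-(2 * π * s * x) : ℝ) : ℂ) * I) * (√(R ^ 2 - x ^ 2) : ℝ) := by
  have hm : MeasurableSet {p : ℝ × ℝ | p.1 ^ 2 + p.2 ^ 2 ≤ R ^ 2} :=
    measurableSet_le (by fun_prop) (by fun_prop)
  have hmem : ∀ p : ℝ × ℝ, Complex.measurableEquivRealProd.symm p ∈ Metric.closedBall (0 : ℂ) R ↔
      p ∈ {p : ℝ × ℝ | p.1 ^ 2 + p.2 ^ 2 ≤ R ^ 2} := by
    intro p
    rw [mem_closedBall_zero_iff, ← abs_of_nonneg (norm_nonneg _), ← abs_of_nonneg hR,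
      ← sq_le_sq, ← Complex.normSq_eq_norm_sq, Complex.normSq_apply]
    simp [sq]
  have hmp := Complex.volume_preserving_equiv_real_prod.symm
  rw [Real.fourier_eq, ← hmp.integral_comp (MeasurableEquiv.measurableEmbedding _)]
  have hcongr : ∀ p : ℝ × ℝ, (Real.fourierChar (-inner ℝ (Complex.measurableEquivRealProd.symm p)
      (s : ℂ)) : Circle) • disc R (Complex.measurableEquivRealProd.symm p) =
      {p : ℝ × ℝ | p.1 ^ 2 + p.2 ^ 2 ≤ R ^ 2}.indicator
        (fun p => cexp (((-(2 * π * s * p.1) : ℝ) : ℂ) * I)) p := by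
    intro p
    have hin : inner ℝ (Complex.measurableEquivRealProd.symm p) (s : ℂ) = s * p.1 := by
      rw [Complex.inner]; simp [mul_comm]
    rw [hin, disc]
    by_cases hp : p ∈ {p : ℝ × ℝ | p.1 ^ 2 + p.2 ^ 2 ≤ R ^ 2}
    · rw [indicator_of_mem ((hmem p).mpr hp), indicator_of_mem hp, Circle.smul_def,
        Real.fourierChar_apply]
      simp only [Pi.one_apply, smul_eq_mul, mul_one]
      congr 2; push_cast; ring
    · rw [indicator_of_notMem (fun h => hp ((hmem p).mp h)), indicator_of_notMem hp, smul_zero]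
  simp_rw [hcongr]
  have hpair : Integrable ({p : ℝ × ℝ | p.1 ^ 2 + p.2 ^ 2 ≤ R ^ 2}.indicator
        (fun p => cexp (((-(2 * π * s * p.1) : ℝ) : ℂ) * I))) (volume : Measure (ℝ × ℝ)) := by
    rw [integrable_indicator_iff hm]
    have hb : Bornology.IsBounded {p : ℝ × ℝ | p.1 ^ 2 + p.2 ^ 2 ≤ R ^ 2} := by
      refine (Metric.isBounded_closedBall (x := (0 : ℝ × ℝ)) (r := R)).subset fun p hp => ?_
      rw [mem_closedBall_zero_iff, Prod.norm_def]
      simp only [mem_ofPred_eq] at hp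
      exact max_le (abs_le_of_sq_le_sq (by nlinarith) hR) (abs_le_of_sq_le_sq (by nlinarith) hR)
    refine Measure.integrableOn_of_bounded (M := 1) hb.measure_lt_top.ne ?_ ?_
    · exact Continuous.aestronglyMeasurable (by fun_prop)
    · exact Filter.Eventually.of_forall fun p => (Complex.norm_exp_ofReal_mul_I _).le
  rw [show (volume : Measure (ℝ × ℝ)) = volume.prod volume from rfl] at hpair ⊢
  rw [integral_prod _ hpair, ← integral_const_mul]
  congr 1
  ext x
  have hx : ∀ y : ℝ, {p : ℝ × ℝ | p.1 ^ 2 + p.2 ^ 2 ≤ R ^ 2}.indicator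
        (fun p => cexp (((-(2 * π * s * p.1) : ℝ) : ℂ) * I)) (x, y) =
      {y : ℝ | x ^ 2 + y ^ 2 ≤ R ^ 2}.indicator
        (fun _ => cexp (((-(2 * π * s * x) : ℝ) : ℂ) * I)) y := fun y => rfl
  simp_rw [hx]
  rw [integral_indicator_const _ (measurableSet_le (by fun_prop) (by fun_prop))]
  have : (volume : Measure ℝ).real {y : ℝ | x ^ 2 + y ^ 2 ≤ R ^ 2} = 2 * √(R ^ 2 - x ^ 2) := by
    rcases le_or_gt 0 (R ^ 2 - x ^ 2) with h | h
    · have : {y : ℝ | x ^ 2 + y ^ 2 ≤ R ^ 2} = Icc (-√(R ^ 2 - x ^ 2)) (√(R ^ 2 - x ^ 2)) := by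
        ext y
        simp only [mem_ofPred_eq, mem_Icc, ← abs_le]
        rw [Real.le_sqrt (abs_nonneg y) h, sq_abs]
        constructor <;> intro <;> linarith
      rw [this, Measure.real, Real.volume_Icc, ENNReal.toReal_ofReal]
      · ring
      · linarith [Real.sqrt_nonneg (R ^ 2 - x ^ 2)]
    · have : {y : ℝ | x ^ 2 + y ^ 2 ≤ R ^ 2} = ∅ := by
        ext y
        simp only [mem_ofPred_eq, mem_empty_iff_false, iff_false]
        nlinarith [sq_nonneg y]
      rw [this, Real.sqrt_eq_zero_of_nonpos h.le]; simp
  rw [this, Complex.real_smul]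
  push_cast
  ring

/-- The transform of the disc is rotation invariant. -/
lemma fourier_disc_norm (R : ℝ) (ξ : ℂ) : 𝓕 (disc R) ξ = 𝓕 (disc R) (‖ξ‖ : ℂ) := by
  obtain ⟨u, hu⟩ : ∃ u : Circle, (u : ℂ) * (‖ξ‖ : ℂ) = ξ := by
    by_cases h : ξ = 0
    · exact ⟨1, by simp [h]⟩
    · refine ⟨⟨ξ / ‖ξ‖, ?_⟩, ?_⟩
      · simp [Submonoid.unitSphere, h]
      · have : (‖ξ‖ : ℂ) ≠ 0 := by simpa using h
        simp [div_mul_cancel₀ _ this]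
  have := Real.fourier_comp_linearIsometry (rotation u) (disc R) (‖ξ‖ : ℂ)
  rw [rotation_apply, hu] at this
  rw [← this]
  have : disc R ∘ rotation u = disc R := by
    ext z
    simp [disc, indicator, Circle.norm_coe]
  rw [this]

lemma norm_fourier_disc_le {R : ℝ} (hR : 0 ≤ R) {ξ : ℂ} (hξ : ξ ≠ 0) :
    ‖𝓕 (disc R) ξ‖ ≤ 16 * √R * ‖ξ‖ ^ (-(3 / 2) : ℝ) := by
  have hs : 0 < ‖ξ‖ := norm_pos_iff.mpr hξ
  rw [fourier_disc_norm, fourier_disc_ofReal hR]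
  have h1 := norm_fourier_semicircle_le hR (h := 1 / (2 * ‖ξ‖)) (by positivity)
  have h2 : ∀ x : ℝ, π * x / (1 / (2 * ‖ξ‖)) = 2 * π * ‖ξ‖ * x := by
    intro x; field_simp
  simp_rw [h2] at h1
  rw [norm_mul]
  have h3 : (1 / (2 * ‖ξ‖)) * √(1 / (2 * ‖ξ‖) * R) ≤ 1 / 2 * (√R * ‖ξ‖ ^ (-(3 / 2) : ℝ)) := by
    have : ‖ξ‖ ^ (-(3 / 2) : ℝ) = 1 / ‖ξ‖ * √(1 / ‖ξ‖) := by
      rw [Real.sqrt_eq_rpow, one_div, Real.inv_rpow hs.le, ← Real.rpow_neg hs.le,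
        ← Real.rpow_neg_one, ← Real.rpow_add hs]
      norm_num
    rw [this, Real.sqrt_mul (by positivity)]
    have : √(1 / (2 * ‖ξ‖)) ≤ √(1 / ‖ξ‖) := by
      apply Real.sqrt_le_sqrt
      apply one_div_le_one_div_of_le hs; linarith
    calc (1 / (2 * ‖ξ‖)) * (√(1 / (2 * ‖ξ‖)) * √R) ≤ (1 / (2 * ‖ξ‖)) * (√(1 / ‖ξ‖) * √R) := by gcongr
      _ = _ := by field_simp
  simp only [Complex.norm_ofNat]
  linarith

end DiscFourier

end CircleProblem
end

section
namespace CircleProblem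

section SmoothDisc

open MeasureTheory Real Complex Set
open scoped FourierTransform Convolution ContDiff

/-- A nonnegative mollifier of mass `1`, supported in the unit disc, whose Fourier transform decays
at least like `1 / ‖η‖`. -/
lemma exists_kernel : ∃ k : ℂ → ℝ, Continuous k ∧ (∀ z, 0 ≤ k z) ∧ (∀ z, 1 < ‖z‖ → k z = 0) ∧
    ∫ z, k z = 1 ∧ ∃ C : ℝ, 0 < C ∧ ∀ η, ‖η‖ * ‖𝓕 (fun z => (k z : ℂ)) η‖ ≤ C := by
  let b : ContDiffBump (0 : ℂ) := ⟨1 / 2, 1, by norm_num, by norm_num⟩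
  have hsmooth : ContDiff ℝ ∞ (b.normed volume) := b.contDiff_normed
  refine ⟨b.normed volume, hsmooth.continuous, fun z => b.nonneg_normed z, ?_,
    b.integral_normed, ?_⟩
  · intro z hz
    have : z ∉ Function.support (b.normed volume) := by
      rw [b.support_normed_eq]
      simpa [b] using hz.le
    simpa using this
  · have h1 : HasCompactSupport (fun z => ((b.normed volume z : ℝ) : ℂ)) :=
      (b.hasCompactSupport_normed (μ := volume)).comp_left (g := fun x : ℝ => (x : ℂ)) (by simp)
    have h2 : ContDiff ℝ ∞ (fun z => ((b.normed volume z : ℝ) : ℂ)) :=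
      Complex.ofRealCLM.contDiff.comp hsmooth
    let S := h1.toSchwartzMap h2
    obtain ⟨C, hC, h⟩ := (𝓕 S).decay 1 0
    refine ⟨C, hC, fun η => ?_⟩
    have := h η
    rw [pow_one, norm_iteratedFDeriv_zero, SchwartzMap.fourier_coe] at this
    exact this

/-- The disc of radius `R` convolved with a mollifier of radius `δ`: the transform gains a factor
`1 / (δ ‖ξ‖)`, which is exactly enough for summability over a planar lattice. -/
lemma exists_smooth_disc : ∃ C : ℝ, 0 < C ∧ ∀ R δ : ℝ, 0 ≤ R → 0 < δ → ∃ W : ℂ → ℝ,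
    Continuous W ∧ (∀ z, 0 ≤ W z) ∧ (∀ z, W z ≤ 1) ∧ (∀ z, R + δ < ‖z‖ → W z = 0) ∧
    (∀ z, ‖z‖ + δ ≤ R → W z = 1) ∧ (𝓕 (fun z => (W z : ℂ)) 0 = (π * R ^ 2 : ℝ)) ∧
    ∀ ξ : ℂ, ξ ≠ 0 → ‖𝓕 (fun z => (W z : ℂ)) ξ‖ ≤ C * √R * ‖ξ‖ ^ (-(3 / 2) : ℝ) ∧
      ‖𝓕 (fun z => (W z : ℂ)) ξ‖ ≤ C * √R * ‖ξ‖ ^ (-(5 / 2) : ℝ) / δ := by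
  obtain ⟨k, kc, k0, ksupp, kint, C, hC, hk⟩ := exists_kernel
  refine ⟨16 * max 1 C, by positivity, fun R δ hR hδ => ?_⟩
  set K : ℂ → ℝ := fun z => δ⁻¹ ^ 2 * k ((δ⁻¹ : ℝ) • z) with hK
  have Kc : Continuous K := by fun_prop
  have K0 : ∀ z, 0 ≤ K z := fun z => mul_nonneg (by positivity) (k0 _)
  have Ksupp : ∀ z, δ < ‖z‖ → K z = 0 := by
    intro z hz
    simp only [hK]
    rw [ksupp, mul_zero]
    rw [norm_smul, Real.norm_of_nonneg (by positivity), inv_mul_eq_div, one_lt_div hδ]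
    exact hz
  have Kcs : HasCompactSupport K := HasCompactSupport.intro (isCompact_closedBall (0 : ℂ) δ)
    (fun z hz => Ksupp z (by simpa using hz))
  have Ki : Integrable K := Kc.integrable_of_hasCompactSupport Kcs
  have Kiℂ : Integrable (fun z => (K z : ℂ)) := Ki.ofReal
  have hscale : ∀ g : ℂ → ℂ, ∫ z, ((δ⁻¹ ^ 2 : ℝ) : ℂ) * g ((δ⁻¹ : ℝ) • z) = ∫ z, g z := by
    intro g
    rw [integral_const_mul, Measure.integral_comp_smul, Complex.finrank_real_complex,
      abs_of_pos (by positivity), Complex.real_smul, ← mul_assoc, ← Complex.ofReal_mul]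
    rw [mul_inv_cancel₀ (by positivity)]; simp
  have Kint : ∫ z, K z = 1 := by
    have := hscale (fun z => (k z : ℂ))
    rw [integral_complex_ofReal, kint] at this
    have h2 : ∫ z, ((K z : ℝ) : ℂ) = 1 := by
      rw [← Complex.ofReal_one, ← this]; congr 1; ext z; simp [hK]
    rw [integral_complex_ofReal] at h2
    exact_mod_cast h2
  have FK : ∀ ξ : ℂ, 𝓕 (fun z => (K z : ℂ)) ξ = 𝓕 (fun z => (k z : ℂ)) ((δ : ℝ) • ξ) := by
    intro ξ
    rw [Real.fourier_eq, Real.fourier_eq, ← hscale (fun v => 𝐞 (-inner ℝ v (δ • ξ)) • (k v : ℂ))]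
    congr 1; ext z
    rw [real_inner_smul_left, real_inner_smul_right, inv_mul_cancel_left₀ hδ.ne',
      Circle.smul_def, Circle.smul_def]
    simp only [hK, smul_eq_mul]
    push_cast; ring
  have FK1 : ∀ ξ : ℂ, ‖𝓕 (fun z => (K z : ℂ)) ξ‖ ≤ 1 := by
    intro ξ
    refine (VectorFourier.norm_fourierIntegral_le_integral_norm _ _ _ _ _).trans ?_
    simp only [Complex.norm_real, Real.norm_of_nonneg (K0 _), Kint, le_refl]
  have FK2 : ∀ ξ : ℂ, ξ ≠ 0 → ‖𝓕 (fun z => (K z : ℂ)) ξ‖ ≤ C * ‖ξ‖⁻¹ / δ := by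
    intro ξ hξ
    have hs : 0 < ‖ξ‖ := norm_pos_iff.mpr hξ
    have := hk ((δ : ℝ) • ξ)
    rw [← FK, norm_smul, Real.norm_of_nonneg hδ.le] at this
    rw [le_div_iff₀ hδ, ← div_eq_mul_inv, le_div_iff₀ hs]
    linarith
  set D : ℂ → ℝ := (Metric.closedBall (0 : ℂ) R).indicator 1 with hD
  have hDdisc : (fun z => (D z : ℂ)) = disc R := by
    ext z; simp only [hD, disc, indicator]; split_ifs <;> simp
  have Di : Integrable (fun z => (D z : ℂ)) := hDdisc ▸ integrable_disc R
  have Dir : Integrable D := (integrable_indicator_iff measurableSet_closedBall).mpr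
    (integrableOn_const (C := (1 : ℝ)) measure_closedBall_lt_top.ne (by simp))
  have D0 : ∀ z, 0 ≤ D z := fun z => indicator_nonneg (fun _ _ => by simp) _
  have D1 : ∀ z, D z ≤ 1 := fun z => by
    simp only [hD, indicator]; split_ifs <;> simp
  set W : ℂ → ℝ := D ⋆[ContinuousLinearMap.mul ℝ ℝ] K with hW
  have Wapp : ∀ z, W z = ∫ t, D t * K (z - t) := fun z => rfl
  have Kint' : ∀ z, ∫ t, K (z - t) = 1 := fun z => by rw [integral_sub_left_eq_self, Kint]
  have Kti : ∀ z, Integrable fun t => K (z - t) := fun z => Ki.comp_sub_left z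
  have DKi : ∀ z, Integrable fun t => D t * K (z - t) := fun z =>
    (Kti z).bdd_mul (c := 1) Dir.aestronglyMeasurable (Filter.Eventually.of_forall fun t => by
      rw [Real.norm_of_nonneg (D0 t)]; exact D1 t)
  have Wc : Continuous W := Kcs.continuous_convolution_right _ Dir.locallyIntegrable Kc
  have hFW : ∀ ξ, 𝓕 (fun z => (W z : ℂ)) ξ = 𝓕 (disc R) ξ * 𝓕 (fun z => (K z : ℂ)) ξ := by
    intro ξ
    rw [← hDdisc, ← Real.fourier_mul_convolution_eq Di Kiℂ]
    have : (fun z => (W z : ℂ)) =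
        ((fun z => (D z : ℂ)) ⋆[ContinuousLinearMap.mul ℂ ℂ] fun z => (K z : ℂ)) := by
      funext z
      rw [Wapp, ← integral_complex_ofReal]
      simp [convolution]
    rw [this]
  refine ⟨W, Wc, ?_, ?_, ?_, ?_, ?_, ?_⟩
  · intro z
    rw [Wapp]
    exact integral_nonneg fun t => mul_nonneg (D0 t) (K0 _)
  · intro z
    rw [Wapp, ← Kint' z]
    apply integral_mono (DKi z) (Kti z)
    intro t
    exact mul_le_of_le_one_left (K0 _) (D1 t)
  · intro z hz
    rw [Wapp]
    apply integral_eq_zero_of_ae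
    filter_upwards with t
    by_cases ht : ‖t‖ ≤ R
    · rw [Ksupp (z - t), mul_zero]; · rfl
      have := norm_sub_norm_le z t
      linarith
    · have : D t = 0 := indicator_of_notMem (by simpa using ht) _
      rw [this, zero_mul]; rfl
  · intro z hz
    rw [Wapp, ← Kint' z]
    congr 1; ext t
    by_cases ht : ‖t‖ ≤ R
    · have : D t = 1 := indicator_of_mem (by simpa using ht) _
      rw [this, one_mul]
    · rw [Ksupp (z - t), mul_zero]
      have := norm_sub_norm_le t z
      rw [norm_sub_rev] at this
      push Not at ht
      linarith
  · rw [hFW]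
    have e1 : 𝓕 (fun z => (K z : ℂ)) 0 = 1 := by
      rw [Real.fourier_eq]; simp only [inner_zero_right, neg_zero, AddChar.map_zero_eq_one, one_smul]
      rw [integral_complex_ofReal, Kint]; simp
    have e2 : 𝓕 (disc R) 0 = (π * R ^ 2 : ℝ) := by
      rw [Real.fourier_eq]; simp only [inner_zero_right, neg_zero, AddChar.map_zero_eq_one, one_smul]
      rw [← hDdisc, integral_complex_ofReal, hD, integral_indicator_one measurableSet_closedBall,
        Measure.real, Complex.volume_closedBall]
      simp [ENNReal.toReal_ofReal hR, mul_comm]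
    rw [e1, e2, mul_one]
  · intro ξ hξ
    have hs : 0 < ‖ξ‖ := norm_pos_iff.mpr hξ
    rw [hFW, norm_mul]
    have h1 := norm_fourier_disc_le hR hξ
    constructor
    · calc _ ≤ (16 * √R * ‖ξ‖ ^ (-(3 / 2) : ℝ)) * 1 :=
            mul_le_mul h1 (FK1 ξ) (norm_nonneg _) (by positivity)
        _ = 16 * 1 * √R * ‖ξ‖ ^ (-(3 / 2) : ℝ) := by ring
        _ ≤ _ := by gcongr; exact le_max_left _ _
    · have : ‖ξ‖ ^ (-(5 / 2) : ℝ) = ‖ξ‖ ^ (-(3 / 2) : ℝ) * ‖ξ‖⁻¹ := by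
        rw [← Real.rpow_neg_one, ← Real.rpow_add hs]; norm_num
      calc _ ≤ (16 * √R * ‖ξ‖ ^ (-(3 / 2) : ℝ)) * (C * ‖ξ‖⁻¹ / δ) :=
            mul_le_mul h1 (FK2 ξ hξ) (norm_nonneg _) (by positivity)
        _ = 16 * C * √R * ‖ξ‖ ^ (-(5 / 2) : ℝ) / δ := by rw [this]; ring
        _ ≤ _ := by gcongr; exact le_max_right _ _

end SmoothDisc

end CircleProblem
end

/-! ### Poisson summation over lattices in the plane -/

section
open MeasureTheory Set Filter Topology
namespace CircleProblem

/-- The projection of the plane onto the unit torus. -/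
noncomputable def toTorus (x : Fin 2 → ℝ) : UnitAddTorus (Fin 2) := fun i => (x i : UnitAddCircle)

lemma toTorus_eq_iff {x y : Fin 2 → ℝ} :
    toTorus x = toTorus y ↔ ∃ n : Fin 2 → ℤ, y = x + (fun i => (n i : ℝ)) := by
  constructor
  · intro h
    have h' : ∀ i, ∃ n : ℤ, y i = x i + n := by
      intro i
      have := congrFun h i
      simp only [toTorus] at this
      rw [eq_comm, ← sub_eq_zero, ← AddCircle.coe_sub, AddCircle.coe_eq_zero_iff] at this
      obtain ⟨n, hn⟩ := this
      refine ⟨n, ?_⟩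
      simp at hn
      linarith
    choose n hn using h'
    exact ⟨n, funext hn⟩
  · rintro ⟨n, rfl⟩
    funext i
    simp only [toTorus, Pi.add_apply, AddCircle.coe_add]
    have : ((n i : ℝ) : UnitAddCircle) = 0 := by
      rw [AddCircle.coe_eq_zero_iff]
      exact ⟨n i, by simp⟩
    simp [this]

lemma isOpenQuotientMap_toTorus : IsOpenQuotientMap toTorus := by
  have := IsOpenQuotientMap.piMap (ι := Fin 2) (f := fun _ (x : ℝ) => (x : UnitAddCircle))
    (fun _ => QuotientAddGroup.isOpenQuotientMap_mk)
  exact this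

lemma norm_int_le {M : ℝ} {x : Fin 2 → ℝ} {n : Fin 2 → ℤ} {B : ℝ} (hx : ‖x‖ ≤ B)
    (h : ‖x + (fun i => (n i : ℝ))‖ ≤ M) :
    n ∈ Fintype.piFinset (fun _ : Fin 2 => Finset.Icc (-⌈B + M⌉) ⌈B + M⌉) := by
  rw [Fintype.mem_piFinset]
  intro i
  have h1 := (norm_le_pi_norm x i).trans hx
  have h2 := (norm_le_pi_norm _ i).trans h
  simp only [Pi.add_apply, Real.norm_eq_abs, abs_le] at h1 h2
  have h3 := Int.le_ceil (B + M)
  rw [Finset.mem_Icc]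
  constructor
  · have : (-⌈B + M⌉ : ℝ) ≤ (n i : ℝ) := by linarith
    exact_mod_cast this
  · have : (n i : ℝ) ≤ ⌈B + M⌉ := by linarith
    exact_mod_cast this

/-- Poisson summation in the plane for the integer lattice. -/
lemma poisson_pi {F : (Fin 2 → ℝ) → ℂ} (hF : Continuous F) {M : ℝ}
    (hM : ∀ x, M < ‖x‖ → F x = 0)
    (hs : Summable fun k : Fin 2 → ℤ => ∫ x, UnitAddTorus.mFourier (-k) (toTorus x) * F x)
    (x : Fin 2 → ℝ) :
    ∑' n : Fin 2 → ℤ, F (x + fun i => (n i : ℝ)) =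
      ∑' k : Fin 2 → ℤ, (∫ x, UnitAddTorus.mFourier (-k) (toTorus x) * F x) *
        UnitAddTorus.mFourier k (toTorus x) := by
  classical
  set P : (Fin 2 → ℝ) → ℂ := fun x => ∑' n : Fin 2 → ℤ, F (x + fun i => (n i : ℝ)) with hP
  have hPs : ∀ B : ℝ, ∀ x : Fin 2 → ℝ, ‖x‖ ≤ B → P x = ∑ n ∈ Fintype.piFinset
      (fun _ : Fin 2 => Finset.Icc (-⌈B + M⌉) ⌈B + M⌉), F (x + fun i => (n i : ℝ)) := by
    intro B x hx
    rw [hP]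
    refine tsum_eq_sum fun n hn => hM _ ?_
    by_contra hc
    exact hn (norm_int_le hx (not_lt.mp hc))
  have hPc : Continuous P := by
    rw [continuous_iff_continuousAt]
    intro x
    have hev : P =ᶠ[𝓝 x] fun y => ∑ n ∈ Fintype.piFinset
        (fun _ : Fin 2 => Finset.Icc (-⌈(‖x‖ + 1) + M⌉) ⌈(‖x‖ + 1) + M⌉),
          F (y + fun i => (n i : ℝ)) := by
      filter_upwards [Metric.ball_mem_nhds x one_pos] with y hy
      refine hPs _ _ ?_
      have h1 : ‖y - x‖ < 1 := by simpa [dist_eq_norm] using hy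
      have h2 := norm_le_norm_add_norm_sub' y x
      linarith
    refine ContinuousAt.congr ?_ hev.symm
    refine Continuous.continuousAt ?_
    fun_prop
  have hfac : Function.FactorsThrough P toTorus := by
    intro x y h
    obtain ⟨m, rfl⟩ := toTorus_eq_iff.mp h
    simp only [hP]
    rw [← (Equiv.addLeft m).tsum_eq]
    congr 1 with n
    congr 1
    funext i
    simp [add_assoc]
  set Q : C(UnitAddTorus (Fin 2), ℂ) :=
    (Topology.IsQuotientMap.lift (f := ⟨toTorus, isOpenQuotientMap_toTorus.continuous⟩)
      isOpenQuotientMap_toTorus.isQuotientMap ⟨P, hPc⟩ hfac) with hQ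
  have hQP : ∀ x, Q (toTorus x) = P x := by
    intro x
    have := Topology.IsQuotientMap.lift_comp
      (f := ⟨toTorus, isOpenQuotientMap_toTorus.continuous⟩)
      isOpenQuotientMap_toTorus.isQuotientMap ⟨P, hPc⟩ hfac
    exact DFunLike.congr_fun this x
  have hpair : ∀ k : Fin 2 → ℤ, Integrable
      (fun x => UnitAddTorus.mFourier (-k) (toTorus x) * F x) := by
    intro k
    refine Continuous.integrable_of_hasCompactSupport ?_ ?_
    · have := isOpenQuotientMap_toTorus.continuous
      fun_prop
    · refine HasCompactSupport.mul_left ?_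
      refine HasCompactSupport.intro (isCompact_closedBall (0 : Fin 2 → ℝ) M) ?_
      intro x hx
      refine hM x ?_
      simpa using hx
  have hcoef : ∀ k : Fin 2 → ℤ, UnitAddTorus.mFourierCoeff Q k =
      ∫ x, UnitAddTorus.mFourier (-k) (toTorus x) * F x := by
    intro k
    rw [UnitAddTorus.mFourierCoeff_eq_integral _ _ 0]
    set G := fun x => UnitAddTorus.mFourier (-k) (toTorus x) * F x with hG
    set S : (Fin 2 → ℤ) → Set (Fin 2 → ℝ) := fun n => Set.univ.pi fun i => Ioc (n i : ℝ) (n i + 1)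
      with hS
    have hSm : ∀ n, MeasurableSet (S n) := fun n =>
      MeasurableSet.univ_pi fun i => measurableSet_Ioc
    have hmem : ∀ n x, x ∈ S n ↔ ∀ i, n i = ⌈x i⌉ - 1 := by
      intro n x
      simp only [hS, Set.mem_pi, Set.mem_univ, true_imp_iff]
      refine forall_congr' fun i => ?_
      rw [eq_sub_iff_add_eq, eq_comm (b := ⌈x i⌉), Int.ceil_eq_iff]
      push_cast
      simp
    have hdisj : Pairwise (Function.onFun Disjoint S) := by
      intro m n hmn
      rw [Function.onFun, Set.disjoint_left]
      intro x hx hx'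
      rw [hmem] at hx hx'
      exact hmn (funext fun i => (hx i).trans (hx' i).symm)
    have huniv : ⋃ n, S n = Set.univ := by
      rw [Set.eq_univ_iff_forall]
      intro x
      rw [Set.mem_iUnion]
      exact ⟨fun i => ⌈x i⌉ - 1, (hmem _ _).mpr fun i => rfl⟩
    have h1 : ∫ x, G x = ∑' n, ∫ x in S n, G x := by
      rw [← setIntegral_univ, ← huniv]
      exact integral_iUnion hSm hdisj (hpair k).integrableOn
    have h2 : ∀ n, ∫ x in S n, G x =
        ∫ x in S 0, UnitAddTorus.mFourier (-k) (toTorus x) * F (x + fun i => (n i : ℝ)) := by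
      intro n
      have hmp := measurePreserving_add_right (volume : Measure (Fin 2 → ℝ))
        (fun i => (n i : ℝ))
      have hemb := measurableEmbedding_addRight (fun i => (n i : ℝ) : Fin 2 → ℝ)
      rw [← hmp.setIntegral_preimage_emb hemb]
      have : (fun x => x + fun i => (n i : ℝ)) ⁻¹' S n = S 0 := by
        ext x
        simp [hS, Set.mem_pi, add_comm]
      rw [this]
      congr 1 with x
      rw [hG]
      have : toTorus (x + fun i => (n i : ℝ)) = toTorus x :=
        (toTorus_eq_iff.mpr ⟨n, rfl⟩).symm
      simp only [this]
    have hS0 : {x : Fin 2 → ℝ | ∀ i, x i ∈ Ioc ((0 : Fin 2 → ℝ) i) ((0 : Fin 2 → ℝ) i + 1)}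
        = S 0 := by
      ext x; simp [hS, Set.mem_pi]
    have hS0n : ∀ x ∈ S 0, ‖x‖ ≤ 1 := by
      intro x hx
      rw [pi_norm_le_iff_of_nonneg zero_le_one]
      intro i
      have := hx i (Set.mem_univ i)
      simp at this
      rw [Real.norm_eq_abs, abs_le]
      constructor <;> linarith [this.1, this.2]
    rw [h1, hS0]
    simp_rw [h2]
    rw [tsum_eq_sum (s := Fintype.piFinset
      (fun _ : Fin 2 => Finset.Icc (-⌈(1:ℝ) + M⌉) ⌈(1:ℝ) + M⌉)), ← integral_finsetSum]
    · refine setIntegral_congr_fun (hSm 0) fun x hx => ?_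
      have : Q (fun i => (x i : UnitAddCircle)) = P x := hQP x
      rw [smul_eq_mul, this, hPs 1 x (hS0n x hx), Finset.mul_sum]
      rfl
    · intro n _
      refine Integrable.integrableOn ?_
      have := (hpair k).comp_add_right (fun i => (n i : ℝ))
      refine this.congr (Eventually.of_forall fun x => ?_)
      have : toTorus (x + fun i => (n i : ℝ)) = toTorus x :=
        (toTorus_eq_iff.mpr ⟨n, rfl⟩).symm
      simp only [this]
    · intro n hn
      refine setIntegral_eq_zero_of_forall_eq_zero fun x hx => ?_
      rw [hM, mul_zero]
      by_contra hc
      exact hn (norm_int_le (hS0n x hx) (not_lt.mp hc))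
  have hsum : Summable (UnitAddTorus.mFourierCoeff Q) := by
    refine hs.congr fun k => ?_
    rw [hcoef]
  have := UnitAddTorus.hasSum_mFourier_series_apply_of_summable hsum (toTorus x)
  rw [hQP] at this
  refine this.tsum_eq.symm.trans ?_
  simp_rw [hcoef, smul_eq_mul]

end CircleProblem
end

section
open MeasureTheory Set Filter Topology
open scoped FourierTransform RealInnerProductSpace
namespace CircleProblem

/-- The signed area of the parallelogram spanned by `β 0` and `β 1`. -/
noncomputable def area (β : Fin 2 → ℂ) : ℝ := (β 0).re * (β 1).im - (β 0).im * (β 1).re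

/-- The vector of the dual lattice pairing with `β i` to `k i`. -/
noncomputable def dualVec (β : Fin 2 → ℂ) (k : Fin 2 → ℤ) : ℂ :=
  ⟨(k 0 * (β 1).im - k 1 * (β 0).im) / area β, (k 1 * (β 0).re - k 0 * (β 1).re) / area β⟩

/-- The point with coordinates `x` in the basis `β`. -/
noncomputable def comb (β : Fin 2 → ℂ) (x : Fin 2 → ℝ) : ℂ := x 0 * β 0 + x 1 * β 1

lemma inner_eq_re_im (z w : ℂ) : ⟪z, w⟫ = z.re * w.re + z.im * w.im := by
  rw [Complex.inner]; simp; ring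

lemma inner_comb_dualVec {β : Fin 2 → ℂ} (hβ : area β ≠ 0) (x : Fin 2 → ℝ) (k : Fin 2 → ℤ) :
    ⟪comb β x, dualVec β k⟫ = k 0 * x 0 + k 1 * x 1 := by
  rw [inner_eq_re_im]
  simp only [comb, dualVec, Complex.add_re, Complex.mul_re, Complex.ofReal_re, Complex.ofReal_im,
    Complex.add_im, Complex.mul_im, zero_mul, sub_zero, add_zero]
  field_simp
  unfold area
  ring

lemma exists_comb {β : Fin 2 → ℂ} (hβ : area β ≠ 0) (z : ℂ) : ∃ x, comb β x = z := by
  refine ⟨![(z.re * (β 1).im - z.im * (β 1).re) / area β,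
    (z.im * (β 0).re - z.re * (β 0).im) / area β], ?_⟩
  apply Complex.ext
  · simp [comb]
    field_simp
    unfold area
    ring
  · simp [comb]
    field_simp
    unfold area
    ring

lemma comb_injective {β : Fin 2 → ℂ} (hβ : area β ≠ 0) : Function.Injective (comb β) := by
  intro x y h
  have h0 : x 0 = y 0 := by
    have := inner_comb_dualVec hβ x ![1, 0]
    rw [h, inner_comb_dualVec hβ] at this
    simpa using this.symm
  have h1 : x 1 = y 1 := by
    have := inner_comb_dualVec hβ x ![0, 1]
    rw [h, inner_comb_dualVec hβ] at this
    simpa using this.symm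
  funext i
  fin_cases i
  · exact h0
  · exact h1

lemma mFourier_toTorus (k : Fin 2 → ℤ) (x : Fin 2 → ℝ) :
    UnitAddTorus.mFourier k (toTorus x) =
      Complex.exp (2 * Real.pi * Complex.I * ((k 0 * x 0 + k 1 * x 1 : ℝ) : ℂ)) := by
  simp only [UnitAddTorus.mFourier, toTorus, ContinuousMap.coe_mk, Fin.prod_univ_two,
    fourier_coe_apply]
  rw [← Complex.exp_add]
  congr 1
  push_cast
  ring

lemma integral_comp_comb {β : Fin 2 → ℂ} (hβ : area β ≠ 0) (g : ℂ → ℂ) :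
    ∫ x, g (comb β x) = ((|area β|⁻¹ : ℝ) : ℂ) * ∫ z, g z := by
  set A : Matrix (Fin 2) (Fin 2) ℝ := !![(β 0).re, (β 1).re; (β 0).im, (β 1).im] with hA
  have hdet : A.det = area β := by
    rw [hA, Matrix.det_fin_two_of, area]; ring
  have hcomb : ∀ x, comb β x = Complex.measurableEquivPi.symm (Matrix.toLin' A x) := by
    intro x
    apply Complex.ext
    · simp [comb, hA, Matrix.toLin'_apply, dotProduct, Fin.sum_univ_two]; ring
    · simp [comb, hA, Matrix.toLin'_apply, dotProduct, Fin.sum_univ_two]; ring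
  have h1 := Real.map_matrix_volume_pi_eq_smul_volume_pi (M := A) (by rw [hdet]; exact hβ)
  have h2 := Complex.volume_preserving_equiv_pi.symm
  have hemb : MeasurableEmbedding (Matrix.toLin' A) := by
    have hu : IsUnit A.det := by rw [hdet]; exact hβ.isUnit
    have h := (Matrix.toLinearEquiv' A (Matrix.invertibleOfIsUnitDet A hu)).toContinuousLinearEquiv.toHomeomorph.measurableEmbedding
    exact h
  simp_rw [hcomb]
  rw [← hemb.integral_map (g := fun y => g (Complex.measurableEquivPi.symm y)), h1,
    integral_smul_measure, h2.integral_comp Complex.measurableEquivPi.symm.measurableEmbedding,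
    hdet, ENNReal.toReal_ofReal (abs_nonneg _), abs_inv, Complex.real_smul]

/-- Poisson summation over a shifted lattice in `ℂ`. -/
lemma poisson_lattice {β : Fin 2 → ℂ} (hβ : area β ≠ 0) {w : ℂ → ℂ} (hw : Continuous w) {M : ℝ}
    (hM : ∀ z, M < ‖z‖ → w z = 0) (hs : Summable fun k => 𝓕 w (dualVec β k)) (z₀ : ℂ) :
    ∑' n : Fin 2 → ℤ, w (z₀ + comb β fun i => (n i : ℝ)) =
      ((|area β|⁻¹ : ℝ) : ℂ) * ∑' k, 𝓕 w (dualVec β k) *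
        Complex.exp (2 * Real.pi * Complex.I * ((⟪z₀, dualVec β k⟫ : ℝ) : ℂ)) := by
  have hcoef : ∀ k : Fin 2 → ℤ, ∫ x, UnitAddTorus.mFourier (-k) (toTorus x) * w (comb β x) =
      ((|area β|⁻¹ : ℝ) : ℂ) * 𝓕 w (dualVec β k) := by
    intro k
    rw [Real.fourier_eq', ← integral_comp_comb hβ]
    congr 1 with x
    rw [mFourier_toTorus, smul_eq_mul, inner_comb_dualVec hβ]
    congr 2
    simp
    ring
  have hcont : Continuous (comb β) := by
    unfold comb
    fun_prop
  -- a linear bijection is proper: coordinates are recovered by pairing with the dual basis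
  have hbd : ∃ M', ∀ x, M' < ‖x‖ → w (comb β x) = 0 := by
    refine ⟨|M| * (‖dualVec β ![1, 0]‖ + ‖dualVec β ![0, 1]‖), fun x hx => hM _ ?_⟩
    by_contra hc
    refine absurd hx (not_lt.mpr ?_)
    have h0 : |x 0| ≤ |M| * ‖dualVec β ![1, 0]‖ := by
      have : x 0 = ⟪comb β x, dualVec β ![1, 0]⟫ := by
        rw [inner_comb_dualVec hβ]; simp
      rw [this]
      refine (abs_real_inner_le_norm _ _).trans ?_
      gcongr
      exact (not_lt.mp hc).trans (le_abs_self M)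
    have h1 : |x 1| ≤ |M| * ‖dualVec β ![0, 1]‖ := by
      have : x 1 = ⟪comb β x, dualVec β ![0, 1]⟫ := by
        rw [inner_comb_dualVec hβ]; simp
      rw [this]
      refine (abs_real_inner_le_norm _ _).trans ?_
      gcongr
      exact (not_lt.mp hc).trans (le_abs_self M)
    rw [pi_norm_le_iff_of_nonneg (by positivity)]
    have e0 : 0 ≤ |M| * ‖dualVec β ![1, 0]‖ := by positivity
    have e1 : 0 ≤ |M| * ‖dualVec β ![0, 1]‖ := by positivity
    intro i
    fin_cases i
    · simp only [Fin.zero_eta, Real.norm_eq_abs]; linarith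
    · simp only [Fin.mk_one, Real.norm_eq_abs]; linarith
  obtain ⟨M', hM'⟩ := hbd
  obtain ⟨x₀, rfl⟩ := exists_comb hβ z₀
  have := poisson_pi (F := fun x => w (comb β x)) (hw.comp hcont) hM'
    (by simp_rw [hcoef]; exact hs.mul_left _) x₀
  simp_rw [hcoef] at this
  have hadd : ∀ x y, comb β (x + y) = comb β x + comb β y := by
    intro x y
    simp [comb]; ring
  simp_rw [hadd] at this
  rw [this, ← tsum_mul_left]
  congr 1 with k
  rw [mFourier_toTorus, inner_comb_dualVec hβ, mul_assoc]

lemma dualVec_zero (β : Fin 2 → ℂ) : dualVec β 0 = 0 := by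
  apply Complex.ext <;> simp [dualVec]

lemma dualVec_injective {β : Fin 2 → ℂ} (hβ : area β ≠ 0) : Function.Injective (dualVec β) := by
  intro k l h
  have h0 := inner_comb_dualVec hβ ![1, 0] k
  have h1 := inner_comb_dualVec hβ ![0, 1] k
  rw [h, inner_comb_dualVec hβ] at h0 h1
  simp at h0 h1
  funext i
  fin_cases i
  · exact h0.symm
  · exact h1.symm

end CircleProblem
end

/-! ### Ideals as planar lattices -/

section
open MeasureTheory Set Filter Topology NumberField
open scoped FourierTransform RealInnerProductSpace
namespace CircleProblem

variable {K : Type*} [Field K] [NumberField K]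

/-- The embedding of the ring of integers into the complex plane. -/
noncomputable def emb (ι : K →+* ℂ) : 𝓞 K →+* ℂ := ι.comp (algebraMap (𝓞 K) K)

omit [NumberField K] in
lemma emb_injective (ι : K →+* ℂ) : Function.Injective (emb ι) :=
  ι.injective.comp RingOfIntegers.coe_injective

variable (K) in
lemma discr_abs_pos : 0 < √|(discr K : ℝ)| := by
  apply Real.sqrt_pos.mpr
  rw [abs_pos]
  exact_mod_cast discr_ne_zero K

section
variable (ι : K →+* ℂ) (hdeg : Module.finrank ℚ K = 2)
  (himag : ∀ v : NumberField.InfinitePlace K, v.IsComplex)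
include hdeg himag

/-- The two embeddings of an imaginary quadratic field are `ι` and its conjugate. -/
lemma exists_equiv_embeddings : ∃ e : Fin 2 ≃ (K →ₐ[ℚ] ℂ), ∀ x : K,
    e 0 x = ι x ∧ e 1 x = (starRingEnd ℂ) (ι x) := by
  classical
  have hne : ι.toRatAlgHom ≠ (ComplexEmbedding.conjugate ι).toRatAlgHom := by
    intro h
    have h2 := InfinitePlace.isComplex_mk_iff.mp (himag (InfinitePlace.mk ι))
    apply h2
    rw [ComplexEmbedding.isReal_iff]
    ext x
    exact (DFunLike.congr_fun h x).symm
  let f : Fin 2 → (K →ₐ[ℚ] ℂ) := ![ι.toRatAlgHom, (ComplexEmbedding.conjugate ι).toRatAlgHom]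
  have hf : Function.Bijective f := by
    rw [Fintype.bijective_iff_injective_and_card]
    refine ⟨?_, by rw [AlgHom.card, hdeg]; simp⟩
    intro i j h
    fin_cases i <;> fin_cases j
    · rfl
    · exact absurd h hne
    · exact absurd h.symm hne
    · rfl
  refine ⟨Equiv.ofBijective f hf, fun x => ⟨rfl, ?_⟩⟩
  rfl

lemma normSq_emb (z : 𝓞 K) : Complex.normSq (emb ι z) = Ideal.absNorm (Ideal.span {z}) := by
  obtain ⟨e, he⟩ := exists_equiv_embeddings ι hdeg himag
  have h1 := Algebra.norm_eq_prod_embeddings ℚ ℂ (z : K)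
  rw [← e.prod_comp, Fin.prod_univ_two, (he _).1, (he _).2, Complex.mul_conj] at h1
  have h2 : ((Algebra.norm ℤ z : ℤ) : ℚ) = Algebra.norm ℚ (z : K) := Algebra.coe_norm_int z
  rw [← h2] at h1
  have h3 : ((Algebra.norm ℤ z : ℤ) : ℝ) = Complex.normSq (ι z) := by
    have := congrArg Complex.re h1
    simpa using this
  have h4 : (emb ι z) = ι z := rfl
  rw [Ideal.absNorm_span_singleton, h4, ← h3]
  have h5 : (0:ℝ) ≤ (Algebra.norm ℤ z : ℤ) := by rw [h3]; exact Complex.normSq_nonneg _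
  have h6 : 0 ≤ Algebra.norm ℤ z := by exact_mod_cast h5
  have := Int.natAbs_of_nonneg h6
  rw [← Int.cast_natCast, this]

/-- Nonzero points of `I` have `|z|² = N(z) ≥ N(I)`, since `I` divides `(z)`. -/
lemma le_normSq_emb {I : Ideal (𝓞 K)} {z : 𝓞 K} (hz : z ∈ I) (h0 : z ≠ 0) :
    (Ideal.absNorm I : ℝ) ≤ Complex.normSq (emb ι z) := by
  rw [normSq_emb ι hdeg himag]
  have : Ideal.absNorm I ∣ Ideal.absNorm (Ideal.span {z}) :=
    Ideal.absNorm_dvd_absNorm_of_le ((Ideal.span_singleton_le_iff_mem _).mpr hz)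
  have hpos : 0 < Ideal.absNorm (Ideal.span {z}) := by
    rw [Nat.pos_iff_ne_zero, Ne, Ideal.absNorm_eq_zero_iff]
    simpa using h0
  exact_mod_cast Nat.le_of_dvd hpos this

/-- A `ℤ`-basis of the ring of integers indexed by `Fin 2` whose image spans a parallelogram of
area `√|Δ| / 2`. -/
lemma exists_basis : ∃ b : Module.Basis (Fin 2) ℤ (𝓞 K),
    |area (fun i => emb ι (b i))| = √|(discr K : ℝ)| / 2 := by
  classical
  obtain ⟨e, he⟩ := exists_equiv_embeddings ι hdeg himag
  have hrank : Fintype.card (Fin 2) = Module.finrank ℤ (𝓞 K) := by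
    rw [RingOfIntegers.rank, hdeg]; simp
  have hc : Fintype.card (Module.Free.ChooseBasisIndex ℤ (𝓞 K)) = 2 := by
    rw [← Module.finrank_eq_card_chooseBasisIndex, RingOfIntegers.rank, hdeg]
  let s : Module.Free.ChooseBasisIndex ℤ (𝓞 K) ≃ Fin 2 := Fintype.equivFinOfCardEq hc
  refine ⟨(RingOfIntegers.basis K).reindex s, ?_⟩
  set b := (RingOfIntegers.basis K).reindex s with hb
  have h1 : (discr K : ℚ) = Algebra.discr ℚ (fun i => ((b i : 𝓞 K) : K)) := by
    rw [coe_discr]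
    have : (fun i => ((b i : 𝓞 K) : K)) = integralBasis K ∘ s.symm := by
      funext i
      simp [hb, integralBasis_apply]
    rw [this, Algebra.discr_reindex]
  have h2 := Algebra.discr_eq_det_embeddingsMatrixReindex_pow_two ℚ ℂ
    (fun i => ((b i : 𝓞 K) : K)) e
  rw [← h1, Matrix.det_fin_two] at h2
  simp only [Algebra.embeddingsMatrixReindex, Algebra.embeddingsMatrix, Matrix.reindex_apply,
    Matrix.submatrix_apply, Matrix.of_apply, Equiv.refl_symm, Equiv.symm_symm, Equiv.refl_apply,
    (he _).1, (he _).2] at h2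
  have h3 : (discr K : ℝ) = -4 * area (fun i => emb ι (b i)) ^ 2 := by
    have h4 := congrArg Complex.re h2
    simp [pow_two] at h4
    rw [h4]
    simp only [area, emb, RingHom.comp_apply]
    ring
  rw [h3, abs_mul, abs_of_nonneg (sq_nonneg (area _)), show |(-4:ℝ)| = 2 ^ 2 by norm_num,
    ← mul_pow, Real.sqrt_sq_eq_abs, abs_mul, abs_two]
  ring

/-- A `ℤ`-basis of the ideal `I`, whose image spans a parallelogram of area `N(I) √|Δ| / 2`. -/
lemma exists_ideal_basis {I : Ideal (𝓞 K)} (hI : I ≠ 0) : ∃ bI : Module.Basis (Fin 2) ℤ I,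
    |area (fun i => emb ι (bI i))| = Ideal.absNorm I * (√|(discr K : ℝ)| / 2) := by
  obtain ⟨b, hb⟩ := exists_basis ι hdeg himag
  refine ⟨Ideal.selfBasis b I hI, ?_⟩
  set bI := Ideal.selfBasis b I hI
  rw [← Ideal.natAbs_det_basis_change b I bI, ← hb]
  set m := b.toMatrix ((↑) ∘ bI : Fin 2 → 𝓞 K) with hm
  have h1 : ∀ i, emb ι (bI i) = (m 0 i : ℂ) * emb ι (b 0) + (m 1 i : ℂ) * emb ι (b 1) := by
    intro i
    have := b.sum_toMatrix_smul_self ((↑) ∘ bI : Fin 2 → 𝓞 K) i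
    rw [Fin.sum_univ_two] at this
    have h := congrArg (emb ι) this
    simp only [Function.comp_apply, map_add, zsmul_eq_mul, map_mul, map_intCast] at h
    exact h.symm
  rw [Module.Basis.det_apply, ← hm, Matrix.det_fin_two, Nat.cast_natAbs, Int.cast_abs, ← abs_mul]
  congr 1
  simp only [area, h1]
  simp
  ring

end
end CircleProblem
end

section
open MeasureTheory Set Filter Topology NumberField
open scoped FourierTransform RealInnerProductSpace nonZeroDivisors
namespace CircleProblem

variable {K : Type*} [Field K] [NumberField K]

section
variable (ι : K →+* ℂ) (hdeg : Module.finrank ℚ K = 2)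
  (himag : ∀ v : NumberField.InfinitePlace K, v.IsComplex)
include hdeg himag

/-- Minkowski: an ideal contains a short nonzero vector. -/
lemma exists_short : ∃ C : ℝ, 0 < C ∧ ∀ I : Ideal (𝓞 K), I ≠ 0 →
    ∃ x ∈ I, x ≠ 0 ∧ Complex.normSq (emb ι x) ≤ C * Ideal.absNorm I := by
  refine ⟨(4 / Real.pi) ^ InfinitePlace.nrComplexPlaces K *
        (Module.finrank ℚ K).factorial / (Module.finrank ℚ K) ^ (Module.finrank ℚ K) *
          Real.sqrt |discr K|, ?_, ?_⟩
  · have := discr_abs_pos K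
    have h2 : 0 < Module.finrank ℚ K := Module.finrank_pos
    positivity
  · intro I hI
    have hmem : I ∈ (Ideal (𝓞 K))⁰ := mem_nonZeroDivisors_of_ne_zero hI
    obtain ⟨y, hy, hy0, hle⟩ := NumberField.exists_ne_zero_mem_ideal_of_norm_le_mul_sqrt_discr K
      (FractionalIdeal.mk0 K ⟨I, hmem⟩)
    rw [FractionalIdeal.coe_mk0, FractionalIdeal.mem_coeIdeal] at hy
    obtain ⟨x, hx, rfl⟩ := hy
    refine ⟨x, hx, fun h => hy0 (by rw [h, map_zero]), ?_⟩
    rw [FractionalIdeal.coe_mk0, FractionalIdeal.coeIdeal_absNorm] at hle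
    rw [normSq_emb ι hdeg himag, Ideal.absNorm_span_singleton]
    have h1 : ((Algebra.norm ℤ x : ℤ) : ℚ) = Algebra.norm ℚ (algebraMap (𝓞 K) K x) :=
      Algebra.coe_norm_int x
    rw [← h1] at hle
    have h2 : (((Algebra.norm ℤ x).natAbs : ℕ) : ℝ) =
        ((|((Algebra.norm ℤ x : ℤ) : ℚ)| : ℚ) : ℝ) := by
      rw [Nat.cast_natAbs]; push_cast; rfl
    rw [h2]
    refine hle.trans (le_of_eq ?_)
    push_cast
    ring

/-- Nonzero dual vectors of `I` have length at least of order `N(I)^{-1/2}`. As the dual lattice is a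
group, its points are separated at this scale. -/
lemma exists_dual_bound : ∃ c : ℝ, 0 < c ∧ ∀ I : Ideal (𝓞 K), I ≠ 0 → ∀ ξ : ℂ, ξ ≠ 0 →
    (∀ x ∈ I, ∃ n : ℤ, ⟪emb ι x, ξ⟫ = n) → c / √(Ideal.absNorm I) ≤ ‖ξ‖ := by
  obtain ⟨b, hb⟩ := exists_basis ι hdeg himag
  obtain ⟨C, hC, hs⟩ := exists_short ι hdeg himag
  have hb0 : area (fun i => emb ι (b i)) ≠ 0 := by
    intro h
    rw [h, abs_zero] at hb
    have := discr_abs_pos K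
    linarith
  set B := ‖emb ι (b 0)‖ + ‖emb ι (b 1)‖ with hB
  have hB0 : 0 < B := by
    have h0 : ‖emb ι (b 0)‖ ≠ 0 := by
      rw [norm_ne_zero_iff, Ne, map_eq_zero_iff _ (emb_injective ι)]
      exact b.ne_zero 0
    have := norm_nonneg (emb ι (b 0))
    have := norm_nonneg (emb ι (b 1))
    positivity
  refine ⟨1 / (√C * B), by positivity, ?_⟩
  intro I hI ξ hξ hpair
  obtain ⟨x, hx, hx0, hxle⟩ := hs I hI
  have hN : 0 < (Ideal.absNorm I : ℝ) := by
    have : Ideal.absNorm I ≠ 0 := by rwa [Ne, Ideal.absNorm_eq_zero_iff]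
    positivity
  have hxn : ‖emb ι x‖ ≤ √C * √(Ideal.absNorm I) := by
    rw [← Real.sqrt_mul hC.le]
    apply Real.le_sqrt_of_sq_le
    rw [← Complex.normSq_eq_norm_sq]
    exact hxle
  have hex : ∃ i, ⟪emb ι (x * b i), ξ⟫ ≠ 0 := by
    by_contra! hcon
    have h0 := hcon 0
    have h1 := hcon 1
    have hexi : emb ι x ≠ 0 := by rwa [Ne, map_eq_zero_iff _ (emb_injective ι)]
    rw [inner_eq_re_im, map_mul] at h0 h1
    simp only [Complex.mul_re, Complex.mul_im] at h0 h1
    set X := emb ι x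
    -- `conj X * ξ` pairs to zero with a basis of the plane
    have hη : (starRingEnd ℂ X) * ξ = 0 := by
      have e0 : (emb ι (b 0)).re * ((starRingEnd ℂ X) * ξ).re +
          (emb ι (b 0)).im * ((starRingEnd ℂ X) * ξ).im = 0 := by
        simp; linarith
      have e1 : (emb ι (b 1)).re * ((starRingEnd ℂ X) * ξ).re +
          (emb ι (b 1)).im * ((starRingEnd ℂ X) * ξ).im = 0 := by
        simp; linarith
      set Y := (starRingEnd ℂ X) * ξ
      apply Complex.ext
      · have : area (fun i => emb ι (b i)) * Y.re = 0 := by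
          unfold area; linear_combination (emb ι (b 1)).im * e0 - (emb ι (b 0)).im * e1
        simpa [hb0] using this
      · have : area (fun i => emb ι (b i)) * Y.im = 0 := by
          unfold area; linear_combination (emb ι (b 0)).re * e1 - (emb ι (b 1)).re * e0
        simpa [hb0] using this
    rw [mul_eq_zero] at hη
    rcases hη with h | h
    · exact hexi (by simpa using h)
    · exact hξ h
  obtain ⟨i, hi⟩ := hex
  obtain ⟨n, hn⟩ := hpair (x * b i) (I.mul_mem_right _ hx)
  have h1 : (1:ℝ) ≤ |⟪emb ι (x * b i), ξ⟫| := by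
    rw [hn] at hi ⊢
    have : n ≠ 0 := by rintro rfl; simp at hi
    exact_mod_cast Int.one_le_abs this
  have h2 : ‖emb ι (b i)‖ ≤ B := by
    have := norm_nonneg (emb ι (b 0))
    have := norm_nonneg (emb ι (b 1))
    fin_cases i
    · simp only [Fin.zero_eta, hB]; linarith
    · simp only [Fin.mk_one, hB]; linarith
  have h3 : (1:ℝ) ≤ √C * √(Ideal.absNorm I) * B * ‖ξ‖ := by
    refine h1.trans ((abs_real_inner_le_norm _ _).trans ?_)
    rw [map_mul, norm_mul]
    gcongr
  rw [div_div, div_le_iff₀ (by positivity)]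
  linarith

end
end CircleProblem
end

/-! ### Sums over separated sets -/

section
open MeasureTheory Set Filter Topology NumberField
open scoped FourierTransform RealInnerProductSpace nonZeroDivisors
namespace CircleProblem

/-- The discs of radius `m / 2` around the points of an `m`-separated set are disjoint. -/
lemma sum_ball_integral_le {κ : Type*} {g : ℂ → ℝ} (hg : Integrable g) (hg0 : ∀ z, 0 ≤ g z)
    {ξ : κ → ℂ} {m : ℝ} (s : Finset κ)
    (hsep : ∀ k ∈ s, ∀ l ∈ s, k ≠ l → m ≤ ‖ξ k - ξ l‖) :
    ∑ k ∈ s, ∫ z in Metric.ball (ξ k) (m / 2), g z ≤ ∫ z, g z := by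
  rw [← integral_biUnion_finset s (fun _ _ => measurableSet_ball)]
  · exact setIntegral_le_integral hg (Eventually.of_forall hg0)
  · intro k hk l hl hkl
    apply Metric.ball_disjoint_ball
    rw [dist_eq_norm]
    have := hsep k hk l hl hkl
    linarith
  · exact fun _ _ => hg.integrableOn

lemma integral_ball_const (x : ℂ) {r : ℝ} (hr : 0 ≤ r) (c : ℝ) :
    ∫ _ in Metric.ball x r, c = Real.pi * r ^ 2 * c := by
  rw [setIntegral_const, Measure.real, Complex.volume_ball, smul_eq_mul]
  congr 1
  rw [ENNReal.toReal_mul, ENNReal.toReal_pow, ENNReal.toReal_ofReal hr]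
  simp
  ring

/-- The majorant for the smoothed Fourier transform of a disc. -/
noncomputable def maj (δ : ℝ) (z : ℂ) : ℝ := ‖z‖ ^ (-(3/2) : ℝ) / (1 + δ * ‖z‖)

lemma maj_nonneg {δ : ℝ} (hδ : 0 < δ) (z : ℂ) : 0 ≤ maj δ z := by
  unfold maj; positivity

lemma integrable_maj_one : Integrable (maj 1) := by
  have h := integrable_fun_norm_addHaar (μ := (volume : Measure ℂ))
    (f := fun r : ℝ => r ^ (-(3/2) : ℝ) / (1 + 1 * r))
  unfold maj
  rw [h]
  simp only [Complex.finrank_real_complex, smul_eq_mul, one_mul]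
  have hm : AEStronglyMeasurable (fun y : ℝ => y ^ (2 - 1) * (y ^ (-(3/2) : ℝ) / (1 + y))) := by
    apply Measurable.aestronglyMeasurable
    fun_prop
  rw [← Ioc_union_Ioi_eq_Ioi (zero_le_one (α := ℝ)), integrableOn_union]
  constructor
  · have h1 : IntegrableOn (fun y : ℝ => y ^ (-(1/2) : ℝ)) (Ioc 0 1) := by
      rw [← intervalIntegrable_iff_integrableOn_Ioc_of_le zero_le_one]
      exact intervalIntegral.intervalIntegrable_rpow' (by norm_num)
    refine Integrable.mono' h1 hm.restrict ?_
    filter_upwards [ae_restrict_mem measurableSet_Ioc] with y hy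
    have hy0 : 0 < y := hy.1
    rw [Real.norm_of_nonneg (by positivity), ← mul_div_assoc]
    refine (div_le_self (by positivity) (by linarith)).trans (le_of_eq ?_)
    rw [show (2 - 1 : ℕ) = 1 by norm_num, pow_one]
    nth_rewrite 1 [← Real.rpow_one y]
    rw [← Real.rpow_add hy0]
    norm_num
  · have h1 : IntegrableOn (fun y : ℝ => y ^ (-(3/2) : ℝ)) (Ioi 1) :=
      integrableOn_Ioi_rpow_of_lt (by norm_num) one_pos
    refine Integrable.mono' h1 hm.restrict ?_
    filter_upwards [ae_restrict_mem measurableSet_Ioi] with y hy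
    have hy0 : 0 < y := one_pos.trans hy
    rw [Real.norm_of_nonneg (by positivity), show (2 - 1 : ℕ) = 1 by norm_num, pow_one,
      ← mul_div_assoc, div_le_iff₀ (by positivity), mul_comm]
    gcongr
    linarith

lemma maj_eq {δ : ℝ} (hδ : 0 < δ) (z : ℂ) : maj δ z = δ ^ (3/2 : ℝ) * maj 1 (δ • z) := by
  unfold maj
  rw [norm_smul, Real.norm_of_nonneg hδ.le, one_mul, Real.mul_rpow hδ.le (norm_nonneg _),
    ← mul_div_assoc, ← mul_assoc, ← Real.rpow_add hδ]
  norm_num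

lemma integrable_maj {δ : ℝ} (hδ : 0 < δ) : Integrable (maj δ) := by
  have := (integrable_maj_one.comp_smul hδ.ne').const_mul (δ ^ (3/2 : ℝ))
  exact this.congr (Eventually.of_forall fun z => (maj_eq hδ z).symm)

lemma integral_maj {δ : ℝ} (hδ : 0 < δ) :
    ∫ z, maj δ z = δ ^ (-(1/2) : ℝ) * ∫ z, maj 1 z := by
  simp_rw [maj_eq hδ]
  rw [integral_const_mul, Measure.integral_comp_smul, Complex.finrank_real_complex, smul_eq_mul,
    ← mul_assoc, abs_of_nonneg (by positivity), ← Real.rpow_natCast, ← Real.rpow_neg hδ.le,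
    ← Real.rpow_add hδ]
  norm_num

/-- Sum of the majorant over a separated set: compare each value with its mean over a disc. -/
lemma exists_sum_maj_le : ∃ C : ℝ, 0 < C ∧ ∀ (κ : Type) (ξ : κ → ℂ) (m δ : ℝ) (s : Finset κ),
    0 < m → 0 < δ → (∀ k ∈ s, m ≤ ‖ξ k‖) → (∀ k ∈ s, ∀ l ∈ s, k ≠ l → m ≤ ‖ξ k - ξ l‖) →
    ∑ k ∈ s, maj δ (ξ k) ≤ C * δ ^ (-(1/2) : ℝ) / m ^ 2 := by
  refine ⟨128 / Real.pi * (1 + ∫ z, maj 1 z), ?_, ?_⟩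
  · have : 0 ≤ ∫ z, maj 1 z := integral_nonneg fun z => maj_nonneg one_pos z
    positivity
  intro κ ξ m δ s hm hδ hfar hsep
  have h1 := sum_ball_integral_le (integrable_maj hδ) (maj_nonneg hδ) s hsep
  rw [integral_maj hδ] at h1
  have h2 : ∀ k ∈ s, Real.pi * m ^ 2 / 128 * maj δ (ξ k) ≤
      ∫ z in Metric.ball (ξ k) (m / 2), maj δ z := by
    intro k hk
    have : ∫ z in Metric.ball (ξ k) (m / 2), maj δ (ξ k) / 32 ≤
        ∫ z in Metric.ball (ξ k) (m / 2), maj δ z := by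
      refine setIntegral_mono_on ?_ (integrable_maj hδ).integrableOn measurableSet_ball ?_
      · exact integrableOn_const (measure_ball_lt_top.ne)
      · intro z hz
        rw [Metric.mem_ball, dist_eq_norm] at hz
        have hk1 := hfar k hk
        have hz1 : ‖z‖ ≤ 4 * ‖ξ k‖ := by
          have := norm_le_norm_add_norm_sub' z (ξ k)
          linarith
        have hz0 : 0 < ‖z‖ := by
          have := norm_le_norm_add_norm_sub' (ξ k) z
          rw [norm_sub_rev] at this
          linarith
        have hξ0 : 0 < ‖ξ k‖ := by linarith
        unfold maj
        have e1 : ‖ξ k‖ ^ (-(3/2) : ℝ) / 8 ≤ ‖z‖ ^ (-(3/2) : ℝ) := by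
          have : (4 * ‖ξ k‖) ^ (-(3/2) : ℝ) ≤ ‖z‖ ^ (-(3/2) : ℝ) :=
            Real.rpow_le_rpow_of_nonpos hz0 hz1 (by norm_num)
          refine le_trans (le_of_eq ?_) this
          rw [Real.mul_rpow (by norm_num) hξ0.le]
          have : (4:ℝ) ^ (-(3/2) : ℝ) = 1 / 8 := by
            rw [show (4:ℝ) = 2 ^ (2:ℝ) by norm_num, ← Real.rpow_mul (by norm_num)]
            norm_num [Real.rpow_neg]
          rw [this]; ring
        have e2 : 1 + δ * ‖z‖ ≤ 4 * (1 + δ * ‖ξ k‖) := by nlinarith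
        calc ‖ξ k‖ ^ (-(3/2) : ℝ) / (1 + δ * ‖ξ k‖) / 32
            = ‖ξ k‖ ^ (-(3/2) : ℝ) / 8 / (4 * (1 + δ * ‖ξ k‖)) := by field_simp; norm_num
          _ ≤ ‖z‖ ^ (-(3/2) : ℝ) / (1 + δ * ‖z‖) := by gcongr
    refine le_trans (le_of_eq ?_) this
    rw [integral_ball_const _ (by positivity)]
    ring
  have h3 : Real.pi * m ^ 2 / 128 * ∑ k ∈ s, maj δ (ξ k) ≤
      δ ^ (-(1/2) : ℝ) * ∫ z, maj 1 z := by
    rw [Finset.mul_sum]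
    exact (Finset.sum_le_sum h2).trans h1
  have h4 : 0 ≤ δ ^ (-(1/2) : ℝ) := by positivity
  rw [le_div_iff₀ (by positivity)]
  have : (∑ k ∈ s, maj δ (ξ k)) * m ^ 2 =
      128 / Real.pi * (Real.pi * m ^ 2 / 128 * ∑ k ∈ s, maj δ (ξ k)) := by
    have := Real.pi_pos
    field_simp
  rw [this, mul_assoc]
  have h5 : δ ^ (-(1/2) : ℝ) * ∫ z, maj 1 z ≤ (1 + ∫ z, maj 1 z) * δ ^ (-(1/2) : ℝ) := by
    nlinarith
  exact mul_le_mul_of_nonneg_left (h3.trans h5) (by have := Real.pi_pos; positivity)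

/-- Number of points of a separated set in a disc. -/
lemma card_le_of_separated {κ : Type*} (ξ : κ → ℂ) {m X : ℝ} (hm : 0 < m) (hX : 0 ≤ X)
    (s : Finset κ) (hbd : ∀ k ∈ s, ‖ξ k‖ ≤ X)
    (hsep : ∀ k ∈ s, ∀ l ∈ s, k ≠ l → m ≤ ‖ξ k - ξ l‖) :
    (s.card : ℝ) ≤ (1 + 2 * X / m) ^ 2 := by
  set g : ℂ → ℝ := (Metric.ball (0:ℂ) (X + m / 2)).indicator 1 with hg
  have hgi : Integrable g := by
    rw [hg, integrable_indicator_iff measurableSet_ball]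
    exact integrableOn_const (measure_ball_lt_top.ne)
  have hgI : ∫ z, g z = Real.pi * (X + m / 2) ^ 2 := by
    rw [hg, integral_indicator measurableSet_ball]
    have := integral_ball_const (0:ℂ) (r := X + m / 2) (by positivity) 1
    simpa using this
  have h1 := sum_ball_integral_le (m := m) hgi
    (fun z => by rw [hg]; exact indicator_nonneg (fun _ _ => zero_le_one) z) s hsep
  have h2 : ∀ k ∈ s, ∫ z in Metric.ball (ξ k) (m / 2), g z = Real.pi * (m / 2) ^ 2 := by
    intro k hk
    rw [setIntegral_congr_fun (g := fun _ => (1:ℝ)) measurableSet_ball,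
      integral_ball_const _ (by positivity), mul_one]
    intro z hz
    rw [Metric.mem_ball, dist_eq_norm] at hz
    simp only [hg]
    rw [indicator_of_mem]
    · rfl
    · rw [mem_ball_zero_iff]
      have := norm_le_norm_add_norm_sub' z (ξ k)
      have := hbd k hk
      linarith
  rw [Finset.sum_congr rfl h2, Finset.sum_const, nsmul_eq_mul, hgI] at h1
  have h3 : (1 + 2 * X / m) ^ 2 = (Real.pi * (X + m / 2) ^ 2) / (Real.pi * (m / 2) ^ 2) := by
    have := Real.pi_pos
    field_simp
    ring
  rw [h3, le_div_iff₀ (by positivity)]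
  exact h1

end CircleProblem
end

/-! ### Lattice points in residue classes -/

section
open MeasureTheory Set Filter Topology NumberField
open scoped FourierTransform RealInnerProductSpace nonZeroDivisors
namespace CircleProblem

variable {K : Type*} [Field K] [NumberField K]

section
variable (ι : K →+* ℂ) (hdeg : Module.finrank ℚ K = 2)
  (himag : ∀ v : NumberField.InfinitePlace K, v.IsComplex)
include hdeg himag

/-- A set of integers in the disc of radius `X` whose differences lie in `I` is `√N(I)`-separated. -/
lemma card_emb_le {I : Ideal (𝓞 K)} (hI : I ≠ 0) {X : ℝ} (hX : 0 ≤ X) (s : Finset (𝓞 K))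
    (hs : ∀ x ∈ s, ∀ y ∈ s, x - y ∈ I) (hX' : ∀ x ∈ s, ‖emb ι x‖ ≤ X) :
    (s.card : ℝ) ≤ (1 + 2 * X / √(Ideal.absNorm I)) ^ 2 := by
  have hN : 0 < (Ideal.absNorm I : ℝ) := by
    have : Ideal.absNorm I ≠ 0 := by rwa [Ne, Ideal.absNorm_eq_zero_iff]
    positivity
  refine card_le_of_separated (emb ι) (by positivity) hX s hX' ?_
  intro k hk l hl hkl
  rw [← map_sub, Real.sqrt_le_left (norm_nonneg _), ← Complex.normSq_eq_norm_sq]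
  exact le_normSq_emb ι hdeg himag (hs k hk l hl) (sub_ne_zero.mpr hkl)

lemma finite_emb_le (X : ℝ) : {x : 𝓞 K | ‖emb ι x‖ ≤ X}.Finite := by
  by_contra hinf
  rcases lt_or_ge X 0 with hX | hX
  · apply hinf
    convert Set.finite_empty
    ext x
    have := norm_nonneg (emb ι x)
    simp only [Set.mem_ofPred_eq, Set.mem_empty_iff_false, iff_false, not_le]
    linarith
  obtain ⟨n, hn⟩ := exists_nat_gt ((1 + 2 * X / √(Ideal.absNorm (⊤ : Ideal (𝓞 K)))) ^ 2)
  obtain ⟨t, ht, hc⟩ := Set.Infinite.exists_subset_card_eq hinf n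
  have := card_emb_le ι hdeg himag (I := ⊤) (by simp) hX t (fun _ _ _ _ => Submodule.mem_top)
    (fun x hx => ht hx)
  rw [hc] at this
  linarith

/-- Poisson summation for an ideal, with the frequency sum controlled by the majorant. -/
lemma exists_ideal_poisson : ∃ C : ℝ, 0 < C ∧ ∀ I : Ideal (𝓞 K), I ≠ 0 →
    ∃ ξ : (Fin 2 → ℤ) → ℂ, ξ 0 = 0 ∧ (∀ k ≠ 0, ξ k ≠ 0) ∧
      (∀ k, ∀ x ∈ I, ∃ n : ℤ, ⟪emb ι x, ξ k⟫ = n) ∧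
      (∀ J : Ideal (𝓞 K), J ≠ 0 → ∀ δ, 0 < δ → ∀ s : Finset (Fin 2 → ℤ), 0 ∉ s →
        (∀ k ∈ s, ∀ x ∈ J, ∃ n : ℤ, ⟪emb ι x, ξ k⟫ = n) →
        ∑ k ∈ s, maj δ (ξ k) ≤ C * δ ^ (-(1/2) : ℝ) * Ideal.absNorm J) ∧
      ∀ (w : ℂ → ℂ) (M : ℝ), Continuous w → (∀ z, M < ‖z‖ → w z = 0) →
        (Summable fun k => 𝓕 w (ξ k)) → ∀ z₀ : ℂ,
        ∑' x : I, w (z₀ + emb ι x) =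
          ((2 / (Ideal.absNorm I * √|(discr K : ℝ)|) : ℝ) : ℂ) * ∑' k, 𝓕 w (ξ k) *
            Complex.exp (2 * Real.pi * Complex.I * ((⟪z₀, ξ k⟫ : ℝ) : ℂ)) := by
  obtain ⟨C, hC, hmaj⟩ := exists_sum_maj_le
  obtain ⟨c, hc, hdual⟩ := exists_dual_bound ι hdeg himag
  refine ⟨C / c ^ 2, by positivity, ?_⟩
  intro I hI
  have hN : 0 < (Ideal.absNorm I : ℝ) := by
    have : Ideal.absNorm I ≠ 0 := by rwa [Ne, Ideal.absNorm_eq_zero_iff]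
    positivity
  obtain ⟨bI, hbI⟩ := exists_ideal_basis ι hdeg himag hI
  set β : Fin 2 → ℂ := fun i => emb ι (bI i) with hβdef
  have hD := discr_abs_pos K
  have hβ : area β ≠ 0 := by
    intro h
    rw [h, abs_zero] at hbI
    have : 0 < (Ideal.absNorm I : ℝ) * (√|(discr K : ℝ)| / 2) := by positivity
    linarith
  have hrep : ∀ n : Fin 2 → ℤ, emb ι ((bI.equivFun.symm n : I) : 𝓞 K) =
      comb β (fun i => (n i : ℝ)) := by
    intro n
    rw [Module.Basis.equivFun_symm_apply, Fin.sum_univ_two]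
    simp [comb, hβdef]
  have hpair : ∀ k, ∀ x ∈ I, ∃ n : ℤ, ⟪emb ι x, dualVec β k⟫ = n := by
    intro k x hx
    obtain ⟨n, hn⟩ := bI.equivFun.symm.surjective ⟨x, hx⟩
    have h := hrep n
    rw [hn] at h
    refine ⟨k 0 * n 0 + k 1 * n 1, ?_⟩
    have h' : emb ι x = comb β (fun i => (n i : ℝ)) := h
    rw [h', inner_comb_dualVec hβ]
    push_cast
    ring
  have hne : ∀ k ≠ 0, dualVec β k ≠ 0 := by
    intro k hk h
    rw [← dualVec_zero β] at h
    exact hk (dualVec_injective hβ h)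
  refine ⟨dualVec β, dualVec_zero β, hne, hpair, ?_, ?_⟩
  · intro J hJ δ hδ s hs hpair'
    have hN : 0 < (Ideal.absNorm J : ℝ) := by
      have : Ideal.absNorm J ≠ 0 := by rwa [Ne, Ideal.absNorm_eq_zero_iff]
      positivity
    have := hmaj _ (dualVec β) (c / √(Ideal.absNorm J)) δ s (by positivity) hδ ?_ ?_
    · refine this.trans (le_of_eq ?_)
      rw [div_pow, Real.sq_sqrt hN.le]
      field_simp
    · intro k hk
      exact hdual J hJ _ (hne k (by rintro rfl; exact hs hk)) (hpair' k hk)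
    · intro k hk l hl hkl
      refine hdual J hJ _ (sub_ne_zero.mpr fun h => hkl (dualVec_injective hβ h)) ?_
      intro x hx
      obtain ⟨n, hn⟩ := hpair' k hk x hx
      obtain ⟨m, hm⟩ := hpair' l hl x hx
      refine ⟨n - m, ?_⟩
      rw [inner_sub_right, hn, hm]
      push_cast; ring
  · intro w M hw hM hs z₀
    have := poisson_lattice hβ hw hM hs z₀
    rw [← bI.equivFun.symm.toEquiv.tsum_eq]
    simp only [LinearEquiv.coe_toEquiv, hrep]
    rw [this, hbI]
    congr 2
    field_simp

/-- The smoothed count of points in finitely many residue classes `z ρ + I`. Every nonzero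
frequency `ξ` dual to `I` is assumed to be dual to some larger ideal `J` of a finite family, with the
exponential sum over `ρ` at `ξ` bounded by `g J`; the error is then governed by `∑ g(J) N(J)`. -/
lemma exists_smooth_count : ∃ C : ℝ, 0 < C ∧ ∀ I : Ideal (𝓞 K), I ≠ 0 →
    ∀ (P : Type*) [Fintype P] (z : P → 𝓞 K) (Js : Finset (Ideal (𝓞 K)))
      (g : Ideal (𝓞 K) → ℝ) (G : ℝ), (∀ J ∈ Js, J ≠ 0 ∧ 0 ≤ g J) →
    (∀ ξ : ℂ, ξ ≠ 0 → (∀ x ∈ I, ∃ n : ℤ, ⟪emb ι x, ξ⟫ = n) → ∃ J ∈ Js,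
      (∀ x ∈ J, ∃ n : ℤ, ⟪emb ι x, ξ⟫ = n) ∧
      ‖∑ ρ, Complex.exp (2 * Real.pi * Complex.I * ((⟪emb ι (z ρ), ξ⟫ : ℝ) : ℂ))‖ ≤ g J) →
    ∑ J ∈ Js, g J * Ideal.absNorm J ≤ G * Ideal.absNorm I →
    ∀ R δ : ℝ, 0 ≤ R → 0 < δ → ∃ W : ℂ → ℝ, (∀ z, 0 ≤ W z) ∧ (∀ z, W z ≤ 1) ∧
      (∀ z, R + δ < ‖z‖ → W z = 0) ∧ (∀ z, ‖z‖ + δ ≤ R → W z = 1) ∧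
      |∑ ρ, ∑' x : I, W (emb ι (z ρ + x)) -
        2 * Real.pi / √|(discr K : ℝ)| * (Fintype.card P / Ideal.absNorm I) * R ^ 2| ≤
        C * G * (√R * δ ^ (-(1/2) : ℝ)) := by
  obtain ⟨C₁, hC₁, hW⟩ := exists_smooth_disc
  obtain ⟨C₂, hC₂, hpo⟩ := exists_ideal_poisson ι hdeg himag
  have hD := discr_abs_pos K
  refine ⟨2 / √|(discr K : ℝ)| * (2 * C₁ * C₂), by positivity, ?_⟩
  intro I hI P _ z Js g G hg hbound hGs R δ hR hδ
  have hN : 0 < (Ideal.absNorm I : ℝ) := by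
    have : Ideal.absNorm I ≠ 0 := by rwa [Ne, Ideal.absNorm_eq_zero_iff]
    positivity
  have hG : 0 ≤ G := by
    have : 0 ≤ ∑ J ∈ Js, g J * Ideal.absNorm J := Finset.sum_nonneg fun J hJ =>
      mul_nonneg (hg J hJ).2 (Nat.cast_nonneg _)
    exact nonneg_of_mul_nonneg_left (this.trans hGs) hN
  obtain ⟨W, hWc, hW0, hW1, hWz, hWo, hF0, hF⟩ := hW R δ hR hδ
  refine ⟨W, hW0, hW1, hWz, hWo, ?_⟩
  obtain ⟨ξ, hξ0, hξne, hpair, hsum, hpois⟩ := hpo I hI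
  set w : ℂ → ℂ := fun z => (W z : ℂ) with hw
  have hFm : ∀ k ≠ 0, ‖𝓕 w (ξ k)‖ ≤ 2 * C₁ * √R * maj δ (ξ k) := by
    intro k hk
    have hk' := hξne k hk
    have hpos : 0 < ‖ξ k‖ := norm_pos_iff.mpr hk'
    obtain ⟨h1, h2⟩ := hF _ hk'
    unfold maj
    rw [← mul_div_assoc, le_div_iff₀ (by positivity)]
    have h3 : δ * ‖ξ k‖ * ‖𝓕 w (ξ k)‖ ≤ C₁ * √R * ‖ξ k‖ ^ (-(3/2) : ℝ) := by
      calc δ * ‖ξ k‖ * ‖𝓕 w (ξ k)‖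
          ≤ δ * ‖ξ k‖ * (C₁ * √R * ‖ξ k‖ ^ (-(5/2) : ℝ) / δ) := by gcongr
        _ = C₁ * √R * (‖ξ k‖ ^ (-(5/2) : ℝ) * ‖ξ k‖ ^ (1:ℝ)) := by
            rw [Real.rpow_one]; field_simp
        _ = C₁ * √R * ‖ξ k‖ ^ (-(3/2) : ℝ) := by
            rw [← Real.rpow_add hpos]; norm_num
    have h1' : ‖𝓕 w (ξ k)‖ ≤ C₁ * √R * ‖ξ k‖ ^ (-(3/2) : ℝ) := h1
    linarith
  have hfin : ∀ s : Finset (Fin 2 → ℤ), 0 ∉ s → ∑ k ∈ s, ‖𝓕 w (ξ k)‖ ≤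
      2 * C₁ * √R * (C₂ * δ ^ (-(1/2) : ℝ) * Ideal.absNorm I) := by
    intro s hs
    refine (Finset.sum_le_sum fun k hk => hFm k (by rintro rfl; exact hs hk)).trans ?_
    rw [← Finset.mul_sum]
    gcongr
    exact hsum I hI δ hδ s hs fun k _ => hpair k
  have hsN : Summable fun k => ‖𝓕 w (ξ k)‖ := by
    refine summable_of_sum_le (c := ‖𝓕 w (ξ 0)‖ +
      2 * C₁ * √R * (C₂ * δ ^ (-(1/2) : ℝ) * Ideal.absNorm I)) (fun _ => norm_nonneg _) ?_
    intro s
    have h0 := Finset.add_sum_erase (insert 0 s) (fun k => ‖𝓕 w (ξ k)‖) (Finset.mem_insert_self 0 s)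
    have h1 := hfin ((insert 0 s).erase 0) (Finset.notMem_erase 0 _)
    have h2 : ∑ k ∈ s, ‖𝓕 w (ξ k)‖ ≤ ∑ k ∈ insert 0 s, ‖𝓕 w (ξ k)‖ :=
      Finset.sum_le_sum_of_subset_of_nonneg (Finset.subset_insert 0 s) fun _ _ _ => norm_nonneg _
    linarith
  set e : P → (Fin 2 → ℤ) → ℂ := fun ρ k =>
    Complex.exp (2 * Real.pi * Complex.I * ((⟪emb ι (z ρ), ξ k⟫ : ℝ) : ℂ)) with he
  have hen : ∀ ρ k, ‖e ρ k‖ = 1 := by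
    intro ρ k
    rw [he]
    have : 2 * Real.pi * Complex.I * ((⟪emb ι (z ρ), ξ k⟫ : ℝ) : ℂ) =
        ((2 * Real.pi * ⟪emb ι (z ρ), ξ k⟫ : ℝ) : ℂ) * Complex.I := by
      push_cast; ring
    simp only [this]
    exact Complex.norm_exp_ofReal_mul_I _
  have hFe : ∀ ρ, Summable fun k => 𝓕 w (ξ k) * e ρ k := by
    intro ρ
    refine Summable.of_norm (hsN.congr fun k => ?_)
    rw [norm_mul, hen, mul_one]
  have hreal : ((∑ ρ, ∑' x : I, W (emb ι (z ρ + x)) : ℝ) : ℂ) =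
      ((2 / (Ideal.absNorm I * √|(discr K : ℝ)|) : ℝ) : ℂ) *
        ∑' k, 𝓕 w (ξ k) * ∑ ρ, e ρ k := by
    push_cast [Complex.ofReal_tsum]
    have h1 : ∀ ρ, ∑' x : I, (W (emb ι (z ρ + x)) : ℂ) =
        ((2 / (Ideal.absNorm I * √|(discr K : ℝ)|) : ℝ) : ℂ) * ∑' k, 𝓕 w (ξ k) * e ρ k := by
      intro ρ
      have := hpois w (R + δ) (by rw [hw]; fun_prop)
        (fun z hz => by rw [hw]; simp only [hWz z hz, Complex.ofReal_zero])
        (Summable.of_norm hsN) (emb ι (z ρ))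
      rw [← this]
      simp only [hw, map_add]
    simp_rw [h1]
    rw [← Finset.mul_sum, ← Summable.tsum_finsetSum fun ρ _ => hFe ρ]
    simp_rw [Finset.mul_sum]
    push_cast
    rfl
  have hsumE : Summable fun k => 𝓕 w (ξ k) * ∑ ρ, e ρ k := by
    simp_rw [Finset.mul_sum]
    exact summable_sum fun ρ _ => hFe ρ
  rw [hsumE.tsum_eq_add_tsum_ite 0] at hreal
  have he0 : ∑ ρ, e ρ 0 = (Fintype.card P : ℂ) := by
    simp [he, hξ0]
  rw [he0, hξ0, hF0, mul_add] at hreal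
  set Tl := ∑' k, (if k = 0 then 0 else 𝓕 w (ξ k) * ∑ ρ, e ρ k) with hTl
  have hTlb : ‖Tl‖ ≤ 2 * C₁ * √R * (C₂ * δ ^ (-(1/2) : ℝ) * Ideal.absNorm I) * G := by
    have hb : ∀ s : Finset (Fin 2 → ℤ), ∑ k ∈ s, ‖(if k = 0 then 0 else 𝓕 w (ξ k) * ∑ ρ, e ρ k)‖
        ≤ 2 * C₁ * √R * (C₂ * δ ^ (-(1/2) : ℝ) * Ideal.absNorm I) * G := by
      intro s
      rw [← Finset.sum_erase s (a := 0) (by simp)]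
      classical
      -- each frequency is charged to one ideal `J` of the family
      set D : Ideal (𝓞 K) → Finset (Fin 2 → ℤ) := fun J =>
        (s.erase 0).filter fun k => ∀ x ∈ J, ∃ n : ℤ, ⟪emb ι x, ξ k⟫ = n with hD'
      calc ∑ k ∈ s.erase 0, ‖(if k = 0 then 0 else 𝓕 w (ξ k) * ∑ ρ, e ρ k)‖
          ≤ ∑ k ∈ s.erase 0, ∑ J ∈ Js, if k ∈ D J then 2 * C₁ * √R * maj δ (ξ k) * g J else 0 := by
            refine Finset.sum_le_sum fun k hk => ?_
            have hk0 := Finset.ne_of_mem_erase hk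
            obtain ⟨J, hJ, hJd, hJb⟩ := hbound _ (hξne k hk0) (hpair k)
            have hmem : k ∈ D J := Finset.mem_filter.mpr ⟨hk, hJd⟩
            have hm0 := maj_nonneg hδ (ξ k)
            refine le_trans ?_ (Finset.single_le_sum (fun J' hJ' => ?_) hJ)
            · rw [if_neg hk0, norm_mul, if_pos hmem]
              gcongr
              · exact hFm k hk0
            · have := (hg J' hJ').2
              split_ifs <;> positivity
        _ = ∑ J ∈ Js, 2 * C₁ * √R * (∑ k ∈ D J, maj δ (ξ k)) * g J := by
            rw [Finset.sum_comm]
            refine Finset.sum_congr rfl fun J _ => ?_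
            rw [← Finset.sum_filter, Finset.mul_sum, Finset.sum_mul]
            refine Finset.sum_congr ?_ fun _ _ => rfl
            ext k
            simp only [hD', Finset.mem_filter]
            tauto
        _ ≤ ∑ J ∈ Js, 2 * C₁ * √R * (C₂ * δ ^ (-(1/2) : ℝ) * Ideal.absNorm J) * g J := by
            refine Finset.sum_le_sum fun J hJ => ?_
            have := (hg J hJ).2
            gcongr
            refine hsum J (hg J hJ).1 δ hδ _ ?_ ?_
            · simp [hD']
            · intro k hk
              exact (Finset.mem_filter.mp hk).2
        _ = 2 * C₁ * √R * (C₂ * δ ^ (-(1/2) : ℝ)) * ∑ J ∈ Js, g J * Ideal.absNorm J := by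
            rw [Finset.mul_sum]
            refine Finset.sum_congr rfl fun J _ => ?_
            ring
        _ ≤ 2 * C₁ * √R * (C₂ * δ ^ (-(1/2) : ℝ)) * (G * Ideal.absNorm I) := by gcongr
        _ = 2 * C₁ * √R * (C₂ * δ ^ (-(1/2) : ℝ) * Ideal.absNorm I) * G := by ring
    have hs' := summable_of_sum_le (fun _ => norm_nonneg _) hb
    exact (norm_tsum_le_tsum_norm hs').trans (Real.tsum_le_of_sum_le (fun _ => norm_nonneg _) hb)
  have hdiff : ((∑ ρ, ∑' x : I, W (emb ι (z ρ + x)) -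
        2 * Real.pi / √|(discr K : ℝ)| * (Fintype.card P / Ideal.absNorm I) * R ^ 2 : ℝ) : ℂ) =
      ((2 / (Ideal.absNorm I * √|(discr K : ℝ)|) : ℝ) : ℂ) * Tl := by
    rw [Complex.ofReal_sub, hreal]
    have : ((2 * Real.pi / √|(discr K : ℝ)| * (Fintype.card P / Ideal.absNorm I) * R ^ 2 : ℝ) : ℂ)
        = ((2 / (Ideal.absNorm I * √|(discr K : ℝ)|) : ℝ) : ℂ) *
          (((Real.pi * R ^ 2 : ℝ) : ℂ) * (Fintype.card P : ℂ)) := by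
      rw [← Complex.ofReal_natCast (Fintype.card P), ← Complex.ofReal_mul, ← Complex.ofReal_mul]
      congr 1
      field_simp
    rw [this]
    ring
  rw [← Real.norm_eq_abs, ← Complex.norm_real, hdiff, norm_mul, Complex.norm_real, Real.norm_of_nonneg (by positivity)]
  calc 2 / (Ideal.absNorm I * √|(discr K : ℝ)|) * ‖Tl‖
      ≤ 2 / (Ideal.absNorm I * √|(discr K : ℝ)|) *
        (2 * C₁ * √R * (C₂ * δ ^ (-(1/2) : ℝ) * Ideal.absNorm I) * G) := by gcongr
    _ = 2 / √|(discr K : ℝ)| * (2 * C₁ * C₂) * G * (√R * δ ^ (-(1/2) : ℝ)) := by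
      field_simp

/-- The sharp count of points in finitely many residue classes, by sandwiching. -/
lemma exists_sharp_count : ∃ C : ℝ, 0 < C ∧ ∀ I : Ideal (𝓞 K), I ≠ 0 →
    ∀ (P : Type*) [Fintype P] (z : P → 𝓞 K) (Js : Finset (Ideal (𝓞 K)))
      (g : Ideal (𝓞 K) → ℝ) (G : ℝ), (∀ J ∈ Js, J ≠ 0 ∧ 0 ≤ g J) →
    (∀ ξ : ℂ, ξ ≠ 0 → (∀ x ∈ I, ∃ n : ℤ, ⟪emb ι x, ξ⟫ = n) → ∃ J ∈ Js,
      (∀ x ∈ J, ∃ n : ℤ, ⟪emb ι x, ξ⟫ = n) ∧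
      ‖∑ ρ, Complex.exp (2 * Real.pi * Complex.I * ((⟪emb ι (z ρ), ξ⟫ : ℝ) : ℂ))‖ ≤ g J) →
    ∑ J ∈ Js, g J * Ideal.absNorm J ≤ G * Ideal.absNorm I →
    ∀ R δ : ℝ, 0 < δ → δ ≤ R →
      |∑ ρ, ({x : 𝓞 K | x - z ρ ∈ I ∧ ‖emb ι x‖ ≤ R}.ncard : ℝ) -
        2 * Real.pi / √|(discr K : ℝ)| * (Fintype.card P / Ideal.absNorm I) * R ^ 2| ≤
        C * ((Fintype.card P / Ideal.absNorm I) * (R * δ) + G * √(R / δ)) := by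
  obtain ⟨C, hC, hcount⟩ := exists_smooth_count ι hdeg himag
  have hD := discr_abs_pos K
  refine ⟨6 * Real.pi / √|(discr K : ℝ)| + 2 * C, by positivity, ?_⟩
  intro I hI P _ z Js g G hg hbound hGs R δ hδ hR
  have hN : 0 < (Ideal.absNorm I : ℝ) := by
    have : Ideal.absNorm I ≠ 0 := by rwa [Ne, Ideal.absNorm_eq_zero_iff]
    positivity
  have hG : 0 ≤ G := by
    have : 0 ≤ ∑ J ∈ Js, g J * Ideal.absNorm J := Finset.sum_nonneg fun J hJ =>
      mul_nonneg (hg J hJ).2 (Nat.cast_nonneg _)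
    exact nonneg_of_mul_nonneg_left (this.trans hGs) hN
  set A := 2 * Real.pi / √|(discr K : ℝ)| * (Fintype.card P / Ideal.absNorm I : ℝ) with hA
  have hA0 : 0 ≤ A := by positivity
  -- the residue class inside the disc as a finite subset of the ideal
  have hTfin : ∀ ρ X, {x : I | ‖emb ι (z ρ + x)‖ ≤ X}.Finite := by
    intro ρ X
    refine Set.Finite.of_injOn (f := fun x : I => z ρ + x) (t := {x : 𝓞 K | ‖emb ι x‖ ≤ X})
      (fun x hx => hx) ?_ (finite_emb_le ι hdeg himag X)
    intro x _ y _ h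
    exact Subtype.ext (add_left_cancel h)
  have hTcard : ∀ ρ, {x : 𝓞 K | x - z ρ ∈ I ∧ ‖emb ι x‖ ≤ R}.ncard =
      (hTfin ρ R).toFinset.card := by
    intro ρ
    rw [← Set.ncard_eq_toFinset_card _ (hTfin ρ R), ← Set.ncard_image_of_injective (f := fun x : I => z ρ + x)]
    · congr 1
      ext y
      simp only [Set.mem_ofPred_eq, Set.mem_image]
      constructor
      · rintro ⟨h1, h2⟩
        exact ⟨⟨y - z ρ, h1⟩, by simpa using h2, by simp⟩
      · rintro ⟨x, h1, rfl⟩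
        exact ⟨by simp, h1⟩
    · intro x y h
      exact Subtype.ext (add_left_cancel h)
  have hsupp : ∀ (W : ℂ → ℝ) (X : ℝ), (∀ z, X < ‖z‖ → W z = 0) → ∀ ρ,
      ∑' x : I, W (emb ι (z ρ + x)) = ∑ x ∈ (hTfin ρ X).toFinset, W (emb ι (z ρ + x)) := by
    intro W X h ρ
    refine tsum_eq_sum fun x hx => h _ ?_
    by_contra hc
    exact hx (by simpa using hc)
  have hsq : √R * δ ^ (-(1/2) : ℝ) = √(R / δ) := by
    rw [Real.rpow_neg hδ.le, ← Real.sqrt_eq_rpow, Real.sqrt_div (hδ.le.trans hR)]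
    rfl
  have hsq' : √(R + δ) * δ ^ (-(1/2) : ℝ) ≤ 2 * √(R / δ) := by
    rw [← hsq, ← mul_assoc]
    gcongr
    rw [show (2:ℝ) = √4 by rw [show (4:ℝ) = 2 ^ 2 by norm_num]; simp,
      ← Real.sqrt_mul (by norm_num)]
    apply Real.sqrt_le_sqrt
    linarith
  have hsq'' : √(R - δ) * δ ^ (-(1/2) : ℝ) ≤ √(R / δ) := by
    rw [← hsq]
    gcongr
    linarith
  have hq0 : 0 ≤ √(R / δ) := Real.sqrt_nonneg _
  have hRδ : A * (2 * R * δ + δ ^ 2) ≤ 3 * A * (R * δ) := by nlinarith [mul_le_mul_of_nonneg_left (mul_le_mul_of_nonneg_left hR hδ.le) hA0]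
  have hfinal : 3 * A * (R * δ) + C * G * (2 * √(R / δ)) ≤
      (6 * Real.pi / √|(discr K : ℝ)| + 2 * C) *
        ((Fintype.card P / Ideal.absNorm I) * (R * δ) + G * √(R / δ)) := by
    have e1 : 3 * A * (R * δ) = 6 * Real.pi / √|(discr K : ℝ)| *
        ((Fintype.card P / Ideal.absNorm I) * (R * δ)) := by rw [hA]; ring
    have e2 : 0 ≤ 6 * Real.pi / √|(discr K : ℝ)| := by positivity
    have e3 : 0 ≤ (Fintype.card P / Ideal.absNorm I : ℝ) * (R * δ) := by
      have : 0 ≤ R := hδ.le.trans hR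
      positivity
    have e4 : 0 ≤ G * √(R / δ) := by positivity
    rw [e1]
    nlinarith [mul_nonneg e2 e4, mul_nonneg hC.le e3]
  rw [abs_le]
  constructor
  · obtain ⟨W, hW0, hW1, hWz, hWo, hb⟩ := hcount I hI P z Js g G hg hbound hGs (R - δ) δ (by linarith) hδ
    have hle : ∑ ρ, ∑' x : I, W (emb ι (z ρ + x)) ≤
        ∑ ρ, ({x : 𝓞 K | x - z ρ ∈ I ∧ ‖emb ι x‖ ≤ R}.ncard : ℝ) := by
      refine Finset.sum_le_sum fun ρ _ => ?_
      rw [hTcard, hsupp W R (fun z hz => hWz z (by linarith))]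
      refine (Finset.sum_le_sum fun x _ => hW1 _).trans ?_
      simp
    rw [← hA, abs_le] at hb
    have h1 := hb.1
    have h2 : C * G * (√(R - δ) * δ ^ (-(1/2) : ℝ)) ≤ C * G * (2 * √(R / δ)) := by
      refine mul_le_mul_of_nonneg_left ?_ (by positivity)
      linarith
    have h3 : A * (R - δ) ^ 2 = A * R ^ 2 - A * (2 * R * δ + δ ^ 2) + 2 * A * δ ^ 2 := by ring
    have h4 : 0 ≤ 2 * A * δ ^ 2 := by positivity
    linarith
  · obtain ⟨W, hW0, hW1, hWz, hWo, hb⟩ := hcount I hI P z Js g G hg hbound hGs (R + δ) δ (by linarith) hδ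
    have hle : ∑ ρ, ({x : 𝓞 K | x - z ρ ∈ I ∧ ‖emb ι x‖ ≤ R}.ncard : ℝ) ≤
        ∑ ρ, ∑' x : I, W (emb ι (z ρ + x)) := by
      refine Finset.sum_le_sum fun ρ _ => ?_
      rw [hTcard, hsupp W (R + δ + δ) hWz]
      have hsub : (hTfin ρ R).toFinset ⊆ (hTfin ρ (R + δ + δ)).toFinset := by
        intro x hx
        simp only [Set.Finite.mem_toFinset, Set.mem_ofPred_eq] at hx ⊢
        linarith
      refine le_trans ?_ (Finset.sum_le_sum_of_subset_of_nonneg hsub fun _ _ _ => hW0 _)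
      have : ∀ x ∈ (hTfin ρ R).toFinset, W (emb ι (z ρ + x)) = 1 := by
        intro x hx
        simp only [Set.Finite.mem_toFinset, Set.mem_ofPred_eq] at hx
        exact hWo _ (by linarith)
      rw [Finset.sum_congr rfl this]
      simp
    rw [← hA, abs_le] at hb
    have h1 := hb.2
    have h2 : C * G * (√(R + δ) * δ ^ (-(1/2) : ℝ)) ≤ C * G * (2 * √(R / δ)) := by
      gcongr
    have h3 : A * (R + δ) ^ 2 = A * R ^ 2 + A * (2 * R * δ + δ ^ 2) := by ring
    linarith

end
end CircleProblem
end

/-! ### Weyl differencing in a finite ring -/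

section
open Finset
namespace CircleProblem

section
variable {R : Type*} [CommRing R] [Fintype R]

open scoped Classical in
theorem sum_ideal_translate (D : Ideal R) (f : R → ℂ) {x₀ : R} (hx₀ : x₀ ∈ D) :
    ∑ x with x ∈ D, f (x + x₀) = ∑ x with x ∈ D, f x := by
  refine Finset.sum_bij (fun x _ => x + x₀) ?_ ?_ ?_ ?_
  · intro x hx
    simp only [mem_filter, mem_univ, true_and] at hx ⊢
    exact D.add_mem hx hx₀
  · intro x _ y _ h
    exact add_right_cancel h
  · intro y hy
    simp only [mem_filter, mem_univ, true_and] at hy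
    refine ⟨y - x₀, ?_, by simp⟩
    simp only [mem_filter, mem_univ, true_and]
    exact D.sub_mem hy hx₀
  · intro x _; rfl

open scoped Classical in
theorem sum_ideal_addChar (ψ : AddChar R ℂ) (D : Ideal R) (a : R) :
    ∑ x with x ∈ D, ψ (a * x) =
      if ∀ x ∈ D, ψ (a * x) = 1 then ((#{x | x ∈ D} : ℕ) : ℂ) else 0 := by
  split_ifs with h
  · rw [Finset.sum_congr rfl (g := fun _ => 1)]
    · simp
    · intro x hx
      exact h x (by simpa using hx)
  · push Not at h
    obtain ⟨x₀, hx₀, hne⟩ := h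
    have := sum_ideal_translate D (fun x => ψ (a * x)) hx₀
    simp only [mul_add, AddChar.map_add_eq_mul] at this
    rw [← Finset.sum_mul] at this
    have h2 : (∑ x with x ∈ D, ψ (a * x)) * (ψ (a * x₀) - 1) = 0 := by
      rw [mul_sub, this]; ring
    rcases mul_eq_zero.mp h2 with h3 | h3
    · exact h3
    · exact absurd (sub_eq_zero.mp h3) hne

open scoped Classical in
/-- The annihilator of an ideal `D` for the pairing `(a, x) ↦ ψ (a x)` satisfies
`|D| * |D^⊥| ≤ |R| * |R^⊥|`: both sides compare with `∑_{a} ∑_{x ∈ D} ψ (a x)`. -/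
theorem card_mul_card_annihilator_le (ψ : AddChar R ℂ) (D : Ideal R) :
    #{x | x ∈ D} * #{a : R | ∀ x ∈ D, ψ (a * x) = 1} ≤
      Fintype.card R * #{a : R | ∀ x, ψ (a * x) = 1} := by
  have h1 : ∑ a : R, ∑ x with x ∈ D, ψ (a * x) =
      (((#{x | x ∈ D} * #{a : R | ∀ x ∈ D, ψ (a * x) = 1} : ℕ)) : ℂ) := by
    rw [Finset.sum_congr rfl fun a _ => sum_ideal_addChar ψ D a, ← Finset.sum_filter]
    simp [mul_comm]
  have h2 : ∑ a : R, ∑ x with x ∈ D, ψ (a * x) =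
      (((Fintype.card R * #{a : R | a ∈ D ∧ ∀ x, ψ (a * x) = 1} : ℕ)) : ℂ) := by
    rw [Finset.sum_comm]
    have : ∀ x : R, ∑ a, ψ (a * x) = if ∀ y, ψ (x * y) = 1 then (Fintype.card R : ℂ) else 0 := by
      intro x
      have := sum_ideal_addChar ψ ⊤ x
      simp only [Submodule.mem_top, forall_true_left, Finset.filter_true, Finset.card_univ] at this
      rw [← this]
      exact Finset.sum_congr rfl fun a _ => by rw [mul_comm]
    rw [Finset.sum_congr rfl fun a _ => this a, ← Finset.sum_filter, Finset.filter_filter]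
    simp [mul_comm]
  rw [h1] at h2
  have h3 : #{x | x ∈ D} * #{a : R | ∀ x ∈ D, ψ (a * x) = 1} =
      Fintype.card R * #{a : R | a ∈ D ∧ ∀ x, ψ (a * x) = 1} := by exact_mod_cast h2
  rw [h3]
  gcongr with a
  exact fun h => h.2

open scoped Classical in
/-- Weyl differencing for the quadratic exponential sum over an ideal of a finite ring. -/
theorem norm_sum_ideal_sq_le (ψ : AddChar R ℂ) (D : Ideal R) :
    ‖∑ x with x ∈ D, ψ (x ^ 2)‖ ^ 2 ≤
      #{y : R | 2 * y = 0} * (Fintype.card R * #{a : R | ∀ x, ψ (a * x) = 1} : ℝ) := by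
  set S := ∑ x with x ∈ D, ψ (x ^ 2) with hS
  have h1 : S * (starRingEnd ℂ) S =
      ∑ h with h ∈ D, ψ (h ^ 2) * ∑ y with y ∈ D, ψ (2 * h * y) := by
    rw [hS, map_sum, Finset.mul_sum]
    calc ∑ y with y ∈ D, (∑ x with x ∈ D, ψ (x ^ 2)) * (starRingEnd ℂ) (ψ (y ^ 2))
        = ∑ y with y ∈ D, ∑ h with h ∈ D, ψ (h ^ 2) * ψ (2 * h * y) := by
          refine Finset.sum_congr rfl fun y hy => ?_
          rw [← sum_ideal_translate D (fun x => ψ (x ^ 2)) (x₀ := y) (by simpa using hy),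
            Finset.sum_mul]
          refine Finset.sum_congr rfl fun h _ => ?_
          rw [← AddChar.map_neg_eq_conj, ← AddChar.map_add_eq_mul, ← AddChar.map_add_eq_mul]
          congr 1; ring
      _ = _ := by
          rw [Finset.sum_comm]
          exact Finset.sum_congr rfl fun h _ => by rw [Finset.mul_sum]
  have h2 : ‖S‖ ^ 2 = ‖S * (starRingEnd ℂ) S‖ := by
    rw [norm_mul, RCLike.norm_conj, sq]
  have h3 : ‖S‖ ^ 2 ≤ ((#{h : R | ∀ x ∈ D, ψ (2 * h * x) = 1} * #{x | x ∈ D} : ℕ) : ℝ) := by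
    rw [h2, h1]
    refine (norm_sum_le _ _).trans ?_
    calc ∑ h with h ∈ D, ‖ψ (h ^ 2) * ∑ y with y ∈ D, ψ (2 * h * y)‖
        ≤ ∑ h : R, if ∀ x ∈ D, ψ (2 * h * x) = 1 then (#{x | x ∈ D} : ℝ) else 0 := by
          refine (Finset.sum_le_sum fun h _ => ?_).trans
            (Finset.sum_le_sum_of_subset_of_nonneg (Finset.filter_subset _ _) ?_)
          · rw [norm_mul, AddChar.norm_apply, one_mul, sum_ideal_addChar]
            split_ifs <;> simp
          · intro i _ _
            split_ifs <;> positivity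
      _ = _ := by
          rw [← Finset.sum_filter]; simp
  have h4 : #{h : R | ∀ x ∈ D, ψ (2 * h * x) = 1} ≤
      #{y : R | 2 * y = 0} * #{a : R | ∀ x ∈ D, ψ (a * x) = 1} := by
    refine Finset.card_le_mul_card_image_of_maps_to (f := fun h => 2 * h) (by simp) _ ?_
    intro b _
    by_cases hb : ({a ∈ ({h : R | ∀ x ∈ D, ψ (2 * h * x) = 1} : Finset R) | 2 * a = b}).Nonempty
    · obtain ⟨a₀, ha₀⟩ := hb
      refine Finset.card_le_card_of_injOn (fun a => a - a₀) ?_ ?_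
      · intro a ha
        simp only [coe_filter, mem_filter, mem_univ, true_and, Set.mem_ofPred_eq] at ha ha₀ ⊢
        rw [mul_sub, ha.2, ha₀.2, sub_self]
      · intro a _ b _ h
        exact sub_left_injective h
    · rw [Finset.not_nonempty_iff_eq_empty.mp hb]; simp
  have h5 := card_mul_card_annihilator_le ψ D
  refine h3.trans ?_
  have h6 : #{h : R | ∀ x ∈ D, ψ (2 * h * x) = 1} * #{x | x ∈ D} ≤
      #{y : R | 2 * y = 0} * (Fintype.card R * #{a : R | ∀ x, ψ (a * x) = 1}) := by
    calc _ ≤ (#{y : R | 2 * y = 0} * #{a : R | ∀ x ∈ D, ψ (a * x) = 1}) * #{x | x ∈ D} := by gcongr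
      _ = #{y : R | 2 * y = 0} * (#{x | x ∈ D} * #{a : R | ∀ x ∈ D, ψ (a * x) = 1}) := by ring
      _ ≤ _ := by gcongr
  exact_mod_cast h6

end
end CircleProblem
end

/-! ### Arithmetic of ideals -/

section
open Finset NumberField UniqueFactorizationMonoid
open scoped nonZeroDivisors Classical
namespace CircleProblem

variable {K : Type*} [Field K] [NumberField K]

theorem finite_dvd {n : Ideal (𝓞 K)} (hn : n ≠ 0) : {d : Ideal (𝓞 K) | d ∣ n}.Finite := by
  refine (Ideal.finite_setOfPred_absNorm_le (S := 𝓞 K) (Ideal.absNorm n)).subset fun d hd => ?_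
  have h0 : Ideal.absNorm n ≠ 0 := by
    rw [Ne, Ideal.absNorm_eq_zero_iff]; exact hn
  exact Nat.le_of_dvd (Nat.pos_of_ne_zero h0) (map_dvd Ideal.absNorm hd)

/-- The finite set of divisors of a nonzero ideal (empty for the zero ideal). -/
noncomputable def divs (n : Ideal (𝓞 K)) : Finset (Ideal (𝓞 K)) :=
  if h : n ≠ 0 then (finite_dvd h).toFinset else ∅

theorem mem_divs {n d : Ideal (𝓞 K)} (hn : n ≠ 0) : d ∈ divs n ↔ d ∣ n := by
  rw [divs, dif_pos hn, Set.Finite.mem_toFinset]; rfl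

theorem absNorm_pos_of_ne_zero {n : Ideal (𝓞 K)} (hn : n ≠ 0) : 0 < Ideal.absNorm n :=
  Nat.pos_of_ne_zero fun h => hn (Ideal.absNorm_eq_zero_iff.mp h)

/-- The factors of a product of distinct primes are these primes. -/
theorem factors_prod_primes {s : Finset (Ideal (𝓞 K))} (hs : ∀ p ∈ s, Prime p) :
    factors (∏ p ∈ s, p) = s.val := by
  rw [factors_eq_normalizedFactors]
  have := normalizedFactors_prod_of_prime (m := s.val) (fun p hp => hs p hp)
  rw [← this, Finset.prod_val]
  rfl

theorem prod_factors_eq {d : Ideal (𝓞 K)} (hd : d ≠ 0) : (factors d).prod = d :=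
  associated_iff_eq.mp (factors_prod hd)

theorem nodup_factors {d : Ideal (𝓞 K)} (hd : d ≠ 0) (hsq : Squarefree d) : (factors d).Nodup := by
  rw [factors_eq_normalizedFactors]
  exact (squarefree_iff_nodup_normalizedFactors hd).mp hsq

theorem prime_of_mem_factors {n p : Ideal (𝓞 K)} (hp : p ∈ factors n) : Prime p := prime_of_factor p hp

/-- `∑_{d ∣ n} μ(d) = [n = 1]`: the squarefree divisors of `n` are indexed by the sets of prime
divisors of `n`. -/
theorem sum_muI {n : Ideal (𝓞 K)} (hn : n ≠ 0) :
    ∑ d ∈ divs n, muI d = if n = 1 then 1 else 0 := by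
  have hne : ∀ d ∈ divs n, d ≠ 0 := fun d hd h0 => hn (by
    rw [mem_divs hn, h0, zero_dvd_iff] at hd; exact hd)
  have h1 : ∑ d ∈ divs n, muI d =
      ∑ s ∈ (factors n).toFinset.powerset, (-1 : ℤ) ^ s.card := by
    rw [← Finset.sum_filter_add_sum_filter_not (divs n) Squarefree]
    rw [Finset.sum_congr rfl (g := fun _ => (0 : ℤ)) (s₁ := (divs n).filter (¬ Squarefree ·))
      (fun d hd => by rw [muI, if_neg (Finset.mem_filter.mp hd).2])]
    rw [Finset.sum_const_zero, add_zero]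
    refine Finset.sum_bij' (fun d _ => (factors d).toFinset) (fun s _ => ∏ p ∈ s, p) ?_ ?_ ?_ ?_ ?_
    · intro d hd
      obtain ⟨hd, _⟩ := Finset.mem_filter.mp hd
      have hd0 := hne d hd
      rw [mem_divs hn] at hd
      rw [Finset.mem_powerset]
      refine Multiset.toFinset_subset.mpr (Multiset.subset_of_le ?_)
      simp only [factors_eq_normalizedFactors]
      exact (dvd_iff_normalizedFactors_le_normalizedFactors hd0 hn).mp hd
    · intro s hs
      have hs' : ∀ p ∈ s, p ∈ factors n := fun p hp =>
        Multiset.mem_toFinset.mp (Finset.mem_powerset.mp hs hp)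
      have hp : ∀ p ∈ s, Prime p := fun p hp => prime_of_mem_factors (hs' p hp)
      have h0 : ∏ p ∈ s, p ≠ 0 := Finset.prod_ne_zero_iff.mpr fun p hp' => (hp p hp').ne_zero
      have hfac := factors_prod_primes hp
      rw [Finset.mem_filter, mem_divs hn]
      constructor
      · rw [dvd_iff_normalizedFactors_le_normalizedFactors h0 hn, ← factors_eq_normalizedFactors,
          hfac, Multiset.le_iff_subset s.nodup]
        exact fun p hp => by rw [← factors_eq_normalizedFactors]; exact hs' p hp
      · rw [squarefree_iff_nodup_normalizedFactors h0, ← factors_eq_normalizedFactors, hfac]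
        exact s.nodup
    · intro d hd
      obtain ⟨hd, hsq⟩ := Finset.mem_filter.mp hd
      have hd0 := hne d hd
      have hnd := nodup_factors hd0 hsq
      change (Multiset.map (fun p => p) (factors d).toFinset.val).prod = d
      rw [Multiset.map_id', Multiset.toFinset_val, hnd.dedup]
      exact prod_factors_eq hd0
    · intro s hs
      have hp : ∀ p ∈ s, Prime p := fun p hp =>
        prime_of_mem_factors (Multiset.mem_toFinset.mp (Finset.mem_powerset.mp hs hp))
      change (factors (∏ p ∈ s, p)).toFinset = s
      rw [factors_prod_primes hp]
      exact Finset.val_toFinset s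
    · intro d hd
      obtain ⟨hd, hsq⟩ := Finset.mem_filter.mp hd
      rw [muI, if_pos hsq, omegaI]
  rw [h1, Finset.sum_powerset_neg_one_pow_card]
  congr 1
  rw [eq_iff_iff, Multiset.toFinset_eq_empty]
  constructor
  · intro h
    rw [← prod_factors_eq hn, h, Multiset.prod_zero]
  · rintro rfl
    exact factors_one

theorem abs_muI_le (d : Ideal (𝓞 K)) : |(muI d : ℝ)| ≤ 1 := by
  rw [muI]
  split_ifs <;> simp

theorem card_divs_mul_le (m n : Ideal (𝓞 K)) : #(divs (m * n)) ≤ #(divs m) * #(divs n) := by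
  by_cases hm : m = 0
  · simp [divs, hm]
  by_cases hn : n = 0
  · simp [divs, hn]
  rw [← Finset.card_product]
  refine (Finset.card_le_card (t := ((divs m) ×ˢ (divs n)).image fun p => p.1 * p.2) ?_).trans
    Finset.card_image_le
  intro d hd
  rw [mem_divs (mul_ne_zero hm hn)] at hd
  obtain ⟨a, b, ha, hb, rfl⟩ := exists_dvd_and_dvd_of_dvd_mul hd
  exact Finset.mem_image.mpr ⟨(a, b), Finset.mem_product.mpr
    ⟨(mem_divs hm).mpr ha, (mem_divs hn).mpr hb⟩, rfl⟩

theorem card_divs_prime_pow_le {p : Ideal (𝓞 K)} (hp : Prime p) (k : ℕ) :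
    #(divs (p ^ k)) ≤ k + 1 := by
  refine (Finset.card_le_card (t := (Finset.range (k + 1)).image fun i => p ^ i) ?_).trans
    (Finset.card_image_le.trans (by simp))
  intro d hd
  rw [mem_divs (pow_ne_zero _ hp.ne_zero), dvd_prime_pow hp] at hd
  obtain ⟨i, hi, h⟩ := hd
  exact Finset.mem_image.mpr ⟨i, Finset.mem_range.mpr (by omega), (associated_iff_eq.mp h).symm⟩

theorem two_le_absNorm_of_prime {p : Ideal (𝓞 K)} (hp : Prime p) : 2 ≤ Ideal.absNorm p := by
  have h0 := absNorm_pos_of_ne_zero hp.ne_zero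
  have h1 : Ideal.absNorm p ≠ 1 := fun h => hp.not_isUnit
    (Ideal.isUnit_iff.mpr (Ideal.absNorm_eq_one_iff.mp h))
  omega

/-- The divisor bound `τ(n) ≪_ε N(n)^ε`. -/
theorem exists_card_divs_le (K : Type*) [Field K] [NumberField K] {ε : ℝ} (hε : 0 < ε) :
    ∃ C : ℝ, 0 < C ∧ ∀ n : Ideal (𝓞 K), n ≠ 0 → (#(divs n) : ℝ) ≤ C * (Ideal.absNorm n : ℝ) ^ ε := by
  set B : ℝ := 2 ^ (1 / ε) with hB
  set C₀ : ℝ := max 1 (1 / (ε * Real.log 2)) with hC₀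
  have hC₀1 : 1 ≤ C₀ := le_max_left _ _
  have hlog : 0 < Real.log 2 := Real.log_pos (by norm_num)
  -- only the finitely many primes of norm at most `B` need a constant
  set S : Finset (Ideal (𝓞 K)) :=
    (Ideal.finite_setOfPred_absNorm_le (S := 𝓞 K) ⌊B⌋₊).toFinset.filter Prime with hS
  have key : ∀ n : Ideal (𝓞 K), (#(divs n) : ℝ) ≤
      C₀ ^ #{p ∈ S | p ∣ n} * (Ideal.absNorm n : ℝ) ^ ε := by
    intro n
    induction n using induction_on_coprime with
    | h0 => simp [divs]; positivity
    | h1 h =>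
      rename_i x
      obtain rfl := isUnit_iff_eq_one.mp h
      have h1 : #(divs (1 : Ideal (𝓞 K))) ≤ 1 := by
        rw [Finset.card_le_one]
        intro a ha b hb
        rw [mem_divs one_ne_zero] at ha hb
        rw [isUnit_iff_eq_one.mp (isUnit_of_dvd_one ha), isUnit_iff_eq_one.mp (isUnit_of_dvd_one hb)]
      have h2 : (1 : ℝ) ≤ C₀ ^ #{p ∈ S | p ∣ (1 : Ideal (𝓞 K))} := one_le_pow₀ hC₀1
      simp only [map_one, Nat.cast_one, Real.one_rpow, mul_one]
      exact le_trans (by exact_mod_cast h1) h2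
    | hpr k hp =>
      rename_i p
      have hN2 : (2 : ℝ) ≤ Ideal.absNorm p := by exact_mod_cast two_le_absNorm_of_prime hp
      have hcard : (#(divs (p ^ k)) : ℝ) ≤ k + 1 := by exact_mod_cast card_divs_prime_pow_le hp k
      refine hcard.trans ?_
      have hNk : (Ideal.absNorm (p ^ k) : ℝ) ^ ε = ((Ideal.absNorm p : ℝ) ^ ε) ^ k := by
        rw [map_pow, Nat.cast_pow, ← Real.rpow_natCast, ← Real.rpow_natCast, ← Real.rpow_mul,
          ← Real.rpow_mul, mul_comm] <;> positivity
      rw [hNk]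
      rcases Nat.eq_zero_or_pos k with rfl | hk
      · simp only [pow_zero, mul_one, Nat.cast_zero, zero_add]
        exact one_le_pow₀ hC₀1
      by_cases hpB : (Ideal.absNorm p : ℝ) ≤ B
      · have hpS : p ∈ S := by
          rw [hS, Finset.mem_filter, Set.Finite.mem_toFinset]
          exact ⟨Nat.le_floor hpB, hp⟩
        have h1 : C₀ ≤ C₀ ^ #{p' ∈ S | p' ∣ p ^ k} := by
          refine le_self_pow₀ hC₀1 ?_
          exact (Finset.card_pos.mpr ⟨p, Finset.mem_filter.mpr ⟨hpS, dvd_pow_self p hk.ne'⟩⟩).ne'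
        have h2 : 1 + k * (ε * Real.log 2) ≤ ((Ideal.absNorm p : ℝ) ^ ε) ^ k := by
          calc 1 + k * (ε * Real.log 2) ≤ Real.exp (k * (ε * Real.log 2)) := by
                rw [add_comm]; exact Real.add_one_le_exp _
            _ = ((2 : ℝ) ^ ε) ^ k := by
                rw [Real.exp_nat_mul, Real.rpow_def_of_pos (by norm_num)]
                congr 2; ring
            _ ≤ _ := by gcongr
        have h3 : (k : ℝ) + 1 ≤ C₀ * (1 + k * (ε * Real.log 2)) := by
          have h4 : (k : ℝ) ≤ C₀ * (k * (ε * Real.log 2)) := by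
            have : 1 ≤ C₀ * (ε * Real.log 2) := by
              rw [← div_le_iff₀ (by positivity)]; exact le_max_right _ _
            nlinarith [(Nat.cast_nonneg k : (0 : ℝ) ≤ k)]
          linarith
        refine h3.trans ?_
        have h5 : 0 ≤ 1 + k * (ε * Real.log 2) := by positivity
        gcongr
      · push Not at hpB
        have h1 : 2 ≤ (Ideal.absNorm p : ℝ) ^ ε := by
          have : (2 : ℝ) = B ^ ε := by
            rw [hB, ← Real.rpow_mul (by norm_num), one_div_mul_cancel hε.ne', Real.rpow_one]
          rw [this]
          gcongr
        have h2 : (k : ℝ) + 1 ≤ 2 ^ k := by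
          exact_mod_cast Nat.lt_two_pow_self (n := k)
        have h3 : (1 : ℝ) ≤ C₀ ^ #{p' ∈ S | p' ∣ p ^ k} := one_le_pow₀ hC₀1
        calc (k : ℝ) + 1 ≤ 1 * ((Ideal.absNorm p : ℝ) ^ ε) ^ k := by
              rw [one_mul]; refine h2.trans ?_; gcongr
          _ ≤ _ := by gcongr
    | hcp hxy hx hy =>
      rename_i x y
      have h1 : (#(divs (x * y)) : ℝ) ≤ #(divs x) * #(divs y) := by
        exact_mod_cast card_divs_mul_le x y
      have h2 : #{p ∈ S | p ∣ x} + #{p ∈ S | p ∣ y} ≤ #{p ∈ S | p ∣ x * y} := by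
        rw [← Finset.card_union_of_disjoint]
        · refine Finset.card_le_card fun p hp => ?_
          simp only [Finset.mem_union, Finset.mem_filter] at hp ⊢
          rcases hp with h | h
          · exact ⟨h.1, h.2.mul_right y⟩
          · exact ⟨h.1, h.2.mul_left x⟩
        · rw [Finset.disjoint_left]
          intro p hp hp'
          simp only [Finset.mem_filter, hS] at hp hp'
          exact hp.1.2.not_isUnit (hxy hp.2 hp'.2)
      calc (#(divs (x * y)) : ℝ) ≤ #(divs x) * #(divs y) := h1
        _ ≤ (C₀ ^ #{p ∈ S | p ∣ x} * (Ideal.absNorm x : ℝ) ^ ε) *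
            (C₀ ^ #{p ∈ S | p ∣ y} * (Ideal.absNorm y : ℝ) ^ ε) := by gcongr
        _ = C₀ ^ (#{p ∈ S | p ∣ x} + #{p ∈ S | p ∣ y}) * (Ideal.absNorm (x * y) : ℝ) ^ ε := by
            rw [map_mul, Nat.cast_mul, Real.mul_rpow (by positivity) (by positivity), pow_add]
            ring
        _ ≤ _ := by gcongr
  refine ⟨C₀ ^ #S, by positivity, fun n hn => (key n).trans ?_⟩
  gcongr
  exact Finset.filter_subset _ _
end CircleProblem
end

/-! ### Squares and quadratic Gauss sums modulo an ideal -/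

section
open Finset NumberField
open scoped nonZeroDivisors Classical
namespace CircleProblem

variable {K : Type*} [Field K] [NumberField K]

theorem natCard_quot (q : Ideal (𝓞 K)) : Nat.card (𝓞 K ⧸ q) = Ideal.absNorm q := by
  rw [Ideal.absNorm_apply, Submodule.cardQuot_apply]

/-- Doubling on `𝓞 K ⧸ q` has kernel and cokernel of the same size, and the cokernel is a quotient
of `𝓞 K ⧸ 2`, which has four elements. -/
theorem card_two_torsion_le (hdeg : Module.finrank ℚ K = 2) {q : Ideal (𝓞 K)}
    [Fintype (𝓞 K ⧸ q)] : #{y : 𝓞 K ⧸ q | 2 * y = 0} ≤ 4 := by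
  set f : (𝓞 K ⧸ q) →+ (𝓞 K ⧸ q) := AddMonoidHom.mulLeft 2 with hf
  have h1 : #{y : 𝓞 K ⧸ q | 2 * y = 0} = Nat.card f.ker := by
    rw [Nat.card_eq_fintype_card, Fintype.card_of_subtype]
    intro x
    simp [hf, AddMonoidHom.mem_ker]
  have h2 := AddSubgroup.card_mul_index f.ker
  have h3 := AddSubgroup.card_mul_index f.range
  have h4 := AddSubgroup.index_ker f
  have h5 : Nat.card f.ker = f.range.index := by
    have : 0 < Nat.card f.range := Nat.card_pos
    rw [h4, ← h3, mul_comm] at h2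
    exact Nat.eq_of_mul_eq_mul_left this h2
  have h6 : f.range.index ≤ Nat.card (𝓞 K ⧸ Ideal.span {(2 : 𝓞 K)}) := by
    have h2ne : Ideal.span {(2 : 𝓞 K)} ≠ ⊥ := by
      rw [Ne, Ideal.span_singleton_eq_bot]; exact two_ne_zero
    have : Finite (𝓞 K ⧸ Ideal.span {(2 : 𝓞 K)}) := Ideal.finiteQuotientOfFreeOfNeBot _ h2ne
    let g : 𝓞 K →+ (𝓞 K ⧸ q) ⧸ f.range :=
      (QuotientAddGroup.mk' f.range).comp (Ideal.Quotient.mk q).toAddMonoidHom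
    have hg : ∀ x ∈ (Ideal.span {(2 : 𝓞 K)}).toAddSubgroup, g x = 0 := by
      intro x hx
      obtain ⟨y, rfl⟩ := Ideal.mem_span_singleton'.mp hx
      refine (QuotientAddGroup.eq_zero_iff _).mpr ⟨Ideal.Quotient.mk q y, ?_⟩
      change 2 * Ideal.Quotient.mk q y = Ideal.Quotient.mk q (y * 2)
      rw [map_mul, mul_comm]; rfl
    let g' := QuotientAddGroup.lift (Ideal.span {(2 : 𝓞 K)}).toAddSubgroup g hg
    have hsurj : Function.Surjective g' := by
      intro y
      obtain ⟨y, rfl⟩ := QuotientAddGroup.mk_surjective y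
      obtain ⟨y, rfl⟩ := Ideal.Quotient.mk_surjective y
      exact ⟨QuotientAddGroup.mk y, rfl⟩
    exact Nat.card_le_card_of_surjective (α := 𝓞 K ⧸ Ideal.span {(2 : 𝓞 K)}) g' hsurj
  have h7 : Nat.card (𝓞 K ⧸ Ideal.span {(2 : 𝓞 K)}) = 4 := by
    rw [natCard_quot, Ideal.absNorm_span_singleton]
    have : (Algebra.norm ℤ) (2 : 𝓞 K) = 2 ^ 2 := by
      have h := Algebra.norm_algebraMap (R := ℤ) (S := 𝓞 K) 2
      rw [RingOfIntegers.rank, hdeg] at h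
      simpa using h
    rw [this]; rfl
  omega

theorem two_mul_sub_eq_zero {R : Type*} [CommRing R] {u u₀ : R} (hu : u ^ 2 = 1) (hu₀ : u₀ ^ 2 = 1)
    (hspan : Ideal.span {u - 1} = Ideal.span {u₀ - 1}) : 2 * (u - u₀) = 0 := by
  have h1 : u - 1 ∈ Ideal.span {u₀ - 1} := by
    rw [← hspan]; exact Ideal.mem_span_singleton_self _
  have h2 : u₀ - 1 ∈ Ideal.span {u - 1} := by
    rw [hspan]; exact Ideal.mem_span_singleton_self _
  obtain ⟨v, hv⟩ := Ideal.mem_span_singleton'.mp h1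
  obtain ⟨w, hw⟩ := Ideal.mem_span_singleton'.mp h2
  have e1 : (u - 1) * (u₀ + 1) = 0 := by
    rw [← hv]; linear_combination v * hu₀
  have e2 : (u₀ - 1) * (u + 1) = 0 := by
    rw [← hw]; linear_combination w * hu
  linear_combination e1 - e2

/-- Square roots in `𝓞 K ⧸ q`: two solutions of `u ^ 2 = 1` for which `u - 1` generates the same
ideal differ by an element killed by `2`. -/
theorem card_sqrt_one_le (hdeg : Module.finrank ℚ K = 2) {q : Ideal (𝓞 K)} (hq : q ≠ 0)
    [Fintype (𝓞 K ⧸ q)] : #{u : 𝓞 K ⧸ q | u ^ 2 = 1} ≤ 4 * #(divs q) := by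
  refine Finset.card_le_mul_card_image_of_maps_to
    (f := fun u => (Ideal.span {u - 1}).comap (Ideal.Quotient.mk q)) ?_ _ ?_
  · intro u _
    rw [mem_divs hq, Ideal.dvd_iff_le]
    intro x hx
    rw [Ideal.mem_comap, Ideal.Quotient.eq_zero_iff_mem.mpr hx]
    exact Ideal.zero_mem _
  · intro J _
    rcases Finset.eq_empty_or_nonempty
      ({u ∈ ({u : 𝓞 K ⧸ q | u ^ 2 = 1} : Finset _) |
        (Ideal.span {u - 1}).comap (Ideal.Quotient.mk q) = J}) with h | ⟨u₀, hu₀⟩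
    · rw [h]; simp
    · refine le_trans ?_ (card_two_torsion_le hdeg (q := q))
      refine Finset.card_le_card_of_injOn (fun u => u - u₀) ?_ ?_
      · intro u hu
        simp only [coe_filter, mem_filter, mem_univ, true_and, Set.mem_ofPred_eq] at hu hu₀ ⊢
        have hspan : Ideal.span {u - 1} = Ideal.span {u₀ - 1} :=
          Ideal.comap_injective_of_surjective _ Ideal.Quotient.mk_surjective (hu.2.trans hu₀.2.symm)
        exact two_mul_sub_eq_zero hu.1 hu₀.1 hspan
      · intro a _ b _ h
        exact sub_left_injective h

/-- Each residue is represented boundedly often, up to a divisor function, as `α ρ²` with `ρ` a unit: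
the quotient of two solutions is a square root of `1`. -/
theorem card_unit_sq_eq_le (hdeg : Module.finrank ℚ K = 2) {q : Ideal (𝓞 K)} (hq : q ≠ 0)
    [Fintype (𝓞 K ⧸ q)] (α v : 𝓞 K ⧸ q) (hα : IsUnit α) :
    #{ρ : (𝓞 K ⧸ q)ˣ | v = α * (ρ : 𝓞 K ⧸ q) ^ 2} ≤ 4 * #(divs q) := by
  rcases Finset.eq_empty_or_nonempty ({ρ : (𝓞 K ⧸ q)ˣ | v = α * (ρ : 𝓞 K ⧸ q) ^ 2} : Finset _)
    with h | ⟨ρ₀, hρ₀⟩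
  · rw [h]; simp
  · refine le_trans ?_ (card_sqrt_one_le hdeg hq)
    refine Finset.card_le_card_of_injOn (fun ρ => ((ρ * ρ₀⁻¹ : (𝓞 K ⧸ q)ˣ) : 𝓞 K ⧸ q)) ?_ ?_
    · intro ρ hρ
      simp only [coe_filter, mem_filter, mem_univ, true_and, Set.mem_ofPred_eq] at hρ hρ₀ ⊢
      have h1 : ((ρ ^ 2 : (𝓞 K ⧸ q)ˣ) : 𝓞 K ⧸ q) = ((ρ₀ ^ 2 : (𝓞 K ⧸ q)ˣ) : 𝓞 K ⧸ q) := by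
        push_cast
        exact hα.mul_left_cancel (hρ.symm.trans hρ₀)
      have h2 := Units.ext h1
      rw [← Units.val_pow_eq_pow_val, mul_pow, h2, inv_pow, mul_inv_cancel, Units.val_one]
    · intro a _ b _ h
      exact mul_right_cancel (Units.ext h)

omit [NumberField K] in
theorem isUnit_mk_iff {q : Ideal (𝓞 K)} {x : 𝓞 K} :
    IsUnit (Ideal.Quotient.mk q x) ↔ Ideal.span {x} ⊔ q = ⊤ := by
  rw [← Ideal.isCoprime_iff_sup_eq, isUnit_iff_exists_inv]
  constructor
  · rintro ⟨b, hb⟩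
    obtain ⟨y, rfl⟩ := Ideal.Quotient.mk_surjective b
    rw [← map_mul, ← map_one (Ideal.Quotient.mk q), Ideal.Quotient.eq] at hb
    rw [Ideal.isCoprime_iff_exists]
    refine ⟨x * y, Ideal.mem_span_singleton.mpr ⟨y, rfl⟩, 1 - x * y, ?_, by ring⟩
    rw [← neg_sub]; exact q.neg_mem hb
  · intro h
    obtain ⟨i, hi, j, hj, hij⟩ := Ideal.isCoprime_iff_exists.mp h
    obtain ⟨y, rfl⟩ := Ideal.mem_span_singleton.mp hi
    refine ⟨Ideal.Quotient.mk q y, ?_⟩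
    rw [← map_mul, ← map_one (Ideal.Quotient.mk q), Ideal.Quotient.eq, ← hij]
    rw [sub_add_cancel_left]; exact q.neg_mem hj

/-- Möbius detection of units of `𝓞 K ⧸ q`. -/
theorem sum_muI_mem {q : Ideal (𝓞 K)} (hq : q ≠ 0) (x : 𝓞 K) :
    ∑ d ∈ divs q, (if Ideal.Quotient.mk q x ∈ d.map (Ideal.Quotient.mk q) then muI d else 0) =
      if IsUnit (Ideal.Quotient.mk q x) then 1 else 0 := by
  have hn : Ideal.span {x} ⊔ q ≠ 0 := fun h => hq (le_bot_iff.mp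
    ((le_sup_right : q ≤ Ideal.span {x} ⊔ q).trans (le_of_eq h)))
  rw [← Finset.sum_filter]
  have h1 : (divs q).filter (fun d => Ideal.Quotient.mk q x ∈ d.map (Ideal.Quotient.mk q)) =
      divs (Ideal.span {x} ⊔ q) := by
    ext d
    rw [Finset.mem_filter, mem_divs hq, mem_divs hn, Ideal.dvd_iff_le, Ideal.dvd_iff_le, sup_le_iff,
      Ideal.span_singleton_le_iff_mem, and_comm]
    refine and_congr_left fun hd => ?_
    rw [← Ideal.mem_comap, Ideal.comap_map_of_surjective _ Ideal.Quotient.mk_surjective,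
      ← RingHom.ker_eq_comap_bot, Ideal.mk_ker, sup_eq_left.mpr hd]
  rw [h1, sum_muI hn]
  simp only [isUnit_mk_iff, Ideal.one_eq_top]

/-- The quadratic Gauss sum over the units of `𝓞 K ⧸ q`: units are detected by the Möbius function,
and each sum over an ideal of the quotient ring is bounded by Weyl differencing. The cardinality on
the right measures how far `ψ` is from being primitive. -/
theorem norm_gauss_le (hdeg : Module.finrank ℚ K = 2) {q : Ideal (𝓞 K)} (hq : q ≠ 0)
    [Fintype (𝓞 K ⧸ q)] (ψ : AddChar (𝓞 K ⧸ q) ℂ) :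
    ‖∑ ρ : (𝓞 K ⧸ q)ˣ, ψ ((ρ : 𝓞 K ⧸ q) ^ 2)‖ ≤
      2 * #(divs q) * √(Ideal.absNorm q * #{a : 𝓞 K ⧸ q | ∀ x, ψ (a * x) = 1}) := by
  have h1 : ∑ ρ : (𝓞 K ⧸ q)ˣ, ψ ((ρ : 𝓞 K ⧸ q) ^ 2) =
      ∑ x : 𝓞 K ⧸ q, if IsUnit x then ψ (x ^ 2) else 0 := by
    rw [← Finset.sum_filter]
    refine Finset.sum_bij (fun ρ _ => (ρ : 𝓞 K ⧸ q)) ?_ ?_ ?_ ?_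
    · intro ρ _; simp
    · intro a _ b _ h; exact Units.ext h
    · intro x hx
      obtain ⟨u, rfl⟩ := (Finset.mem_filter.mp hx).2
      exact ⟨u, Finset.mem_univ _, rfl⟩
    · intro _ _; rfl
  have h2 : ∑ ρ : (𝓞 K ⧸ q)ˣ, ψ ((ρ : 𝓞 K ⧸ q) ^ 2) =
      ∑ d ∈ divs q, (muI d : ℂ) * ∑ x with x ∈ d.map (Ideal.Quotient.mk q), ψ (x ^ 2) := by
    rw [h1]
    simp only [Finset.mul_sum, Finset.sum_filter]
    rw [Finset.sum_comm]
    refine Finset.sum_congr rfl fun x _ => ?_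
    obtain ⟨x, rfl⟩ := Ideal.Quotient.mk_surjective x
    have := congrArg (fun n : ℤ => (n : ℂ) * ψ (Ideal.Quotient.mk q x ^ 2)) (sum_muI_mem hq x)
    simp only [Int.cast_sum, Finset.sum_mul, Int.cast_ite, Int.cast_one, Int.cast_zero, ite_mul,
      one_mul, zero_mul] at this
    rw [← this]
    refine Finset.sum_congr rfl fun d _ => ?_
    split_ifs <;> simp
  have hW : ∀ d ∈ divs q, ‖∑ x with x ∈ d.map (Ideal.Quotient.mk q), ψ (x ^ 2)‖ ≤
      2 * √(Ideal.absNorm q * #{a : 𝓞 K ⧸ q | ∀ x, ψ (a * x) = 1}) := by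
    intro d _
    refine abs_le_of_sq_le_sq' ?_ (by positivity) |>.2
    refine (norm_sum_ideal_sq_le ψ _).trans ?_
    rw [mul_pow, Real.sq_sqrt (by positivity), ← natCard_quot, Nat.card_eq_fintype_card]
    have : (#{y : 𝓞 K ⧸ q | 2 * y = 0} : ℝ) ≤ 2 ^ 2 := by
      have := card_two_torsion_le hdeg (q := q)
      norm_num; exact_mod_cast this
    gcongr
  rw [h2]
  refine (norm_sum_le _ _).trans ?_
  calc ∑ d ∈ divs q, ‖(muI d : ℂ) * ∑ x with x ∈ d.map (Ideal.Quotient.mk q), ψ (x ^ 2)‖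
      ≤ ∑ d ∈ divs q, 1 * (2 * √(Ideal.absNorm q * #{a : 𝓞 K ⧸ q | ∀ x, ψ (a * x) = 1})) := by
        refine Finset.sum_le_sum fun d hd => ?_
        rw [norm_mul]
        have : ‖(muI d : ℂ)‖ ≤ 1 := by
          have := abs_muI_le d
          rwa [Complex.norm_intCast]
        gcongr
        exact hW d hd
    _ = _ := by
        rw [Finset.sum_const, nsmul_eq_mul]; ring
end CircleProblem
end

/-! ### The circle problem in the progressions `z ≡ α ρ² mod q` -/

section
open Finset NumberField
open scoped RealInnerProductSpace nonZeroDivisors Classical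
namespace CircleProblem

variable {K : Type*} [Field K] [NumberField K]

/-- `e(⟨x, ξ⟩)` with `e(t) = exp(2πit)`. -/
noncomputable def ech (ι : K →+* ℂ) (ξ : ℂ) (x : 𝓞 K) : ℂ :=
  Complex.exp (2 * Real.pi * Complex.I * ((⟪emb ι x, ξ⟫ : ℝ) : ℂ))

omit [NumberField K] in
theorem ech_add (ι : K →+* ℂ) (ξ : ℂ) (x y : 𝓞 K) : ech ι ξ (x + y) = ech ι ξ x * ech ι ξ y := by
  rw [ech, ech, ech, ← Complex.exp_add, map_add, inner_add_left]
  push_cast; ring_nf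

omit [NumberField K] in
theorem ech_eq_one_iff (ι : K →+* ℂ) (ξ : ℂ) (x : 𝓞 K) :
    ech ι ξ x = 1 ↔ ∃ n : ℤ, ⟪emb ι x, ξ⟫ = n := by
  rw [ech, Complex.exp_eq_one_iff]
  refine exists_congr fun n => ?_
  have h : (2 * Real.pi * Complex.I : ℂ) ≠ 0 := by simp [Real.pi_ne_zero]
  rw [mul_comm (n : ℂ), mul_right_inj' h]
  exact_mod_cast Iff.rfl

omit [NumberField K] in
theorem ech_zero (ι : K →+* ℂ) (ξ : ℂ) : ech ι ξ 0 = 1 := by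
  rw [ech_eq_one_iff]; exact ⟨0, by simp⟩

omit [NumberField K] in
/-- An additive character of `𝓞 K` trivial on `q` descends to `𝓞 K ⧸ q`. -/
theorem exists_descend {q : Ideal (𝓞 K)} (f : 𝓞 K → ℂ) (h0 : f 0 = 1)
    (hadd : ∀ x y, f (x + y) = f x * f y) (hq : ∀ x ∈ q, f x = 1) :
    ∃ ψ : AddChar (𝓞 K ⧸ q) ℂ, ∀ x, ψ (Ideal.Quotient.mk q x) = f x := by
  have hcongr : ∀ x y, Ideal.Quotient.mk q x = Ideal.Quotient.mk q y → f x = f y := by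
    intro x y h
    have := hadd y (x - y)
    rwa [add_sub_cancel, hq _ (Ideal.Quotient.eq.mp h), mul_one] at this
  let s : 𝓞 K ⧸ q → 𝓞 K := Function.surjInv Ideal.Quotient.mk_surjective
  have hs : ∀ y, Ideal.Quotient.mk q (s y) = y := Function.surjInv_eq Ideal.Quotient.mk_surjective
  refine ⟨⟨fun y => f (s y), ?_, ?_⟩, fun x => ?_⟩
  · rw [← h0]; exact hcongr _ _ (by rw [hs, map_zero])
  · intro x y
    rw [← hadd]; exact hcongr _ _ (by rw [hs, map_add, hs, hs])
  · exact hcongr _ _ (hs _)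

/-- If `J` is the preimage of `D` in `𝓞 K`, then `|D| N(J) = N(q)`. -/
theorem card_ideal_quot_mul {q : Ideal (𝓞 K)} [Fintype (𝓞 K ⧸ q)] (D : Ideal (𝓞 K ⧸ q)) :
    #{x | x ∈ D} * Ideal.absNorm (D.comap (Ideal.Quotient.mk q)) = Ideal.absNorm q := by
  have hle : q ≤ D.comap (Ideal.Quotient.mk q) := by
    intro x hx
    rw [Ideal.mem_comap, Ideal.Quotient.eq_zero_iff_mem.mpr hx]
    exact D.zero_mem
  have h1 := Nat.card_congr (DoubleQuot.quotQuotEquivQuotOfLE hle).toEquiv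
  rw [Ideal.map_comap_of_surjective _ Ideal.Quotient.mk_surjective, natCard_quot] at h1
  have h2 := Submodule.card_eq_card_quotient_mul_card D
  rw [natCard_quot, h1, mul_comm] at h2
  have h3 : Nat.card D = #{x | x ∈ D} := by
    rw [Nat.card_eq_fintype_card, Fintype.card_of_subtype]
    intro x
    simp
  rw [h2, h3, mul_comm]

section
variable (ι : K →+* ℂ) (hdeg : Module.finrank ℚ K = 2)
  (himag : ∀ v : NumberField.InfinitePlace K, v.IsComplex)
include hdeg himag

/-- Lattice points counted over all the progressions `x ≡ α ρ² mod q`: the nonzero frequencies of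
`a q` are charged, through the ideal of definition of the character that they induce on
`𝓞 K ⧸ q`, to the divisors of `q`. -/
theorem exists_progression_count : ∃ C : ℝ, 0 < C ∧ ∀ (a q : Ideal (𝓞 K)), a ≠ 0 → q ≠ 0 →
    a ⊔ q = ⊤ → ∀ α : 𝓞 K, Ideal.span {α} ⊔ q = ⊤ → ∀ [Fintype (𝓞 K ⧸ q)] (R δ : ℝ),
    0 < δ → δ ≤ R →
    |∑ ρ : (𝓞 K ⧸ q)ˣ, ({x : 𝓞 K | x ∈ a ∧
        Ideal.Quotient.mk q x = Ideal.Quotient.mk q α * (ρ : 𝓞 K ⧸ q) ^ 2 ∧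
        ‖emb ι x‖ ≤ R}.ncard : ℝ) -
      2 * Real.pi / √|(discr K : ℝ)| *
        (Fintype.card (𝓞 K ⧸ q)ˣ / (Ideal.absNorm a * Ideal.absNorm q)) * R ^ 2| ≤
      C * (Fintype.card (𝓞 K ⧸ q)ˣ / (Ideal.absNorm a * Ideal.absNorm q) * (R * δ) +
        2 * #(divs q) ^ 2 * √(Ideal.absNorm q) * √(R / δ)) := by
  obtain ⟨C, hC, hcount⟩ := exists_sharp_count ι hdeg himag
  refine ⟨C, hC, fun a q ha hq haq α hα _ R δ hδ hδR => ?_⟩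
  obtain ⟨e₀, he₀, f, hf, hef⟩ := Ideal.isCoprime_iff_exists.mp (Ideal.isCoprime_iff_sup_eq.mpr haq)
  obtain ⟨αβ, hαβ, f', hf', hef'⟩ :=
    Ideal.isCoprime_iff_exists.mp (Ideal.isCoprime_iff_sup_eq.mpr hα)
  obtain ⟨β, rfl⟩ := Ideal.mem_span_singleton.mp hαβ
  let r : 𝓞 K ⧸ q → 𝓞 K := Function.surjInv Ideal.Quotient.mk_surjective
  have hr : ∀ y, Ideal.Quotient.mk q (r y) = y := Function.surjInv_eq Ideal.Quotient.mk_surjective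
  have hmke : Ideal.Quotient.mk q e₀ = 1 := by
    rw [← map_one (Ideal.Quotient.mk q), Ideal.Quotient.eq, ← hef, sub_add_cancel_left]
    exact q.neg_mem hf
  have hNa := absNorm_pos_of_ne_zero ha
  have hNq := absNorm_pos_of_ne_zero hq
  have hNaR : (0 : ℝ) < Ideal.absNorm a := by exact_mod_cast hNa
  have hNqR : (0 : ℝ) < Ideal.absNorm q := by exact_mod_cast hNq
  have hset : ∀ ρ : (𝓞 K ⧸ q)ˣ, {x : 𝓞 K | x - e₀ * α * r ρ ^ 2 ∈ a * q ∧ ‖emb ι x‖ ≤ R} =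
      {x : 𝓞 K | x ∈ a ∧ Ideal.Quotient.mk q x = Ideal.Quotient.mk q α * (ρ : 𝓞 K ⧸ q) ^ 2 ∧
        ‖emb ι x‖ ≤ R} := by
    intro ρ
    ext x
    rw [Set.mem_ofPred_eq, Set.mem_ofPred_eq, Ideal.mul_eq_inf_of_coprime haq, Ideal.mem_inf, and_assoc]
    have hz : e₀ * α * r ρ ^ 2 ∈ a := by
      rw [mul_assoc]; exact a.mul_mem_right _ he₀
    refine and_congr ⟨fun h => by simpa using a.add_mem h hz, fun h => a.sub_mem h hz⟩ (and_congr_left fun _ => ?_)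
    rw [← Ideal.Quotient.eq, map_mul, map_mul, map_pow, hmke, hr, one_mul]
  set τ : ℝ := ((#(divs q) : ℕ) : ℝ) with hτ
  set g : Ideal (𝓞 K) → ℝ := fun J' =>
    2 * τ * Ideal.absNorm q * √(Ideal.absNorm a / Ideal.absNorm J') with hg
  have main := hcount (a * q) (mul_ne_zero ha hq) (𝓞 K ⧸ q)ˣ (fun ρ => e₀ * α * r ρ ^ 2)
    ((divs q).image (a * ·)) g (2 * τ ^ 2 * √(Ideal.absNorm q)) ?_ ?_ ?_ R δ hδ hδR
  · simp only [hset, map_mul, Nat.cast_mul] at main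
    exact main
  · intro J hJ
    obtain ⟨d, hd, rfl⟩ := Finset.mem_image.mp hJ
    rw [mem_divs hq] at hd
    exact ⟨mul_ne_zero ha (ne_zero_of_dvd_ne_zero hq hd), by positivity⟩
  · intro ξ _ hξ
    have hpair : ∀ x ∈ a * q, ech ι ξ x = 1 := fun x hx => (ech_eq_one_iff ι ξ x).mpr (hξ x hx)
    obtain ⟨ψ, hψ⟩ := exists_descend (q := q) (fun x => ech ι ξ (e₀ * α * x))
      (by simp only [mul_zero]; exact ech_zero ι ξ)
      (fun x y => by simp only [mul_add]; exact ech_add ι ξ _ _)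
      (fun x hx => hpair _ (Ideal.mul_mem_mul (a.mul_mem_right _ he₀) hx))
    -- `D` is the largest ideal on which `ψ` is trivial; `ξ` turns out to be dual to `a * J`
    let D : Ideal (𝓞 K ⧸ q) :=
      { carrier := {x | ∀ y, ψ (x * y) = 1}
        add_mem' := fun {x y} hx hy z => by
          rw [add_mul, AddChar.map_add_eq_mul, hx, hy, one_mul]
        zero_mem' := fun z => by rw [zero_mul, AddChar.map_zero_eq_one]
        smul_mem' := fun c x hx z => by
          rw [smul_eq_mul, mul_comm c x, mul_assoc]; exact hx _ }
    set J := D.comap (Ideal.Quotient.mk q) with hJ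
    have hcard := card_ideal_quot_mul D
    have hJd : J ∣ q := by
      rw [Ideal.dvd_iff_le]
      intro x hx
      rw [hJ, Ideal.mem_comap, Ideal.Quotient.eq_zero_iff_mem.mpr hx]
      exact D.zero_mem
    have hJ0 := ne_zero_of_dvd_ne_zero hq hJd
    have hNJ : (0 : ℝ) < Ideal.absNorm J := by exact_mod_cast absNorm_pos_of_ne_zero hJ0
    refine ⟨a * J, Finset.mem_image_of_mem _ ((mem_divs hq).mpr hJd), ?_, ?_⟩
    · intro x hx
      rw [← ech_eq_one_iff]
      refine Submodule.mul_induction_on hx ?_ ?_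
      · intro u hu j hj
        have h1 : u * j = e₀ * α * (j * (u * β)) + u * (j * e₀ * f' + f * j) := by
          have e1 : e₀ = 1 - f := by rw [← hef]; ring
          have e2 : α * β = 1 - f' := by rw [← hef']; ring
          calc u * j = u * j * (e₀ + f) := by rw [hef, mul_one]
            _ = u * j * e₀ * (α * β + f') + u * j * f := by rw [hef']; ring
            _ = _ := by ring
        rw [h1, ech_add, hpair _ (Ideal.mul_mem_mul hu
          (q.add_mem (q.mul_mem_left _ hf') (q.mul_mem_right _ hf))), mul_one]
        have h2 : ψ (Ideal.Quotient.mk q j * Ideal.Quotient.mk q (u * β)) = 1 := hj _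
        rw [← map_mul, hψ] at h2
        exact h2
      · intro x y hx hy
        rw [ech_add, hx, hy, one_mul]
    · have h1 := norm_gauss_le hdeg hq ψ
      have h2 : ∀ ρ : (𝓞 K ⧸ q)ˣ, ψ ((ρ : 𝓞 K ⧸ q) ^ 2) = Complex.exp (2 * Real.pi * Complex.I *
          ((⟪emb ι (e₀ * α * r ρ ^ 2), ξ⟫ : ℝ) : ℂ)) := by
        intro ρ
        conv_lhs => rw [← hr (ρ : 𝓞 K ⧸ q), ← map_pow, hψ]
        rfl
      rw [Finset.sum_congr rfl fun ρ _ => h2 ρ] at h1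
      refine h1.trans (le_of_eq ?_)
      have h3 : (#{a : 𝓞 K ⧸ q | ∀ x, ψ (a * x) = 1} : ℝ) = Ideal.absNorm q / Ideal.absNorm J := by
        rw [eq_div_iff hNJ.ne']
        have h4 : #{a : 𝓞 K ⧸ q | ∀ x, ψ (a * x) = 1} * Ideal.absNorm J = Ideal.absNorm q := by
          rw [← hcard]
          congr 2
          ext x
          simp only [mem_filter, mem_univ, true_and]
          rfl
        exact_mod_cast h4
      change _ = 2 * τ * Ideal.absNorm q * √(Ideal.absNorm a / Ideal.absNorm (a * J))
      rw [h3, map_mul, Nat.cast_mul, hτ, mul_assoc (2 * _) (Ideal.absNorm q : ℝ)]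
      congr 1
      rw [Real.sqrt_eq_iff_mul_self_eq (by positivity) (by positivity), mul_mul_mul_comm,
        Real.mul_self_sqrt (by positivity)]
      field_simp
  · rw [Finset.sum_image (fun x _ y _ h => mul_left_cancel₀ ha h)]
    calc ∑ J ∈ divs q, g (a * J) * Ideal.absNorm (a * J)
        ≤ ∑ J ∈ divs q, 2 * τ * Ideal.absNorm q * (Ideal.absNorm a * √(Ideal.absNorm q)) := by
          refine Finset.sum_le_sum fun J hJ => ?_
          rw [mem_divs hq] at hJ
          have hJ0 := ne_zero_of_dvd_ne_zero hq hJ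
          have hNJ : (0 : ℝ) < Ideal.absNorm J := by exact_mod_cast absNorm_pos_of_ne_zero hJ0
          have hle : (Ideal.absNorm J : ℝ) ≤ Ideal.absNorm q := by
            exact_mod_cast Nat.le_of_dvd hNq (map_dvd Ideal.absNorm hJ)
          have : √(Ideal.absNorm a / Ideal.absNorm (a * J)) * (Ideal.absNorm (a * J) : ℝ) =
              Ideal.absNorm a * √(Ideal.absNorm J) := by
            rw [map_mul, Nat.cast_mul, div_mul_cancel_left₀ hNaR.ne', Real.sqrt_inv]
            have h1 := Real.mul_self_sqrt hNJ.le
            have h2 : √(Ideal.absNorm J : ℝ) ≠ 0 := (Real.sqrt_pos.mpr hNJ).ne'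
            field_simp
            nlinarith
          change 2 * τ * Ideal.absNorm q * √(Ideal.absNorm a / Ideal.absNorm (a * J)) * _ ≤ _
          rw [mul_assoc, this]
          gcongr
      _ = _ := by
          rw [Finset.sum_const, nsmul_eq_mul, map_mul, Nat.cast_mul, ← hτ]; ring
end
end CircleProblem
end

section
open Finset NumberField
open scoped nonZeroDivisors Classical
namespace CircleProblem

variable {K : Type*} [Field K] [NumberField K]

/-- The number of pairs `(ρ, z)` with `ρ ∈ (𝓞 K ⧸ q)ˣ`, `0 ≠ z ∈ a`, `z ≡ α ρ² mod q` and
`|z|² ≤ T N(a)`. -/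
noncomputable def cnt (ι : K →+* ℂ) (a q : Ideal (𝓞 K)) [Fintype (𝓞 K ⧸ q)] (α : 𝓞 K) (T : ℝ) : ℝ :=
  ∑ ρ : (𝓞 K ⧸ q)ˣ, ({z : 𝓞 K | z ∈ a ∧ z ≠ 0 ∧
        Ideal.Quotient.mk q z = Ideal.Quotient.mk q α * (ρ : 𝓞 K ⧸ q) ^ 2 ∧
        Complex.normSq (emb ι z) ≤ T * Ideal.absNorm a}.ncard : ℝ)

omit [NumberField K] in
theorem norm_le_sqrt_iff (ι : K →+* ℂ) (z : 𝓞 K) {X : ℝ} (hX : 0 ≤ X) :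
    ‖emb ι z‖ ≤ √X ↔ Complex.normSq (emb ι z) ≤ X := by
  rw [Real.le_sqrt (norm_nonneg _), Complex.normSq_eq_norm_sq]
  exact hX

theorem card_units_le (q : Ideal (𝓞 K)) [Fintype (𝓞 K ⧸ q)] :
    Fintype.card (𝓞 K ⧸ q)ˣ ≤ Ideal.absNorm q := by
  rw [← natCard_quot, Nat.card_eq_fintype_card]
  exact Fintype.card_le_of_injective (fun u => (u : 𝓞 K ⧸ q)) Units.val_injective

section
variable (ι : K →+* ℂ) (hdeg : Module.finrank ℚ K = 2)
  (himag : ∀ v : NumberField.InfinitePlace K, v.IsComplex)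
include hdeg himag

theorem finite_normSq_le (X : ℝ) : {x : 𝓞 K | Complex.normSq (emb ι x) ≤ X}.Finite := by
  refine (finite_emb_le ι hdeg himag (√X)).subset fun x hx => ?_
  rw [Set.mem_ofPred_eq] at hx ⊢
  refine Real.le_sqrt_of_sq_le ?_
  rwa [← Complex.normSq_eq_norm_sq]

/-- The trivial bound, useful when `T` is small compared with the modulus. -/
theorem cnt_le_trivial {a q : Ideal (𝓞 K)} (ha : a ≠ 0) (hq : q ≠ 0) [Fintype (𝓞 K ⧸ q)] {α : 𝓞 K}
    (hα : Ideal.span {α} ⊔ q = ⊤) {T : ℝ} (hT : 1 ≤ T) :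
    cnt ι a q α T ≤ 36 * T * #(divs q) := by
  set Z : Finset (𝓞 K) := ((finite_normSq_le ι hdeg himag (T * Ideal.absNorm a)).toFinset).filter
    (· ∈ a) with hZ
  have hNa : (0 : ℝ) < Ideal.absNorm a := by exact_mod_cast absNorm_pos_of_ne_zero ha
  have h1 : cnt ι a q α T ≤ ∑ ρ : (𝓞 K ⧸ q)ˣ, ∑ z ∈ Z,
      if Ideal.Quotient.mk q z = Ideal.Quotient.mk q α * (ρ : 𝓞 K ⧸ q) ^ 2 then (1 : ℝ) else 0 := by
    refine Finset.sum_le_sum fun ρ _ => ?_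
    rw [← Finset.sum_filter, Finset.sum_const, nsmul_eq_mul, mul_one, ← Set.ncard_coe_finset]
    refine Nat.cast_le.mpr (Set.ncard_le_ncard ?_ (Finset.finite_toSet _))
    rintro z ⟨h1, -, h2, h3⟩
    simp only [hZ, Finset.coe_filter, Finset.mem_filter, Set.Finite.mem_toFinset, Set.mem_ofPred_eq]
    exact ⟨⟨h3, h1⟩, h2⟩
  have h2 : (#Z : ℝ) ≤ 9 * T := by
    refine (card_emb_le ι hdeg himag ha (X := √(T * Ideal.absNorm a)) (Real.sqrt_nonneg _) Z
      ?_ ?_).trans ?_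
    · intro x hx y hy
      exact a.sub_mem (Finset.mem_filter.mp hx).2 (Finset.mem_filter.mp hy).2
    · intro x hx
      have := (Finset.mem_filter.mp hx).1
      rw [Set.Finite.mem_toFinset, Set.mem_ofPred_eq, Complex.normSq_eq_norm_sq] at this
      exact Real.le_sqrt_of_sq_le this
    · rw [Real.sqrt_mul (by linarith), ← mul_assoc, mul_div_cancel_right₀ _ (Real.sqrt_pos.mpr hNa).ne']
      have e1 : 1 ≤ √T := Real.one_le_sqrt.mpr hT
      have e2 := Real.sq_sqrt (by linarith : 0 ≤ T)
      nlinarith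
  rw [Finset.sum_comm] at h1
  calc cnt ι a q α T ≤ _ := h1
    _ ≤ ∑ z ∈ Z, ((4 * #(divs q) : ℕ) : ℝ) := by
        refine Finset.sum_le_sum fun z _ => ?_
        rw [← Finset.sum_filter, Finset.sum_const, nsmul_eq_mul, mul_one, Nat.cast_le]
        exact card_unit_sq_eq_le hdeg hq _ _ (isUnit_mk_iff.mpr hα)
    _ = #Z * (4 * #(divs q)) := by
        rw [Finset.sum_const, nsmul_eq_mul]; push_cast; ring
    _ ≤ 9 * T * (4 * #(divs q)) := by gcongr
    _ = _ := by ring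

/-- Discarding `z = 0` changes the count by at most one. -/
theorem cnt_approx {a q : Ideal (𝓞 K)} [Fintype (𝓞 K ⧸ q)] {α : 𝓞 K}
    (hα : Ideal.span {α} ⊔ q = ⊤) {T : ℝ} (hT : 0 ≤ T) :
    cnt ι a q α T ≤ ∑ ρ : (𝓞 K ⧸ q)ˣ, ({x : 𝓞 K | x ∈ a ∧
        Ideal.Quotient.mk q x = Ideal.Quotient.mk q α * (ρ : 𝓞 K ⧸ q) ^ 2 ∧
        ‖emb ι x‖ ≤ √(T * Ideal.absNorm a)}.ncard : ℝ) ∧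
    ∑ ρ : (𝓞 K ⧸ q)ˣ, ({x : 𝓞 K | x ∈ a ∧
        Ideal.Quotient.mk q x = Ideal.Quotient.mk q α * (ρ : 𝓞 K ⧸ q) ^ 2 ∧
        ‖emb ι x‖ ≤ √(T * Ideal.absNorm a)}.ncard : ℝ) ≤ cnt ι a q α T + 1 := by
  have hfin := finite_emb_le ι hdeg himag (√(T * Ideal.absNorm a))
  constructor
  · refine Finset.sum_le_sum fun ρ _ => Nat.cast_le.mpr (Set.ncard_le_ncard ?_ (hfin.subset ?_))
    · rintro z ⟨h1, -, h2, h3⟩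
      refine ⟨h1, h2, Real.le_sqrt_of_sq_le ?_⟩
      rwa [← Complex.normSq_eq_norm_sq]
    · rintro z ⟨-, -, h⟩; exact h
  · have h1 : ∑ ρ : (𝓞 K ⧸ q)ˣ,
        (if (0 : 𝓞 K ⧸ q) = Ideal.Quotient.mk q α * (ρ : 𝓞 K ⧸ q) ^ 2 then (1 : ℝ) else 0) ≤ 1 := by
      rw [← Finset.sum_filter, Finset.sum_const, nsmul_eq_mul, mul_one]
      have : #{ρ : (𝓞 K ⧸ q)ˣ | (0 : 𝓞 K ⧸ q) = Ideal.Quotient.mk q α * (ρ : 𝓞 K ⧸ q) ^ 2} ≤ 1 := by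
        rw [Finset.card_le_one]
        intro ρ hρ ρ' _
        have h := (Finset.mem_filter.mp hρ).2
        have hu : IsUnit (0 : 𝓞 K ⧸ q) := by
          rw [h]; exact (isUnit_mk_iff.mpr hα).mul (ρ.isUnit.pow 2)
        have := subsingleton_of_zero_eq_one (isUnit_zero_iff.mp hu)
        exact Units.ext (Subsingleton.elim _ _)
      exact_mod_cast this
    refine le_trans ?_ (add_le_add_right h1 (cnt ι a q α T))
    rw [cnt, ← Finset.sum_add_distrib]
    refine Finset.sum_le_sum fun ρ _ => ?_
    have hfin' : {z : 𝓞 K | z ∈ a ∧ z ≠ 0 ∧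
        Ideal.Quotient.mk q z = Ideal.Quotient.mk q α * (ρ : 𝓞 K ⧸ q) ^ 2 ∧
        Complex.normSq (emb ι z) ≤ T * Ideal.absNorm a}.Finite :=
      (finite_normSq_le ι hdeg himag _).subset fun z hz => hz.2.2.2
    by_cases h0 : (0 : 𝓞 K ⧸ q) = Ideal.Quotient.mk q α * (ρ : 𝓞 K ⧸ q) ^ 2
    · rw [if_pos h0]
      have : {x : 𝓞 K | x ∈ a ∧
          Ideal.Quotient.mk q x = Ideal.Quotient.mk q α * (ρ : 𝓞 K ⧸ q) ^ 2 ∧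
          ‖emb ι x‖ ≤ √(T * Ideal.absNorm a)}.ncard ≤ _ :=
        (Set.ncard_le_ncard ?_ (hfin'.insert 0)).trans (Set.ncard_insert_le 0 _)
      · exact_mod_cast this
      · rintro z ⟨h1, h2, h3⟩
        by_cases hz : z = 0
        · exact Or.inl hz
        · refine Or.inr ⟨h1, hz, h2, (norm_le_sqrt_iff ι z (by positivity)).mp h3⟩
    · rw [if_neg h0, add_zero]
      refine Nat.cast_le.mpr (Set.ncard_le_ncard ?_ hfin')
      rintro z ⟨h1, h2, h3⟩
      have hz : z ≠ 0 := by
        rintro rfl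
        exact h0 (by rw [← h2, map_zero])
      exact ⟨h1, hz, h2, (norm_le_sqrt_iff ι z (by positivity)).mp h3⟩

/-- The circle problem for the points `z ∈ a`, `z ≡ α ρ² mod q`. -/
theorem exists_circle {ε : ℝ} (hε : 0 < ε) : ∃ C : ℝ, 0 < C ∧ ∀ (a q : Ideal (𝓞 K)), a ≠ 0 → q ≠ 0 →
    a ⊔ q = ⊤ → ∀ α : 𝓞 K, Ideal.span {α} ⊔ q = ⊤ → ∀ [Fintype (𝓞 K ⧸ q)] (T : ℝ), 1 ≤ T →
    |cnt ι a q α T - 2 * Real.pi / √|(discr K : ℝ)| *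
      (Fintype.card (𝓞 K ⧸ q)ˣ / Ideal.absNorm q) * T| ≤
      C * (T ^ (1 / 3 : ℝ) * (Ideal.absNorm q : ℝ) ^ (1 / 3 + ε : ℝ)) := by
  obtain ⟨C₁, hC₁, hcount⟩ := exists_progression_count ι hdeg himag
  obtain ⟨C₂, hC₂, hdivs⟩ := exists_card_divs_le K (half_pos hε)
  have hΔ := discr_abs_pos K
  set M : ℝ := 2 * Real.pi / √|(discr K : ℝ)| with hM
  have hM0 : 0 < M := by have := Real.pi_pos; positivity
  refine ⟨C₁ * (1 + 2 * C₂ ^ 2) + 1 + 36 * C₂ + M, by positivity, ?_⟩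
  intro a q ha hq haq α hα _ T hT
  have hNa : (0 : ℝ) < Ideal.absNorm a := by exact_mod_cast absNorm_pos_of_ne_zero ha
  have hNq1 : (1 : ℝ) ≤ Ideal.absNorm q := by exact_mod_cast absNorm_pos_of_ne_zero hq
  have hφ : (Fintype.card (𝓞 K ⧸ q)ˣ : ℝ) ≤ Ideal.absNorm q := by exact_mod_cast card_units_le q
  have hτ := hdivs q hq
  set τ : ℝ := ((#(divs q) : ℕ) : ℝ) with hτd
  set N : ℝ := (Ideal.absNorm q : ℝ) with hN
  set φ : ℝ := (Fintype.card (𝓞 K ⧸ q)ˣ : ℝ) with hφd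
  have hN0 : 0 < N := by linarith
  have hT0 : 0 < T := by linarith
  have hφ0 : 0 ≤ φ := Nat.cast_nonneg _
  have hτ0 : 0 ≤ τ := Nat.cast_nonneg _
  have hφN : φ / N ≤ 1 := by rw [div_le_one hN0]; exact hφ
  set t : ℝ := T ^ (1 / 3 : ℝ) with ht
  set n : ℝ := N ^ (1 / 3 : ℝ) with hn
  have ht1 : 1 ≤ t := Real.one_le_rpow hT (by norm_num)
  have hn1 : 1 ≤ n := Real.one_le_rpow hNq1 (by norm_num)
  have hNε : N ^ (1 / 3 + ε : ℝ) = n * (N ^ (ε / 2)) ^ 2 := by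
    rw [Real.rpow_add hN0, ← Real.rpow_natCast, ← Real.rpow_mul hN0.le,
      show ε / 2 * ((2 : ℕ) : ℝ) = ε by push_cast; ring]
  have he1 : 1 ≤ N ^ (ε / 2) := Real.one_le_rpow hNq1 (by positivity)
  set e : ℝ := N ^ (ε / 2) with he
  rw [hNε]
  have hT3 : t ^ 3 = T := by
    rw [ht, ← Real.rpow_natCast, ← Real.rpow_mul hT0.le]; norm_num
  have hN3 : n ^ 3 = N := by
    rw [hn, ← Real.rpow_natCast, ← Real.rpow_mul hN0.le]; norm_num
  have hee : e ≤ e ^ 2 := by nlinarith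
  have hτe : τ ^ 2 ≤ C₂ ^ 2 * e ^ 2 := by
    rw [← mul_pow]; gcongr
  have htn1 : 1 ≤ t * (n * e ^ 2) := by
    have : 1 ≤ n * e ^ 2 := by nlinarith
    nlinarith
  have htn : t * n ≤ t * (n * e ^ 2) := by
    have : 1 ≤ e ^ 2 := by nlinarith
    have : n ≤ n * e ^ 2 := by nlinarith
    gcongr
  clear_value t n e M
  rcases le_or_gt n (t ^ 2) with hle | hlt
  · -- the smoothing length that balances the two error terms
    set R := √(T * Ideal.absNorm a) with hR
    have hRsq : R ^ 2 = T * Ideal.absNorm a := Real.sq_sqrt (by positivity)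
    have hR0 : 0 < R := Real.sqrt_pos.mpr (by positivity)
    set κ : ℝ := n / t ^ 2 with hκ
    have hκ0 : 0 < κ := by positivity
    have hκ1 : κ ≤ 1 := by rw [hκ, div_le_one (by positivity)]; exact hle
    have h1 := hcount a q ha hq haq α hα R (κ * R) (mul_pos hκ0 hR0)
      (mul_le_of_le_one_left hR0.le hκ1)
    obtain ⟨h2, h3⟩ := cnt_approx ι hdeg himag (a := a) (q := q) hα hT0.le
    rw [← hφd, ← hτd, ← hN] at h1
    rw [← hR] at h2 h3
    have e1 : φ / (Ideal.absNorm a * N) * R ^ 2 = φ / N * T := by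
      rw [hRsq]; field_simp
    have e2 : φ / (Ideal.absNorm a * N) * (R * (κ * R)) ≤ t * n := by
      calc φ / (Ideal.absNorm a * N) * (R * (κ * R)) = φ / (Ideal.absNorm a * N) * R ^ 2 * κ := by ring
        _ = φ / N * (T * κ) := by rw [e1]; ring
        _ = φ / N * (t * n) := by rw [hκ, ← hT3]; field_simp
        _ ≤ 1 * (t * n) := by gcongr
        _ = _ := one_mul _
    have e3 : √N * √(R / (κ * R)) = t * n := by
      rw [← Real.sqrt_mul hN0.le, Real.sqrt_eq_iff_mul_self_eq (by positivity) (by positivity), hκ,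
        ← hN3]
      field_simp
    have e4 : φ / (Ideal.absNorm a * N) * (R * (κ * R)) + 2 * τ ^ 2 * √N * √(R / (κ * R)) ≤
        (1 + 2 * C₂ ^ 2) * (t * (n * e ^ 2)) := by
      have : 2 * τ ^ 2 * √N * √(R / (κ * R)) ≤ 2 * C₂ ^ 2 * (t * (n * e ^ 2)) := by
        rw [mul_assoc, e3]
        calc 2 * τ ^ 2 * (t * n) ≤ 2 * (C₂ ^ 2 * e ^ 2) * (t * n) := by gcongr
          _ = _ := by ring
      linarith
    have h4 := h1.trans (mul_le_mul_of_nonneg_left e4 hC₁.le)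
    rw [mul_assoc M, e1, ← mul_assoc, abs_le] at h4
    have h5 : 0 ≤ 36 * C₂ + M := by positivity
    have h6 : 0 ≤ (36 * C₂ + M) * (t * (n * e ^ 2)) := by positivity
    have h7 : (C₁ * (1 + 2 * C₂ ^ 2) + 1 + 36 * C₂ + M) * (t * (n * e ^ 2)) =
        C₁ * ((1 + 2 * C₂ ^ 2) * (t * (n * e ^ 2))) + t * (n * e ^ 2) +
          (36 * C₂ + M) * (t * (n * e ^ 2)) := by ring
    rw [h7, abs_le]
    constructor <;> linarith [h4.1, h4.2]
  · -- when `T ^ 2 < N(q)` the error term exceeds the trivial bound, so there is nothing to balance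
    have hTt : T ≤ t * n := by
      calc T = t * t ^ 2 := by rw [← hT3]; ring
        _ ≤ t * n := mul_le_mul_of_nonneg_left hlt.le (by linarith)
    have h1 := cnt_le_trivial ι hdeg himag ha hq hα hT
    have h2 : 0 ≤ cnt ι a q α T := Finset.sum_nonneg fun _ _ => Nat.cast_nonneg _
    rw [← hτd] at h1
    have h3 : cnt ι a q α T ≤ 36 * C₂ * (t * (n * e ^ 2)) := by
      calc _ ≤ 36 * T * τ := h1
        _ ≤ 36 * (t * n) * (C₂ * e) := by gcongr
        _ = 36 * C₂ * (t * (n * e)) := by ring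
        _ ≤ _ := by gcongr
    have h4 : M * (φ / N) * T ≤ M * (t * (n * e ^ 2)) := by
      calc M * (φ / N) * T ≤ M * 1 * (t * n) := by gcongr
        _ ≤ _ := by rw [mul_one]; gcongr
    have h5 : 0 ≤ M * (φ / N) * T := by positivity
    have h6 : 0 ≤ (C₁ * (1 + 2 * C₂ ^ 2) + 1) * (t * (n * e ^ 2)) := by positivity
    have h7 : 0 ≤ 36 * C₂ * (t * (n * e ^ 2)) := by positivity
    have h8 : 0 ≤ M * (t * (n * e ^ 2)) := by positivity
    have h9 : (C₁ * (1 + 2 * C₂ ^ 2) + 1 + 36 * C₂ + M) * (t * (n * e ^ 2)) =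
        (C₁ * (1 + 2 * C₂ ^ 2) + 1) * (t * (n * e ^ 2)) + 36 * C₂ * (t * (n * e ^ 2)) +
          M * (t * (n * e ^ 2)) := by ring
    rw [h9, abs_le]
    constructor <;> linarith
end
end CircleProblem
end

/-! ### Dyadic summation -/

section
open Finset NumberField
open scoped nonZeroDivisors Classical
namespace CircleProblem

theorem summable_shift_rpow_mul_geometric {C r : ℝ} (hr0 : 0 < r) (hr1 : r < 1) :
    Summable fun k : ℕ => ((k : ℝ) + 2) ^ C * r ^ k := by
  obtain ⟨m, hm⟩ := exists_nat_ge C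
  have h1 := (summable_pow_mul_geometric_of_norm_lt_one m
    (show ‖r‖ < 1 by rwa [Real.norm_of_nonneg hr0.le]))
  have h2 := ((summable_nat_add_iff 2).mpr h1).mul_right (r ^ 2)⁻¹
  refine Summable.of_nonneg_of_le (fun k => by positivity) (fun k => ?_) h2
  have : (((k + 2 : ℕ) : ℝ) ^ m * r ^ (k + 2)) * (r ^ 2)⁻¹ = ((k : ℝ) + 2) ^ (m : ℝ) * r ^ k := by
    rw [Real.rpow_natCast]; push_cast; field_simp; ring
  rw [this]
  have : (1 : ℝ) ≤ (k : ℝ) + 2 := by linarith [Nat.cast_nonneg (α := ℝ) k]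
  gcongr

/-- Dyadic summation: a bound for the weighted sums of `f b * N b` over `N b ≤ x` controls the
tails of `∑ f b * N b ^ (1 - s)` for `s > 1`. -/
theorem exists_dyadic {C : ℝ} (hC : 0 ≤ C) {s : ℝ} (hs : 1 < s) : ∃ B : ℝ, 0 < B ∧
    ∀ {β : Type*} (N f : β → ℝ) (c : ℝ), 0 < c → (∀ b, 0 ≤ f b) →
    (∀ (x : ℝ) (S : Finset β), 0 < x → (∀ b ∈ S, N b ≤ x) →
      ∑ b ∈ S, f b * N b ≤ c * x * Real.log (x + 2) ^ C) →
    ∀ (t : ℝ) (S : Finset β), 0 < t → (∀ b ∈ S, t ≤ N b) →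
      ∑ b ∈ S, f b * N b * N b ^ (-s) ≤ B * c * t ^ (1 - s) * Real.log (t + 2) ^ C := by
  set r : ℝ := 2 ^ (1 - s) with hr
  have hr0 : 0 < r := by positivity
  have hr1 : r < 1 := Real.rpow_lt_one_of_one_lt_of_neg (by norm_num) (by linarith)
  have hsum := summable_shift_rpow_mul_geometric (C := C) hr0 hr1
  have hpos : 0 < ∑' k : ℕ, ((k : ℝ) + 2) ^ C * r ^ k :=
    hsum.tsum_pos (fun k => by positivity) 0 (by positivity)
  refine ⟨2 * ∑' k : ℕ, ((k : ℝ) + 2) ^ C * r ^ k, by positivity, ?_⟩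
  intro β N f c hc hf hyp t S ht hS
  have hk : ∀ b, ∃ k : ℕ, b ∈ S → 2 ^ k * t ≤ N b ∧ N b ≤ 2 ^ (k + 1) * t := by
    intro b
    by_cases hb : b ∈ S
    · obtain ⟨k, h1, h2⟩ := exists_nat_pow_near (x := N b / t) (y := 2)
        (by rw [le_div_iff₀ ht, one_mul]; exact hS b hb) (by norm_num)
      exact ⟨k, fun _ => ⟨(le_div_iff₀ ht).mp h1, ((div_lt_iff₀ ht).mp h2).le⟩⟩
    · exact ⟨0, fun h => absurd h hb⟩
  choose k hk using hk
  have hlog : 0 < Real.log (t + 2) := Real.log_pos (by linarith)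
  rw [← Finset.sum_fiberwise_of_maps_to (g := k) (t := S.image k)
    (fun b hb => Finset.mem_image_of_mem _ hb)]
  have hterm : ∀ j ∈ S.image k, ∑ b ∈ S with k b = j, f b * N b * N b ^ (-s) ≤
      2 * c * t ^ (1 - s) * Real.log (t + 2) ^ C * (((j : ℝ) + 2) ^ C * r ^ j) := by
    intro j _
    have hx : 0 < 2 ^ j * t := by positivity
    have h1 : ∑ b ∈ S with k b = j, f b * N b ≤
        c * (2 ^ (j + 1) * t) * Real.log (2 ^ (j + 1) * t + 2) ^ C := by
      refine hyp _ _ (by positivity) fun b hb => ?_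
      obtain ⟨hbS, rfl⟩ := Finset.mem_filter.mp hb
      exact (hk b hbS).2
    have h2 : Real.log (2 ^ (j + 1) * t + 2) ≤ ((j : ℝ) + 2) * Real.log (t + 2) := by
      have hl2 : Real.log 2 ≤ Real.log (t + 2) := Real.log_le_log (by norm_num) (by linarith)
      have : (2 : ℝ) ^ (j + 1) * t + 2 ≤ 2 ^ (j + 1) * (t + 2) := by
        have : (1 : ℝ) ≤ 2 ^ (j + 1) := one_le_pow₀ (by norm_num)
        linarith
      calc _ ≤ Real.log (2 ^ (j + 1) * (t + 2)) := Real.log_le_log (by positivity) this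
        _ = ((j : ℝ) + 1) * Real.log 2 + Real.log (t + 2) := by
          rw [Real.log_mul (by positivity) (by positivity), Real.log_pow]; push_cast; ring
        _ ≤ ((j : ℝ) + 1) * Real.log (t + 2) + Real.log (t + 2) := by gcongr
        _ = _ := by ring
    have h2' : 0 ≤ Real.log (2 ^ (j + 1) * t + 2) :=
      Real.log_nonneg (by linarith [show 0 < (2 : ℝ) ^ (j + 1) * t by positivity])
    calc ∑ b ∈ S with k b = j, f b * N b * N b ^ (-s)
        ≤ ∑ b ∈ S with k b = j, f b * N b * (2 ^ j * t) ^ (-s) := by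
          refine Finset.sum_le_sum fun b hb => ?_
          obtain ⟨hbS, rfl⟩ := Finset.mem_filter.mp hb
          have hN := (hk b hbS).1
          refine mul_le_mul_of_nonneg_left ?_ (mul_nonneg (hf b) (hx.le.trans hN))
          exact Real.rpow_le_rpow_of_nonpos hx hN (by linarith)
      _ = (∑ b ∈ S with k b = j, f b * N b) * (2 ^ j * t) ^ (-s) := by rw [Finset.sum_mul]
      _ ≤ (c * (2 ^ (j + 1) * t) * (((j : ℝ) + 2) * Real.log (t + 2)) ^ C) * (2 ^ j * t) ^ (-s) := by
          refine mul_le_mul_of_nonneg_right (h1.trans ?_) (by positivity)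
          gcongr
      _ = 2 * c * Real.log (t + 2) ^ C * ((j : ℝ) + 2) ^ C * ((2 ^ j * t) * (2 ^ j * t) ^ (-s)) := by
          rw [Real.mul_rpow (by positivity) hlog.le]; ring
      _ = _ := by
          have : (2 ^ j * t) * (2 ^ j * t) ^ (-s) = r ^ j * t ^ (1 - s) := by
            rw [← Real.rpow_one_add' hx.le (by linarith), Real.mul_rpow (by positivity) ht.le, hr,
              ← Real.rpow_natCast, ← Real.rpow_natCast, ← Real.rpow_mul (by norm_num),
              ← Real.rpow_mul (by norm_num), mul_comm (j : ℝ)]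
            rfl
          rw [this]; ring
  refine (Finset.sum_le_sum hterm).trans ?_
  rw [← Finset.mul_sum]
  calc _ ≤ 2 * c * t ^ (1 - s) * Real.log (t + 2) ^ C * ∑' k : ℕ, ((k : ℝ) + 2) ^ C * r ^ k := by
        refine mul_le_mul_of_nonneg_left (hsum.sum_le_tsum _ fun k _ => by positivity) (by positivity)
    _ = _ := by ring

end CircleProblem
end

/-! ### Möbius inversion over the levels -/

section
open Finset NumberField
open scoped nonZeroDivisors Classical

namespace CircleProblem

variable {K : Type*} [Field K] [NumberField K]

theorem convMu_eq_sum (ϑ : Ideal (𝓞 K) → ℝ) {n d : Ideal (𝓞 K)} (hn : n ≠ 0) (hd : d ∣ n) :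
    convMu ϑ d = ∑ e ∈ divs n, ∑ m ∈ divs n, if e * m = d then ϑ e * (muI m : ℝ) else 0 := by
  rw [← Finset.sum_product', convMu]
  refine finsum_eq_sum_of_support_subset _ fun p hp => ?_
  have h : p.1 * p.2 = d := by
    by_contra h
    exact hp (if_neg h)
  simp only [Finset.coe_product, Set.mem_prod, Finset.mem_coe, mem_divs hn]
  exact ⟨(Dvd.intro _ h).trans hd, (Dvd.intro_left _ h).trans hd⟩

/-- Möbius inversion. -/
theorem sum_convMu (ϑ : Ideal (𝓞 K) → ℝ) {n : Ideal (𝓞 K)} (hn : n ≠ 0) :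
    ∑ d ∈ divs n, convMu ϑ d = ϑ n := by
  have h1 : ∀ e ∈ divs n, ∑ m ∈ divs n, ∑ d ∈ divs n,
      (if e * m = d then ϑ e * (muI m : ℝ) else 0) = if e = n then ϑ n else 0 := by
    intro e he
    obtain ⟨e', rfl⟩ := (mem_divs hn).mp he
    have he0 : e ≠ 0 := left_ne_zero_of_mul hn
    have he'0 : e' ≠ 0 := right_ne_zero_of_mul hn
    have h2 : ∀ m ∈ divs (e * e'), ∑ d ∈ divs (e * e'),
        (if e * m = d then ϑ e * (muI m : ℝ) else 0) = if m ∣ e' then ϑ e * (muI m : ℝ) else 0 := by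
      intro m _
      rw [Finset.sum_ite_eq]
      simp only [mem_divs hn, mul_dvd_mul_iff_left he0]
    rw [Finset.sum_congr rfl h2, ← Finset.sum_filter]
    have h3 : {m ∈ divs (e * e') | m ∣ e'} = divs e' := by
      ext m
      rw [Finset.mem_filter, mem_divs hn, mem_divs he'0]
      exact ⟨fun h => h.2, fun h => ⟨h.mul_left _, h⟩⟩
    rw [h3, ← Finset.mul_sum]
    have h4 := sum_muI he'0
    have h5 : ∑ m ∈ divs e', (muI m : ℝ) = if e' = 1 then 1 else 0 := by exact_mod_cast h4
    rw [h5]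
    by_cases h6 : e' = 1
    · subst h6; simp
    · have : e ≠ e * e' := fun h => h6 (mul_left_cancel₀ he0 (by rw [← h, mul_one]))
      rw [if_neg h6, if_neg this, mul_zero]
  calc ∑ d ∈ divs n, convMu ϑ d
      = ∑ d ∈ divs n, ∑ e ∈ divs n, ∑ m ∈ divs n, (if e * m = d then ϑ e * (muI m : ℝ) else 0) :=
        Finset.sum_congr rfl fun d hd => convMu_eq_sum ϑ hn ((mem_divs hn).mp hd)
    _ = ∑ e ∈ divs n, ∑ m ∈ divs n, ∑ d ∈ divs n, (if e * m = d then ϑ e * (muI m : ℝ) else 0) := by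
        rw [Finset.sum_comm]
        exact Finset.sum_congr rfl fun e _ => Finset.sum_comm
    _ = ∑ e ∈ divs n, if e = n then ϑ n else 0 := Finset.sum_congr rfl h1
    _ = ϑ n := by
        rw [Finset.sum_ite_eq', if_pos ((mem_divs hn).mpr dvd_rfl)]

/-- The nonzero ideals coprime to `q`, over which the main term is summed. -/
abbrev CoprimeIdeal (q : Ideal (𝓞 K)) := {b : Ideal (𝓞 K) // b ≠ 0 ∧ b ⊔ q = ⊤}

theorem finite_coprime_le (q : Ideal (𝓞 K)) (t : ℝ) :
    {b : CoprimeIdeal q | (Ideal.absNorm (b : Ideal (𝓞 K)) : ℝ) ≤ t}.Finite := by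
  obtain ⟨n, hn⟩ := exists_nat_ge t
  refine Set.Finite.of_finite_image (f := Subtype.val)
    ((Ideal.finite_setOfPred_absNorm_le n).subset ?_) Subtype.val_injective.injOn
  rintro _ ⟨b, hb, rfl⟩
  exact Nat.cast_le.mp (le_trans hb hn)

variable (ι : K →+* ℂ) (hdeg : Module.finrank ℚ K = 2)
  (himag : ∀ v : NumberField.InfinitePlace K, v.IsComplex)

include hdeg himag in
/-- For `z` coprime to `q` in the range of summation, `ϑ(z a⁻¹)` is the sum of `ϑ * μ` over the
levels `b` with `z ∈ a b`; all of these are coprime to `q` and have norm at most `t`. -/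
theorem weight_eq {a q : Ideal (𝓞 K)} (ha : a ≠ 0) (ϑ : Ideal (𝓞 K) → ℝ) {t : ℝ} {z : 𝓞 K}
    (hz : z ∈ a) (h0 : z ≠ 0) (hq : Ideal.span {z} ⊔ q = ⊤)
    (hn : Complex.normSq (emb ι z) ≤ t * Ideal.absNorm a) :
    (∑ᶠ b : Ideal (𝓞 K), if b * a = Ideal.span {z} then ϑ b else 0) =
      ∑ b ∈ (finite_coprime_le q t).toFinset, if z ∈ a * b then convMu ϑ b else 0 := by
  obtain ⟨n, hnz⟩ : a ∣ Ideal.span {z} := by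
    rw [Ideal.dvd_span_singleton]; exact hz
  have hz0 : Ideal.span {z} ≠ 0 := by
    simpa [Ideal.span_singleton_eq_bot] using h0
  have hn0 : n ≠ 0 := by rintro rfl; exact hz0 (by rw [hnz, mul_zero])
  have h1 : ∀ b, (if b * a = Ideal.span {z} then ϑ b else 0) = if b = n then ϑ b else 0 := by
    intro b
    congr 1
    rw [hnz, mul_comm a n]
    exact propext (mul_left_inj' ha)
  simp only [h1]
  rw [finsum_eq_single _ n (fun b hb => if_neg hb), if_pos rfl, ← sum_convMu ϑ hn0,
    ← Finset.sum_filter]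
  symm
  have h2 : ∀ b, z ∈ a * b ↔ b ∣ n := by
    intro b
    rw [← Ideal.dvd_span_singleton, hnz, mul_dvd_mul_iff_left ha]
  refine Finset.sum_nbij (fun b => (b : Ideal (𝓞 K))) ?_ Subtype.val_injective.injOn ?_
    (fun _ _ => rfl)
  · intro b hb
    rw [mem_divs hn0, ← h2]
    exact (Finset.mem_filter.mp hb).2
  · intro b hb
    have hb : b ∣ n := (mem_divs hn0).mp hb
    have hzb : z ∈ a * b := (h2 b).mpr hb
    have hb0 : b ≠ 0 := ne_zero_of_dvd_ne_zero hn0 hb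
    have hbq : b ⊔ q = ⊤ := by
      rw [eq_top_iff, ← hq]
      refine sup_le_sup_right ?_ q
      rw [Ideal.span_singleton_le_iff_mem]
      exact (Ideal.mul_le_right : a * b ≤ b) hzb
    refine ⟨⟨b, hb0, hbq⟩, ?_, rfl⟩
    rw [Finset.mem_coe, Finset.mem_filter, Set.Finite.mem_toFinset]
    refine ⟨?_, hzb⟩
    have h3 := (le_normSq_emb ι hdeg himag hzb h0).trans hn
    rw [map_mul, Nat.cast_mul, mul_comm] at h3
    exact le_of_mul_le_mul_right h3 (Nat.cast_pos.mpr (absNorm_pos_of_ne_zero ha))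

include hdeg himag in
/-- The weighted count, sorted by the level `b`. -/
theorem lhs_eq {a q : Ideal (𝓞 K)} (ha : a ≠ 0) {α : 𝓞 K} (hα : Ideal.span {α} ⊔ q = ⊤)
    [Fintype (𝓞 K ⧸ q)] (ϑ : Ideal (𝓞 K) → ℝ) (t : ℝ) :
    (∑ᶠ ρ : (𝓞 K ⧸ q)ˣ, ∑ᶠ z : 𝓞 K,
      if z ∈ a ∧ z ≠ 0 ∧ Ideal.Quotient.mk q z = Ideal.Quotient.mk q α * (ρ : 𝓞 K ⧸ q) ^ 2 ∧
        Complex.normSq (emb ι z) ≤ t * (Ideal.absNorm a : ℝ) then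
        (∑ᶠ b : Ideal (𝓞 K), if b * a = Ideal.span {z} then ϑ b else 0) else 0) =
      ∑ b ∈ (finite_coprime_le q t).toFinset,
        convMu ϑ b * cnt ι (a * b) q α (t / Ideal.absNorm (b : Ideal (𝓞 K))) := by
  rw [finsum_eq_sum_of_fintype]
  simp only [cnt, Finset.mul_sum]
  rw [Finset.sum_comm]
  refine Finset.sum_congr rfl fun ρ _ => ?_
  set Z := (finite_normSq_le ι hdeg himag (t * (Ideal.absNorm a : ℝ))).toFinset with hZ
  have hmem : ∀ z, z ∈ Z ↔ Complex.normSq (emb ι z) ≤ t * (Ideal.absNorm a : ℝ) := by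
    intro z; rw [hZ, Set.Finite.mem_toFinset]; rfl
  have h1 : ∀ z : 𝓞 K, (if z ∈ a ∧ z ≠ 0 ∧
        Ideal.Quotient.mk q z = Ideal.Quotient.mk q α * (ρ : 𝓞 K ⧸ q) ^ 2 ∧
        Complex.normSq (emb ι z) ≤ t * (Ideal.absNorm a : ℝ) then
        (∑ᶠ b : Ideal (𝓞 K), if b * a = Ideal.span {z} then ϑ b else 0) else 0) =
      ∑ b ∈ (finite_coprime_le q t).toFinset, if z ∈ a * b ∧ z ≠ 0 ∧
        Ideal.Quotient.mk q z = Ideal.Quotient.mk q α * (ρ : 𝓞 K ⧸ q) ^ 2 ∧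
        Complex.normSq (emb ι z) ≤ t * (Ideal.absNorm a : ℝ) then convMu ϑ b else 0 := by
    intro z
    split_ifs with h
    · obtain ⟨hz, h0, hc, hn⟩ := h
      have hzq : Ideal.span {z} ⊔ q = ⊤ := by
        rw [← isUnit_mk_iff, hc]
        exact (isUnit_mk_iff.mpr hα).mul (ρ.isUnit.pow 2)
      rw [weight_eq ι hdeg himag ha ϑ hz h0 hzq hn]
      refine Finset.sum_congr rfl fun b _ => ?_
      by_cases hb : z ∈ a * b
      · rw [if_pos hb, if_pos ⟨hb, h0, hc, hn⟩]
      · rw [if_neg hb, if_neg fun h => hb h.1]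
    · refine (Finset.sum_eq_zero fun b _ => if_neg fun hb => h ⟨?_, hb.2⟩).symm
      have hle : a * (b : Ideal (𝓞 K)) ≤ a := Ideal.mul_le_left
      exact hle hb.1
  rw [finsum_congr h1, finsum_eq_sum_of_support_subset (s := Z), Finset.sum_comm]
  · refine Finset.sum_congr rfl fun b _ => ?_
    have hb0 : (Ideal.absNorm (b : Ideal (𝓞 K)) : ℝ) ≠ 0 :=
      Nat.cast_ne_zero.mpr (absNorm_pos_of_ne_zero b.2.1).ne'
    have hT : t / Ideal.absNorm (b : Ideal (𝓞 K)) * (Ideal.absNorm (a * (b : Ideal (𝓞 K))) : ℝ) =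
        t * Ideal.absNorm a := by
      rw [map_mul, Nat.cast_mul]; field_simp
    rw [← Finset.sum_filter, Finset.sum_const, nsmul_eq_mul, mul_comm]
    congr 2
    rw [← Set.ncard_coe_finset]
    congr 1
    ext z
    simp only [Finset.coe_filter, hmem, hT, Set.mem_ofPred_eq]
    tauto
  · intro z hz
    rw [Finset.mem_coe, hmem]
    by_contra h
    exact hz (Finset.sum_eq_zero fun b _ => if_neg fun hb => h hb.2.2.2)

end CircleProblem
end

/-! ### Assembling the weighted count -/

section
open Finset NumberField
open scoped nonZeroDivisors Classical
namespace CircleProblem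

variable {K : Type*} [Field K] [NumberField K]

/-- The hypothesis on `ϑ * μ`, restricted to a finite set of ideals coprime to `q`. The sum over all
ideals is a genuine finite sum, as finitely many ideals have norm at most `x`. -/
theorem hyp_finset (q : Ideal (𝓞 K)) (ϑ : Ideal (𝓞 K) → ℝ) {x Y : ℝ}
    (h : (∑ᶠ b : Ideal (𝓞 K), if b ≠ 0 ∧ (Ideal.absNorm b : ℝ) ≤ x then
            |convMu ϑ b| * (Ideal.absNorm b : ℝ) else 0) ≤ Y)
    (S : Finset (CoprimeIdeal q)) (hS : ∀ b ∈ S, (Ideal.absNorm (b : Ideal (𝓞 K)) : ℝ) ≤ x) :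
    ∑ b ∈ S, |convMu ϑ b| * (Ideal.absNorm (b : Ideal (𝓞 K)) : ℝ) ≤ Y := by
  refine le_trans ?_ h
  obtain ⟨n, hn⟩ := exists_nat_ge x
  have hfin := Ideal.finite_setOfPred_absNorm_le (S := 𝓞 K) n
  rw [finsum_eq_sum_of_support_subset (s := hfin.toFinset)]
  · calc ∑ b ∈ S, |convMu ϑ b| * (Ideal.absNorm (b : Ideal (𝓞 K)) : ℝ)
        = ∑ b ∈ S.map (Function.Embedding.subtype _),
          if b ≠ 0 ∧ (Ideal.absNorm b : ℝ) ≤ x then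
            |convMu ϑ b| * (Ideal.absNorm b : ℝ) else 0 := by
          rw [Finset.sum_map]
          refine Finset.sum_congr rfl fun b hb => ?_
          exact (if_pos (And.intro b.2.1 (hS b hb))).symm
      _ ≤ _ := by
          refine Finset.sum_le_sum_of_subset_of_nonneg ?_ fun b _ _ => ?_
          · intro b hb
            obtain ⟨b', hb', rfl⟩ := Finset.mem_map.mp hb
            rw [Set.Finite.mem_toFinset]
            exact Nat.cast_le.mp ((hS b' hb').trans hn)
          · split_ifs
            · positivity
            · exact le_rfl
  · intro b hb
    have h1 : b ≠ 0 ∧ (Ideal.absNorm b : ℝ) ≤ x := by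
      by_contra h1
      exact hb (if_neg h1)
    rw [Finset.mem_coe, Set.Finite.mem_toFinset]
    exact Nat.cast_le.mp (h1.2.trans hn)

/-- A convergent sum differs from a partial sum by at most a bound for the tails. -/
theorem summable_and_tail {β : Type*} (g : β → ℝ) (F : Finset β) {M E : ℝ}
    (h1 : ∀ S : Finset β, ∑ b ∈ S, |g b| ≤ M)
    (h2 : ∀ S : Finset β, Disjoint S F → ∑ b ∈ S, |g b| ≤ E) :
    |∑' b, g b - ∑ b ∈ F, g b| ≤ E := by
  have hs : Summable g := by
    refine Summable.of_norm ?_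
    exact summable_of_sum_le (fun b => norm_nonneg _) h1
  have ht : Filter.Tendsto (fun S : Finset β => |∑ b ∈ S, g b - ∑ b ∈ F, g b|) Filter.atTop
      (nhds |∑' b, g b - ∑ b ∈ F, g b|) := (hs.hasSum.sub_const _).abs
  refine le_of_tendsto ht ?_
  filter_upwards [Filter.eventually_ge_atTop F] with S hS
  rw [← Finset.sum_sdiff hS, add_sub_cancel_right]
  exact (Finset.abs_sum_le_sum_abs _ _).trans (h2 _ Finset.sdiff_disjoint)

variable (ι : K →+* ℂ) (hdeg : Module.finrank ℚ K = 2)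
  (himag : ∀ v : NumberField.InfinitePlace K, v.IsComplex)

include hdeg himag in
/-- The weighted count sorted by levels: the circle problem is applied at each level of norm at most
`t`, and the main term is completed to the full series. -/
theorem exists_weighted {ε : ℝ} (hε : 0 < ε) {C : ℝ} (hC : 0 ≤ C) :
    ∃ D : ℝ, 0 < D ∧ ∀ (a q : Ideal (𝓞 K)), a ≠ 0 → q ≠ 0 → ∀ α : 𝓞 K,
      a ⊔ q = ⊤ → Ideal.span {α} ⊔ q = ⊤ → ∀ [Fintype (𝓞 K ⧸ q)]
      (ϑ : Ideal (𝓞 K) → ℝ) (c : ℝ), 0 < c →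
      (∀ t : ℝ, 0 < t →
        (∑ᶠ b : Ideal (𝓞 K), if b ≠ 0 ∧ (Ideal.absNorm b : ℝ) ≤ t then
            |convMu ϑ b| * (Ideal.absNorm b : ℝ) else 0)
          ≤ c * t * Real.log (t + 2) ^ C) →
      ∀ t : ℝ, 0 ≤ t →
      |∑ b ∈ (finite_coprime_le q t).toFinset,
          convMu ϑ b * cnt ι (a * b) q α (t / Ideal.absNorm (b : Ideal (𝓞 K))) -
        2 * Real.pi / Real.sqrt |(discr K : ℝ)| *
            ((Fintype.card (𝓞 K ⧸ q)ˣ : ℝ) / (Ideal.absNorm q : ℝ)) *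
            (∑' b : CoprimeIdeal q,
              convMu ϑ (b : Ideal (𝓞 K)) / (Ideal.absNorm (b : Ideal (𝓞 K)) : ℝ)) * t|
        ≤ D * c * (t ^ ((1 : ℝ) / 3) * (Ideal.absNorm q : ℝ) ^ ((1 : ℝ) / 3 + ε) +
            Real.log (t + 2) ^ C) := by
  obtain ⟨C₁, hC₁, hcirc⟩ := exists_circle ι hdeg himag hε
  -- the exponent `4 / 3` weighs the local errors `(t / N b) ^ (1 / 3)`, the exponent `2` the tail
  obtain ⟨B₁, hB₁, hd1⟩ := exists_dyadic hC (s := 4 / 3) (by norm_num)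
  obtain ⟨B₂, hB₂, hd2⟩ := exists_dyadic hC (s := 2) (by norm_num)
  have hdpos := discr_abs_pos K
  set M : ℝ := 2 * Real.pi / √|(discr K : ℝ)| with hM
  have hM0 : 0 < M := by positivity
  have hl3 : 0 < Real.log 3 := Real.log_pos (by norm_num)
  refine ⟨C₁ * (B₁ * Real.log 3 ^ C) + M * B₂, by positivity, ?_⟩
  intro a q ha hq α haq hα _ ϑ c hc hyp t ht
  set N : CoprimeIdeal q → ℝ := fun b => (Ideal.absNorm (b : Ideal (𝓞 K)) : ℝ) with hN
  set f : CoprimeIdeal q → ℝ := fun b => |convMu ϑ b| with hf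
  have hN1 : ∀ b, 1 ≤ N b := fun b => Nat.one_le_cast.mpr (absNorm_pos_of_ne_zero b.2.1)
  have hN0 : ∀ b, 0 < N b := fun b => by linarith [hN1 b]
  have hf0 : ∀ b, 0 ≤ f b := fun b => abs_nonneg _
  have hyp' : ∀ (x : ℝ) (S : Finset (CoprimeIdeal q)), 0 < x → (∀ b ∈ S, N b ≤ x) →
      ∑ b ∈ S, f b * N b ≤ c * x * Real.log (x + 2) ^ C :=
    fun x S hx hS => hyp_finset q ϑ (hyp x hx) S hS
  have hφ : ((Fintype.card (𝓞 K ⧸ q)ˣ : ℝ) / (Ideal.absNorm q : ℝ)) ≤ 1 :=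
    div_le_one_of_le₀ (Nat.cast_le.mpr (card_units_le q)) (Nat.cast_nonneg _)
  set φ : ℝ := (Fintype.card (𝓞 K ⧸ q)ˣ : ℝ) / (Ideal.absNorm q : ℝ) with hφd
  have hφ0 : 0 ≤ φ := by positivity
  have hQ0 : 0 ≤ (Ideal.absNorm q : ℝ) ^ ((1 : ℝ) / 3 + ε) := by positivity
  set Q : ℝ := (Ideal.absNorm q : ℝ) ^ ((1 : ℝ) / 3 + ε) with hQ
  set F := (finite_coprime_le q t).toFinset with hF
  have hFm : ∀ b, b ∈ F ↔ N b ≤ t := by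
    intro b; rw [hF, Set.Finite.mem_toFinset]; rfl
  set g : CoprimeIdeal q → ℝ := fun b => convMu ϑ b / N b with hg
  have hgabs : ∀ b, |g b| = f b * N b * N b ^ (-2 : ℝ) := by
    intro b
    have := hN0 b
    rw [hg, Real.rpow_neg this.le, Real.rpow_two]
    simp only [abs_div, abs_of_pos this, hf]
    field_simp
  have htail : |∑' b, g b - ∑ b ∈ F, g b| * t ≤ B₂ * c * Real.log (t + 2) ^ C := by
    rcases ht.eq_or_lt with rfl | ht
    · rw [mul_zero]
      have : 0 ≤ Real.log (0 + 2) := Real.log_nonneg (by norm_num)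
      positivity
    · have h := summable_and_tail g F
        (M := B₂ * c * 1 ^ (1 - 2 : ℝ) * Real.log (1 + 2) ^ C)
        (E := B₂ * c * t ^ (1 - 2 : ℝ) * Real.log (t + 2) ^ C) ?_ ?_
      · calc _ ≤ B₂ * c * t ^ (1 - 2 : ℝ) * Real.log (t + 2) ^ C * t := by gcongr
          _ = _ := by
            rw [show (1 - 2 : ℝ) = -1 by norm_num, Real.rpow_neg_one]; field_simp
      · intro S
        simp only [hgabs]
        exact hd2 N f c hc hf0 hyp' 1 S one_pos fun b _ => hN1 b
      · intro S hS
        simp only [hgabs]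
        refine hd2 N f c hc hf0 hyp' t S ht fun b hb => ?_
        by_contra hlt
        exact Finset.disjoint_left.mp hS hb ((hFm b).mpr (not_le.mp hlt).le)
  have hlocal : |∑ b ∈ F, convMu ϑ b * cnt ι (a * b) q α (t / N b) - M * φ * (∑ b ∈ F, g b) * t| ≤
      C₁ * (B₁ * Real.log 3 ^ C) * c * (t ^ ((1 : ℝ) / 3) * Q) := by
    have e1 : ∑ b ∈ F, convMu ϑ b * cnt ι (a * b) q α (t / N b) - M * φ * (∑ b ∈ F, g b) * t =
        ∑ b ∈ F, convMu ϑ b * (cnt ι (a * b) q α (t / N b) - M * φ * (t / N b)) := by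
      rw [Finset.mul_sum, Finset.sum_mul, ← Finset.sum_sub_distrib]
      refine Finset.sum_congr rfl fun b _ => ?_
      simp only [hg]; ring
    have e2 : ∑ b ∈ F, f b * N b * N b ^ (-(4 / 3) : ℝ) ≤
        B₁ * c * 1 ^ (1 - 4 / 3 : ℝ) * Real.log (1 + 2) ^ C :=
      hd1 N f c hc hf0 hyp' 1 F one_pos fun b _ => hN1 b
    rw [Real.one_rpow, mul_one, show (1 + 2 : ℝ) = 3 by norm_num] at e2
    rw [e1]
    calc _ ≤ ∑ b ∈ F, |convMu ϑ b * (cnt ι (a * b) q α (t / N b) - M * φ * (t / N b))| :=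
          Finset.abs_sum_le_sum_abs _ _
      _ ≤ ∑ b ∈ F, (C₁ * (t ^ ((1 : ℝ) / 3) * Q)) * (f b * N b * N b ^ (-(4 / 3) : ℝ)) := by
          refine Finset.sum_le_sum fun b hb => ?_
          have hb0 := hN0 b
          have hab : a * (b : Ideal (𝓞 K)) ≠ 0 := mul_ne_zero ha b.2.1
          have habq : a * (b : Ideal (𝓞 K)) ⊔ q = ⊤ := by
            rw [sup_comm]
            exact Ideal.sup_mul_eq_of_coprime_left (by rw [sup_comm]; exact haq) |>.trans
              (by rw [sup_comm]; exact b.2.2)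
          have h1 := hcirc (a * b) q hab hq habq α hα (t / N b)
            (by rw [one_le_div hb0]; exact (hFm b).mp hb)
          rw [abs_mul]
          have e3 : (t / N b) ^ (1 / 3 : ℝ) = t ^ (1 / 3 : ℝ) * (N b * N b ^ (-(4 / 3) : ℝ)) := by
            rw [Real.div_rpow ht hb0.le, ← Real.rpow_one_add' hb0.le (by norm_num),
              show (1 + -(4 / 3) : ℝ) = -(1 / 3) by norm_num, Real.rpow_neg hb0.le, div_eq_mul_inv]
          rw [e3] at h1
          calc _ ≤ f b * (C₁ * (t ^ (1 / 3 : ℝ) * (N b * N b ^ (-(4 / 3) : ℝ)) * Q)) :=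
                mul_le_mul_of_nonneg_left h1 (hf0 b)
            _ = _ := by ring
      _ = C₁ * (t ^ ((1 : ℝ) / 3) * Q) * ∑ b ∈ F, f b * N b * N b ^ (-(4 / 3) : ℝ) := by
          rw [Finset.mul_sum]
      _ ≤ C₁ * (t ^ ((1 : ℝ) / 3) * Q) * (B₁ * c * Real.log 3 ^ C) := by gcongr
      _ = _ := by ring
  have hL0 : 0 ≤ Real.log (t + 2) ^ C := Real.rpow_nonneg (Real.log_nonneg (by linarith)) _
  have ht3 : 0 ≤ t ^ ((1 : ℝ) / 3) := by positivity
  set X := ∑ b ∈ F, convMu ϑ b * cnt ι (a * b) q α (t / N b) with hX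
  set G := ∑ b ∈ F, g b with hG
  set A := ∑' b, g b with hA
  have htail' : |M * φ * (G - A) * t| ≤ M * B₂ * c * Real.log (t + 2) ^ C := by
    rw [abs_mul, abs_mul, abs_of_nonneg ht, abs_of_nonneg (by positivity : 0 ≤ M * φ),
      abs_sub_comm, mul_assoc]
    calc M * φ * (|A - G| * t) ≤ M * 1 * (B₂ * c * Real.log (t + 2) ^ C) := by gcongr
      _ = _ := by ring
  have hfin : X - M * φ * A * t = (X - M * φ * G * t) + M * φ * (G - A) * t := by ring
  change |X - M * φ * A * t| ≤ _
  rw [hfin]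
  refine (abs_add_le _ _).trans ((add_le_add hlocal htail').trans ?_)
  have p1 : 0 ≤ C₁ * (B₁ * Real.log 3 ^ C) * c * Real.log (t + 2) ^ C := by positivity
  have p2 : 0 ≤ M * B₂ * c * (t ^ ((1 : ℝ) / 3) * Q) := by positivity
  linarith

theorem log_two_mul_le (t C : ℝ) (ht : 0 ≤ t) :
    Real.log 2 * Real.log (t + 2) ^ C ≤ Real.log (t + 2) ^ (C + 1) := by
  have h2 : 0 < Real.log 2 := Real.log_pos (by norm_num)
  have h := Real.log_le_log (by norm_num : (0 : ℝ) < 2) (show 2 ≤ t + 2 by linarith)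
  rw [Real.rpow_add_one (by linarith), mul_comm]
  exact mul_le_mul_of_nonneg_left h (Real.rpow_nonneg (by linarith) _)

end CircleProblem
end

/-! ### The theorem -/

/-- Lemma 3.2: weighted circle-problem count. Here `ϑ(z a⁻¹)` is
encoded as `∑_{b : b·a = (z)} ϑ(b)`, and
`A(ϑ,q) = ∑_{a' + q = O_K} (ϑ*μ)(a')/N(a')`, `φ*(q) = φ(q)/N(q)`. -/
theorem stmt_12 {K : Type*} [Field K] [NumberField K] (ι : K →+* ℂ)
    (hdeg : Module.finrank ℚ K = 2)
    (himag : ∀ v : NumberField.InfinitePlace K, v.IsComplex)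
    (ε : ℝ) (hε : 0 < ε) (C : ℝ) (hC : 0 ≤ C) :
    ∃ D : ℝ, 0 < D ∧ ∀ (a q : Ideal (𝓞 K)), a ≠ 0 → q ≠ 0 → ∀ α : 𝓞 K,
      a ⊔ q = ⊤ → Ideal.span {α} ⊔ q = ⊤ →
      ∀ (ϑ : Ideal (𝓞 K) → ℝ) (c : ℝ), 0 < c →
      (∀ t : ℝ, 0 < t →
        (∑ᶠ b : Ideal (𝓞 K), if b ≠ 0 ∧ (Ideal.absNorm b : ℝ) ≤ t then
            |convMu ϑ b| * (Ideal.absNorm b : ℝ) else 0)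
          ≤ c * t * Real.log (t + 2) ^ C) →
      ∀ t : ℝ, 0 ≤ t →
      |(∑ᶠ ρ : (𝓞 K ⧸ q)ˣ, ∑ᶠ z : 𝓞 K,
            if z ∈ a ∧ z ≠ 0 ∧
                Ideal.Quotient.mk q z = Ideal.Quotient.mk q α * (ρ : 𝓞 K ⧸ q) ^ 2 ∧
                Complex.normSq (ι (algebraMap (𝓞 K) K z)) ≤ t * (Ideal.absNorm a : ℝ) then
              (∑ᶠ b : Ideal (𝓞 K), if b * a = Ideal.span {z} then ϑ b else 0)
            else 0) -
          2 * Real.pi / Real.sqrt |(NumberField.discr K : ℝ)| *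
            ((Nat.card (𝓞 K ⧸ q)ˣ : ℝ) / (Ideal.absNorm q : ℝ)) *
            (∑' b : {b : Ideal (𝓞 K) // b ≠ 0 ∧ b ⊔ q = ⊤},
              convMu ϑ (b : Ideal (𝓞 K)) / (Ideal.absNorm (b : Ideal (𝓞 K)) : ℝ)) * t|
        ≤ D * c * (t ^ ((1 : ℝ) / 3) * (Ideal.absNorm q : ℝ) ^ ((1 : ℝ) / 3 + ε) +
            2 ^ omegaI q * (Ideal.absNorm q : ℝ) ^ ((1 : ℝ) / 2) *
              Real.log (t + 2) ^ (C + 1)) := by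
  obtain ⟨D, hD, h⟩ := CircleProblem.exists_weighted ι hdeg himag hε hC
  have hl2 : 0 < Real.log 2 := Real.log_pos (by norm_num)
  refine ⟨D * (1 + (Real.log 2)⁻¹), by positivity, ?_⟩
  intro a q ha hq α haq hα ϑ c hc hyp t ht
  have : Finite (𝓞 K ⧸ q) := Ideal.finiteQuotientOfFreeOfNeBot q hq
  have : Fintype (𝓞 K ⧸ q) := Fintype.ofFinite _
  have h1 := h a q ha hq α haq hα ϑ c hc hyp t ht
  rw [← CircleProblem.lhs_eq ι hdeg himag ha hα ϑ t] at h1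
  rw [Nat.card_eq_fintype_card]
  refine le_trans h1 ?_
  have hq1 : (1 : ℝ) ≤ (Ideal.absNorm q : ℝ) :=
    Nat.one_le_cast.mpr (CircleProblem.absNorm_pos_of_ne_zero hq)
  have hL := CircleProblem.log_two_mul_le t C ht
  have hlog : 0 ≤ Real.log (t + 2) := Real.log_nonneg (by linarith)
  have hL1 : 0 ≤ Real.log (t + 2) ^ (C + 1) := Real.rpow_nonneg hlog _
  have h2 : (1 : ℝ) ≤ 2 ^ omegaI q * (Ideal.absNorm q : ℝ) ^ ((1 : ℝ) / 2) :=
    one_le_mul_of_one_le_of_one_le (one_le_pow₀ (by norm_num))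
      (Real.one_le_rpow hq1 (by norm_num))
  set Y := (2 : ℝ) ^ omegaI q * (Ideal.absNorm q : ℝ) ^ ((1 : ℝ) / 2) * Real.log (t + 2) ^ (C + 1)
    with hY
  have h3 : Real.log (t + 2) ^ (C + 1) ≤ Y := le_mul_of_one_le_left hL1 h2
  have h4 : Real.log (t + 2) ^ C ≤ (Real.log 2)⁻¹ * Y := by
    rw [inv_mul_eq_div, le_div_iff₀ hl2, mul_comm]
    exact hL.trans h3
  set X := t ^ ((1 : ℝ) / 3) * (Ideal.absNorm q : ℝ) ^ ((1 : ℝ) / 3 + ε) with hX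
  have hX0 : 0 ≤ X := by positivity
  have hY0 : 0 ≤ Y := hL1.trans h3
  have h5 : X + Real.log (t + 2) ^ C ≤ (1 + (Real.log 2)⁻¹) * (X + Y) := by
    have : 0 ≤ (Real.log 2)⁻¹ * X := by positivity
    linarith
  calc D * c * (X + Real.log (t + 2) ^ C) ≤ D * c * ((1 + (Real.log 2)⁻¹) * (X + Y)) := by gcongr
    _ = _ := by ring
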